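/- Let H > 0 and let Ω ⊆ ℝ² be an open connected set. Let C ⊆ ∂Ω be a nonempty relatively open arc of the boundary whose exterior curvature is at least 2H, in the sense that for every P ∈ C there exist a point z_P ∈ ℝ² with |P − z_P| = 1/(2H) and an open neighborhood V_P of P such that Ω ∩ V_P ⊆ {Q : |Q − z_P| < 1/(2H)}. Let (u_n) be a sequence of solutions of (CMC) on Ω, each continuous on Ω ∪ C, and let M ∈ ℝ be such that |u_n| ≤ M on C for every n. Then no divergence line of (u_n) has an endpoint at a point of C: for every divergence line L of (u_n), the closure of L in ℝ² does not meet C. -/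

import Mathlib

/-!
Let `X = ∇u / W`, so that `|X| < 1` and `div X = 2 H`. Suppose that a divergence line `L` ends at
`P ∈ C`. After a choice of orientation, `L` contains an arc `0 < θ < θ₁` issued from `P` of a circle
of radius `R = 1 / (2 H)` (`exists_arc`), on which the radial component `X_r` of `X` tends to `1`
along a subsequence. The curvature hypothesis gives a disc of radius `R` with `P` on its boundary
which contains `Ω` near `P`; since `L` enters it, `Ω` lies near `P` in a sector of opening less than
`π`, cut in two by `L` (`Corner`). The contradiction comes from two opposite estimates of the set
where `|u|` is large, next to an interior sub-arc of `L`.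

*Upper bound* (`Corner.flux`). For each sign `ς = ±1`, consider the side `ς` of `L` (outside or
inside its circle) and the field `Y = χ β(u) (e_A + ς X)`, where `β(u)` is a smooth indicator of
`ς u > m`, with `m` greater than the bound on `C`, at scale `T`; `e_A` is the unit radial field
from a point `A` close to `P`; and `χ` is a function of `|x - A|` which cuts the corner off. The
field vanishes near `C`, so it extends by zero across the boundary of `Ω`. One has
`div Y ≥ 2 H χ β(u) - O(1 / T)` (`dvg_lower`): the term in `∇χ` is nonnegative because `|e_A| = 1`
and `|X| < 1`, the one in `β'(u)` is at least `-|β'(u)| χ`, of order `1 / T`, because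
`∇u · X ≥ W - 1`, and `div e_A = 1 / |x - A|` is at least `4 H`. The flux of `Y` through `L` is
at most the integral of `χ β(u) (1 - X_r)`, which tends to `0` along the subsequence. Hence the
integral of `χ β(u)` is at most `O(1 / T) + o(1)` on either side of `L`.

*Lower bound* (`Strip.strip_final`). In a polar rectangle around a sub-arc of `L`, the divergence
theorem shows that the deficit `y(x) = ∫ ζ (1 - X_r)` at depth `x` inside the circle is
`O(y(0) + x²)` (`Strip.y_bound`), while the proportion of large values of `|u|` on nearby circles is
controlled by the integral of `β(u)` over both sides (`Strip.mass_bound`). If both `y(0)` and that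
integral are small, then most of each circle at depth `x ≫ √y(0)` carries moderate values of `u`,
and, since `W² ≥ 1 / (2 (1 - X_r))`, an area density of order at least `1 / x`
(`Strip.area_lower`). Integrating in `x` gives a weighted area of the graph, at heights of order
`T`, which diverges logarithmically as `y(0) → 0`; but the divergence theorem for
`T arctan(u / T) X` bounds this area by a multiple of `T + 1` (`Strip.area_bound`). So `y(0)` is
bounded below, although `y(0) → 0` along a divergence line.
-/

open Real MeasureTheory Filter Set

noncomputable section

/-- Euclidean norm on `ℝ × ℝ`. -/
def enorm2 (p : ℝ × ℝ) : ℝ := Real.sqrt (p.1 ^ 2 + p.2 ^ 2)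

/-- Partial derivative in the `x` direction. -/
def pdx (u : ℝ × ℝ → ℝ) (p : ℝ × ℝ) : ℝ := fderiv ℝ u p (1, 0)

/-- Partial derivative in the `y` direction. -/
def pdy (u : ℝ × ℝ → ℝ) (p : ℝ × ℝ) : ℝ := fderiv ℝ u p (0, 1)

/-- The area element `W_u = √(1 + |∇u|²)`. -/
def Wgraph (u : ℝ × ℝ → ℝ) (p : ℝ × ℝ) : ℝ :=
  Real.sqrt (1 + (pdx u p) ^ 2 + (pdy u p) ^ 2)

/-- Upward unit normal of the graph of `u`. -/
def normalVec (u : ℝ × ℝ → ℝ) (p : ℝ × ℝ) : ℝ × ℝ × ℝ :=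
  (-pdx u p / Wgraph u p, -pdy u p / Wgraph u p, 1 / Wgraph u p)

/-- `u` is a (C²) solution of the constant mean curvature `H` equation on `Ω`. -/
def IsCMCSolution (H : ℝ) (Ω : Set (ℝ × ℝ)) (u : ℝ × ℝ → ℝ) : Prop :=
  ContDiffOn ℝ 2 u Ω ∧ ∀ p ∈ Ω,
    (1 + (pdy u p) ^ 2) * pdx (fun q => pdx u q) p
      - 2 * (pdx u p) * (pdy u p) * pdy (fun q => pdx u q) p
      + (1 + (pdx u p) ^ 2) * pdy (fun q => pdy u q) p
    = 2 * H * (1 + (pdx u p) ^ 2 + (pdy u p) ^ 2) ^ ((3 : ℝ) / 2)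

/-- `C` is a divergence line of the sequence `u` on `Ω`. -/
def IsDivergenceLine (H : ℝ) (Ω : Set (ℝ × ℝ)) (u : ℕ → ℝ × ℝ → ℝ)
    (C : Set (ℝ × ℝ)) : Prop :=
  ∃ z₁ : ℝ × ℝ, C ⊆ Ω ∧ (∀ q ∈ C, enorm2 (q - z₁) = 1 / (2 * H)) ∧
    IsConnected C ∧ C.Nontrivial ∧
    ∃ φ : ℕ → ℕ, StrictMono φ ∧ ∀ Q ∈ C,
      Tendsto (fun n => normalVec (u (φ n)) Q) atTop
        (nhds (2 * H * (z₁.1 - Q.1), 2 * H * (z₁.2 - Q.2), 0))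

/-! ### The field `X = ∇u / W` -/

/-- First component of the field `X = ∇u / W`. -/
def Xa (u : ℝ × ℝ → ℝ) (q : ℝ × ℝ) : ℝ := pdx u q / Wgraph u q

/-- Second component of the field `X = ∇u / W`. -/
def Xb (u : ℝ × ℝ → ℝ) (q : ℝ × ℝ) : ℝ := pdy u q / Wgraph u q

/-- Divergence of the planar vector field `(Y₁, Y₂)`. -/
def dvg (Y₁ Y₂ : ℝ × ℝ → ℝ) (q : ℝ × ℝ) : ℝ := fderiv ℝ Y₁ q (1, 0) + fderiv ℝ Y₂ q (0, 1)

lemma clm_apply_pair (A : ℝ × ℝ →L[ℝ] ℝ) (v : ℝ × ℝ) :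
    A v = v.1 * A (1, 0) + v.2 * A (0, 1) := by
  have h : v = v.1 • ((1 : ℝ), (0 : ℝ)) + v.2 • ((0 : ℝ), (1 : ℝ)) := by
    ext <;> simp
  conv_lhs => rw [h]
  simp only [map_add, map_smul, smul_eq_mul]

lemma Wgraph_pos (u : ℝ × ℝ → ℝ) (q : ℝ × ℝ) : 0 < Wgraph u q :=
  Real.sqrt_pos.2 (by positivity)

lemma Wgraph_sq (u : ℝ × ℝ → ℝ) (q : ℝ × ℝ) :
    Wgraph u q ^ 2 = 1 + pdx u q ^ 2 + pdy u q ^ 2 :=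
  Real.sq_sqrt (by positivity)

lemma Xa_mul (u : ℝ × ℝ → ℝ) (q : ℝ × ℝ) : Xa u q * Wgraph u q = pdx u q :=
  div_mul_cancel₀ _ (Wgraph_pos u q).ne'

lemma Xb_mul (u : ℝ × ℝ → ℝ) (q : ℝ × ℝ) : Xb u q * Wgraph u q = pdy u q :=
  div_mul_cancel₀ _ (Wgraph_pos u q).ne'

/-- `(1 - |X|²) W² = 1`; in particular `|X| < 1`. -/
lemma X_sq (u : ℝ × ℝ → ℝ) (q : ℝ × ℝ) :
    (1 - (Xa u q ^ 2 + Xb u q ^ 2)) * Wgraph u q ^ 2 = 1 := by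
  have h := Wgraph_sq u q
  rw [← Xa_mul, ← Xb_mul] at h
  linear_combination h

lemma X_lt_one (u : ℝ × ℝ → ℝ) (q : ℝ × ℝ) : Xa u q ^ 2 + Xb u q ^ 2 < 1 := by
  have h := X_sq u q
  have hW : 0 < Wgraph u q ^ 2 := pow_pos (Wgraph_pos u q) 2
  by_contra hc
  push Not at hc
  nlinarith

/-- `∇u · X = W - 1 / W ≥ W - 1`. -/
lemma grad_dot_X (u : ℝ × ℝ → ℝ) (q : ℝ × ℝ) :
    Wgraph u q - 1 ≤ pdx u q * Xa u q + pdy u q * Xb u q := by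
  have h := X_sq u q
  have hW := Wgraph_pos u q
  have hs := Wgraph_sq u q
  have h1 : 1 ≤ Wgraph u q := by
    rw [Wgraph, Real.one_le_sqrt]; nlinarith [sq_nonneg (pdx u q), sq_nonneg (pdy u q)]
  have e : pdx u q * Xa u q + pdy u q * Xb u q = (Xa u q ^ 2 + Xb u q ^ 2) * Wgraph u q := by
    conv_lhs => rw [← Xa_mul, ← Xb_mul]
    ring
  rw [e]
  have h2 : (1 - (Xa u q ^ 2 + Xb u q ^ 2)) * Wgraph u q ≤ 1 := by
    have : (1 - (Xa u q ^ 2 + Xb u q ^ 2)) * Wgraph u q * Wgraph u q ≤ 1 * Wgraph u q := by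
      nlinarith
    exact le_of_mul_le_mul_right this hW
  linarith

lemma grad_dot_X_nonneg (u : ℝ × ℝ → ℝ) (q : ℝ × ℝ) :
    0 ≤ pdx u q * Xa u q + pdy u q * Xb u q := by
  rw [← Xa_mul, ← Xb_mul]
  have hW := Wgraph_pos u q
  nlinarith [mul_nonneg hW.le (sq_nonneg (Xa u q)), mul_nonneg hW.le (sq_nonneg (Xb u q))]

section CMC

variable {H : ℝ} {Ω : Set (ℝ × ℝ)} {u : ℝ × ℝ → ℝ} {q : ℝ × ℝ}

lemma cmc_contDiffAt (hΩ : IsOpen Ω) (hu : IsCMCSolution H Ω u) (hq : q ∈ Ω) :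
    ContDiffAt ℝ 2 u q := hu.1.contDiffAt (hΩ.mem_nhds hq)

lemma cmc_pdx (hΩ : IsOpen Ω) (hu : IsCMCSolution H Ω u) (hq : q ∈ Ω) :
    ContDiffAt ℝ 1 (pdx u) q :=
  ((cmc_contDiffAt hΩ hu hq).fderiv_right (m := 1) (by norm_num)).clm_apply contDiffAt_const

lemma cmc_pdy (hΩ : IsOpen Ω) (hu : IsCMCSolution H Ω u) (hq : q ∈ Ω) :
    ContDiffAt ℝ 1 (pdy u) q :=
  ((cmc_contDiffAt hΩ hu hq).fderiv_right (m := 1) (by norm_num)).clm_apply contDiffAt_const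

lemma cmc_W (hΩ : IsOpen Ω) (hu : IsCMCSolution H Ω u) (hq : q ∈ Ω) :
    ContDiffAt ℝ 1 (Wgraph u) q := by
  have h1 := cmc_pdx hΩ hu hq
  have h2 := cmc_pdy hΩ hu hq
  refine ContDiffAt.sqrt ?_ (by positivity)
  exact (contDiffAt_const.add (h1.pow 2)).add (h2.pow 2)

lemma cmc_Xa (hΩ : IsOpen Ω) (hu : IsCMCSolution H Ω u) (hq : q ∈ Ω) :
    ContDiffAt ℝ 1 (Xa u) q :=
  (cmc_pdx hΩ hu hq).div (cmc_W hΩ hu hq) (Wgraph_pos u q).ne'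

lemma cmc_Xb (hΩ : IsOpen Ω) (hu : IsCMCSolution H Ω u) (hq : q ∈ Ω) :
    ContDiffAt ℝ 1 (Xb u) q :=
  (cmc_pdy hΩ hu hq).div (cmc_W hΩ hu hq) (Wgraph_pos u q).ne'

/-- The mixed second derivatives agree. -/
lemma cmc_symm (hΩ : IsOpen Ω) (hu : IsCMCSolution H Ω u) (hq : q ∈ Ω) :
    fderiv ℝ (pdy u) q (1, 0) = fderiv ℝ (pdx u) q (0, 1) := by
  have h2 := cmc_contDiffAt hΩ hu hq
  have hd : DifferentiableAt ℝ (fderiv ℝ u) q :=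
    (h2.fderiv_right (m := 1) (by norm_num)).differentiableAt (by norm_num)
  have hs : IsSymmSndFDerivAt ℝ u q := h2.isSymmSndFDerivAt (by simp)
  have e1 : fderiv ℝ (pdy u) q (1, 0) = fderiv ℝ (fderiv ℝ u) q (1, 0) (0, 1) := by
    have : HasFDerivAt (pdy u) _ q := hd.hasFDerivAt.clm_apply (hasFDerivAt_const ((0 : ℝ), (1 : ℝ)) q)
    rw [this.fderiv]; simp
  have e2 : fderiv ℝ (pdx u) q (0, 1) = fderiv ℝ (fderiv ℝ u) q (0, 1) (1, 0) := by
    have : HasFDerivAt (pdx u) _ q := hd.hasFDerivAt.clm_apply (hasFDerivAt_const ((1 : ℝ), (0 : ℝ)) q)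
    rw [this.fderiv]; simp
  rw [e1, e2]
  exact hs.eq _ _

/-- The constant mean curvature equation in divergence form. -/
lemma cmc_dvg (hΩ : IsOpen Ω) (hu : IsCMCSolution H Ω u) (hq : q ∈ Ω) :
    dvg (Xa u) (Xb u) q = 2 * H := by
  have hp := (cmc_pdx hΩ hu hq).differentiableAt (n := 1) (by norm_num)
  have hr := (cmc_pdy hΩ hu hq).differentiableAt (n := 1) (by norm_num)
  have hA := (cmc_Xa hΩ hu hq).differentiableAt (n := 1) (by norm_num)
  have hB := (cmc_Xb hΩ hu hq).differentiableAt (n := 1) (by norm_num)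
  have hW := (cmc_W hΩ hu hq).differentiableAt (n := 1) (by norm_num)
  -- differentiate `Xa W = u_x`, `Xb W = u_y` and `W² = 1 + u_x² + u_y²`
  have eA : ∀ v, Xa u q * fderiv ℝ (Wgraph u) q v + Wgraph u q * fderiv ℝ (Xa u) q v
      = fderiv ℝ (pdx u) q v := fun v => by
    have h : pdx u = Xa u * Wgraph u := funext fun x => (Xa_mul u x).symm
    rw [h, fderiv_mul hA hW]; simp
  have eB : ∀ v, Xb u q * fderiv ℝ (Wgraph u) q v + Wgraph u q * fderiv ℝ (Xb u) q v
      = fderiv ℝ (pdy u) q v := fun v => by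
    have h : pdy u = Xb u * Wgraph u := funext fun x => (Xb_mul u x).symm
    rw [h, fderiv_mul hB hW]; simp
  have eW : ∀ v, Wgraph u q * fderiv ℝ (Wgraph u) q v
      = pdx u q * fderiv ℝ (pdx u) q v + pdy u q * fderiv ℝ (pdy u) q v := fun v => by
    have h : Wgraph u * Wgraph u = (fun _ => (1 : ℝ)) + (pdx u * pdx u + pdy u * pdy u) :=
      funext fun x => by
        have := Wgraph_sq u x
        simp only [Pi.mul_apply, Pi.add_apply]; linarith
    have h2 : fderiv ℝ (Wgraph u * Wgraph u) q v
        = fderiv ℝ ((fun _ => (1 : ℝ)) + (pdx u * pdx u + pdy u * pdy u)) q v := by rw [h]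
    rw [fderiv_mul hW hW, fderiv_add (by fun_prop) ((hp.mul hp).add (hr.mul hr)),
      fderiv_add (hp.mul hp) (hr.mul hr), fderiv_mul hp hp, fderiv_mul hr hr] at h2
    simp at h2
    linarith
  have hWp := Wgraph_pos u q
  have hsym := cmc_symm hΩ hu hq
  have hpde := hu.2 q hq
  have hWs := Wgraph_sq u q
  have h32 : (1 + pdx u q ^ 2 + pdy u q ^ 2) ^ ((3 : ℝ) / 2) = Wgraph u q ^ 3 := by
    rw [← hWs, ← Real.rpow_natCast, ← Real.rpow_natCast, ← Real.rpow_mul hWp.le]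
    norm_num
  rw [h32] at hpde
  have e1 : pdx (fun q => pdx u q) q = fderiv ℝ (pdx u) q (1, 0) := rfl
  have e2 : pdy (fun q => pdx u q) q = fderiv ℝ (pdx u) q (0, 1) := rfl
  have e3 : pdy (fun q => pdy u q) q = fderiv ℝ (pdy u) q (0, 1) := rfl
  rw [e1, e2, e3] at hpde
  have a1 := eA (1, 0)
  have b1 := eB (0, 1)
  have w1 := eW (1, 0)
  have w2 := eW (0, 1)
  have hXa := Xa_mul u q
  have hXb := Xb_mul u q
  rw [hsym] at w1
  unfold dvg
  have h3 : Wgraph u q ^ 3 ≠ 0 := pow_ne_zero _ hWp.ne'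
  apply mul_left_cancel₀ h3
  generalize Wgraph u q = W at *
  generalize fderiv ℝ (Xa u) q (1, 0) = A at *
  generalize fderiv ℝ (Xb u) q (0, 1) = B at *
  generalize fderiv ℝ (Wgraph u) q (1, 0) = Wx at *
  generalize fderiv ℝ (Wgraph u) q (0, 1) = Wy at *
  generalize fderiv ℝ (pdx u) q (1, 0) = px at *
  generalize fderiv ℝ (pdx u) q (0, 1) = py at *
  generalize fderiv ℝ (pdy u) q (0, 1) = qy at *
  generalize Xa u q = a at *
  generalize Xb u q = b at *
  generalize pdx u q = p at *
  generalize pdy u q = r at *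
  subst hXa hXb
  linear_combination W ^ 2 * a1 + W ^ 2 * b1 - a * W * w1 - b * W * w2 + hpde + (px + qy) * hWs

/-- Divergence of `β(u) X` for a `C¹` function `β`. -/
lemma cmc_dvg_comp (hΩ : IsOpen Ω) (hu : IsCMCSolution H Ω u) (hq : q ∈ Ω)
    {β : ℝ → ℝ} (hβ : ContDiff ℝ 1 β) :
    dvg (fun x => β (u x) * Xa u x) (fun x => β (u x) * Xb u x) q
      = 2 * H * β (u q) + deriv β (u q) * (pdx u q * Xa u q + pdy u q * Xb u q) := by
  have hA := (cmc_Xa hΩ hu hq).differentiableAt (n := 1) (by norm_num)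
  have hB := (cmc_Xb hΩ hu hq).differentiableAt (n := 1) (by norm_num)
  have hU := (cmc_contDiffAt hΩ hu hq).differentiableAt (n := 2) (by norm_num)
  have hβ' : HasFDerivAt (fun x => β (u x)) (deriv β (u q) • fderiv ℝ u q) q :=
    ((hβ.differentiable (by norm_num)) (u q)).hasDerivAt.comp_hasFDerivAt q hU.hasFDerivAt
  have h := cmc_dvg hΩ hu hq
  unfold dvg at h ⊢
  have e1 : HasFDerivAt (fun x => β (u x) * Xa u x) _ q := hβ'.mul hA.hasFDerivAt
  have e2 : HasFDerivAt (fun x => β (u x) * Xb u x) _ q := hβ'.mul hB.hasFDerivAt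
  rw [e1.fderiv, e2.fderiv]
  simp only [add_apply, smul_apply, smul_eq_mul, pdx, pdy]
  linear_combination β (u q) * h

lemma cmc_comp_Xa (hΩ : IsOpen Ω) (hu : IsCMCSolution H Ω u) (hq : q ∈ Ω)
    {β : ℝ → ℝ} (hβ : ContDiff ℝ 1 β) : ContDiffAt ℝ 1 (fun x => β (u x) * Xa u x) q :=
  (hβ.contDiffAt.comp q ((cmc_contDiffAt hΩ hu hq).of_le (by norm_num))).mul (cmc_Xa hΩ hu hq)

lemma cmc_comp_Xb (hΩ : IsOpen Ω) (hu : IsCMCSolution H Ω u) (hq : q ∈ Ω)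
    {β : ℝ → ℝ} (hβ : ContDiff ℝ 1 β) : ContDiffAt ℝ 1 (fun x => β (u x) * Xb u x) q :=
  (hβ.contDiffAt.comp q ((cmc_contDiffAt hΩ hu hq).of_le (by norm_num))).mul (cmc_Xb hΩ hu hq)

end CMC

/-! ### Polar coordinates -/

/-- Polar coordinates adapted to a circle of centre `z` and radius `R`: the angle is measured from
the unit vector `(p, q)`, in the direct or the inverse sense according to `ω = ±1`. -/
structure Frame where
  z : ℝ × ℝ
  p : ℝ
  q : ℝ
  ω : ℝ
  R : ℝ
  hpq : p ^ 2 + q ^ 2 = 1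
  hω : ω ^ 2 = 1
  hR : 0 < R

namespace Frame

variable (F : Frame)

/-- First coordinate of the radial unit vector. -/
def r1 (θ : ℝ) : ℝ := F.p * cos θ - F.ω * F.q * sin θ
/-- Second coordinate of the radial unit vector. -/
def r2 (θ : ℝ) : ℝ := F.q * cos θ + F.ω * F.p * sin θ
/-- First coordinate of the angular unit vector. -/
def t1 (θ : ℝ) : ℝ := -F.p * sin θ - F.ω * F.q * cos θ
/-- Second coordinate of the angular unit vector. -/
def t2 (θ : ℝ) : ℝ := -F.q * sin θ + F.ω * F.p * cos θ

/-- The point at angle `θ` on the circle of radius `R + ς t`; for `ς = ±1`, `t` is the distance to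
the reference circle, counted positively outwards or inwards. -/
def pt (ς t θ : ℝ) : ℝ × ℝ := (F.z.1 + (F.R + ς * t) * F.r1 θ, F.z.2 + (F.R + ς * t) * F.r2 θ)

lemma r_sq (θ : ℝ) : F.r1 θ ^ 2 + F.r2 θ ^ 2 = 1 := by
  have h := F.hpq
  have h2 := F.hω
  have h3 := Real.sin_sq_add_cos_sq θ
  unfold r1 r2
  linear_combination (cos θ ^ 2 + F.ω ^ 2 * sin θ ^ 2) * h + sin θ ^ 2 * h2 + h3

lemma t_sq (θ : ℝ) : F.t1 θ ^ 2 + F.t2 θ ^ 2 = 1 := by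
  have h := F.hpq
  have h2 := F.hω
  have h3 := Real.sin_sq_add_cos_sq θ
  unfold t1 t2
  linear_combination (sin θ ^ 2 + F.ω ^ 2 * cos θ ^ 2) * h + cos θ ^ 2 * h2 + h3

lemma rt1 (θ : ℝ) : F.r1 θ ^ 2 + F.t1 θ ^ 2 = 1 := by
  have h := F.hpq
  have h2 := F.hω
  have h3 := Real.sin_sq_add_cos_sq θ
  unfold r1 t1
  linear_combination h + F.q ^ 2 * h2 + (F.p ^ 2 + F.ω ^ 2 * F.q ^ 2) * h3

lemma rt2 (θ : ℝ) : F.r2 θ ^ 2 + F.t2 θ ^ 2 = 1 := by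
  have h := F.hpq
  have h2 := F.hω
  have h3 := Real.sin_sq_add_cos_sq θ
  unfold r2 t2
  linear_combination h + F.p ^ 2 * h2 + (F.q ^ 2 + F.ω ^ 2 * F.p ^ 2) * h3

lemma rt12 (θ : ℝ) : F.r1 θ * F.r2 θ + F.t1 θ * F.t2 θ = 0 := by
  have h2 := F.hω
  have h3 := Real.sin_sq_add_cos_sq θ
  unfold r1 r2 t1 t2
  linear_combination F.p * F.q * (1 - F.ω ^ 2) * h3 - F.p * F.q * h2

lemma hasDerivAt_r1 (θ : ℝ) : HasDerivAt F.r1 (F.t1 θ) θ := by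
  have h := ((hasDerivAt_cos θ).const_mul F.p).sub ((hasDerivAt_sin θ).const_mul (F.ω * F.q))
  exact h.congr_deriv (by unfold t1; ring)

lemma hasDerivAt_r2 (θ : ℝ) : HasDerivAt F.r2 (F.t2 θ) θ := by
  have h := ((hasDerivAt_cos θ).const_mul F.q).add ((hasDerivAt_sin θ).const_mul (F.ω * F.p))
  exact h.congr_deriv (by unfold t2; ring)

lemma hasDerivAt_t1 (θ : ℝ) : HasDerivAt F.t1 (-F.r1 θ) θ := by
  have h := ((hasDerivAt_sin θ).const_mul (-F.p)).sub ((hasDerivAt_cos θ).const_mul (F.ω * F.q))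
  exact h.congr_deriv (by unfold r1; ring)

lemma hasDerivAt_t2 (θ : ℝ) : HasDerivAt F.t2 (-F.r2 θ) θ := by
  have h := ((hasDerivAt_sin θ).const_mul (-F.q)).add ((hasDerivAt_cos θ).const_mul (F.ω * F.p))
  exact h.congr_deriv (by unfold r2; ring)

lemma contDiff_r1 : ContDiff ℝ 1 F.r1 :=
  (contDiff_const.mul contDiff_cos).sub (contDiff_const.mul contDiff_sin)
lemma contDiff_r2 : ContDiff ℝ 1 F.r2 :=
  (contDiff_const.mul contDiff_cos).add (contDiff_const.mul contDiff_sin)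
lemma contDiff_t1 : ContDiff ℝ 1 F.t1 :=
  (contDiff_const.mul contDiff_sin).sub (contDiff_const.mul contDiff_cos)
lemma contDiff_t2 : ContDiff ℝ 1 F.t2 :=
  (contDiff_const.mul contDiff_sin).add (contDiff_const.mul contDiff_cos)

lemma contDiff_pt (ς : ℝ) : ContDiff ℝ 1 (fun x : ℝ × ℝ => F.pt ς x.1 x.2) := by
  have h1 := F.contDiff_r1.comp (contDiff_snd (𝕜 := ℝ) (E := ℝ) (F := ℝ) (n := 1))
  have h2 := F.contDiff_r2.comp (contDiff_snd (𝕜 := ℝ) (E := ℝ) (F := ℝ) (n := 1))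
  have h0 : ContDiff ℝ 1 (fun x : ℝ × ℝ => F.R + ς * x.1) := by fun_prop
  exact (contDiff_const.add (h0.mul h1)).prodMk (contDiff_const.add (h0.mul h2))

lemma continuous_pt (ς : ℝ) : Continuous (fun x : ℝ × ℝ => F.pt ς x.1 x.2) :=
  (F.contDiff_pt ς).continuous

lemma hasDerivAt_pt_t (ς t θ : ℝ) :
    HasDerivAt (fun s => F.pt ς s θ) (ς * F.r1 θ, ς * F.r2 θ) t := by
  have h0 : HasDerivAt (fun s => F.R + ς * s) ς t := by
    simpa using ((hasDerivAt_id t).const_mul ς).const_add F.R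
  exact ((h0.mul_const (F.r1 θ)).const_add F.z.1).prodMk ((h0.mul_const (F.r2 θ)).const_add F.z.2)

lemma hasDerivAt_pt_θ (ς t θ : ℝ) :
    HasDerivAt (fun s => F.pt ς t s) ((F.R + ς * t) * F.t1 θ, (F.R + ς * t) * F.t2 θ) θ :=
  (((F.hasDerivAt_r1 θ).const_mul _).const_add F.z.1).prodMk
    (((F.hasDerivAt_r2 θ).const_mul _).const_add F.z.2)

/-- Radial component at angle `θ` of the field `(Y₁, Y₂)`. -/
def rad (Y₁ Y₂ : ℝ × ℝ → ℝ) (ς t θ : ℝ) : ℝ :=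
  Y₁ (F.pt ς t θ) * F.r1 θ + Y₂ (F.pt ς t θ) * F.r2 θ

/-- Angular component at angle `θ` of the field `(Y₁, Y₂)`. -/
def tan (Y₁ Y₂ : ℝ × ℝ → ℝ) (ς t θ : ℝ) : ℝ :=
  Y₁ (F.pt ς t θ) * F.t1 θ + Y₂ (F.pt ς t θ) * F.t2 θ

/-- Divergence theorem in a polar rectangle for the field `κ(t) ζ(θ) Y`. -/
lemma polar_div {ς : ℝ} (hς : ς ^ 2 = 1) {Y₁ Y₂ : ℝ × ℝ → ℝ} {κ ζ : ℝ → ℝ}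
    (hκ : ContDiff ℝ 1 κ) (hζ : ContDiff ℝ 1 ζ) {a b c d : ℝ}
    (hY : ∀ t ∈ uIcc a b, ∀ θ ∈ uIcc c d,
      ContDiffAt ℝ 1 Y₁ (F.pt ς t θ) ∧ ContDiffAt ℝ 1 Y₂ (F.pt ς t θ)) :
    (∫ t in a..b, ∫ θ in c..d,
        ((F.R + ς * t) * κ t * ζ θ * dvg Y₁ Y₂ (F.pt ς t θ)
          + (F.R + ς * t) * deriv κ t * ζ θ * (ς * F.rad Y₁ Y₂ ς t θ)
          + κ t * deriv ζ θ * F.tan Y₁ Y₂ ς t θ))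
      = (((∫ t in a..b, κ t * ζ d * F.tan Y₁ Y₂ ς t d)
            - ∫ t in a..b, κ t * ζ c * F.tan Y₁ Y₂ ς t c)
          + ∫ θ in c..d, (F.R + ς * b) * κ b * ζ θ * (ς * F.rad Y₁ Y₂ ς b θ))
        - ∫ θ in c..d, (F.R + ς * a) * κ a * ζ θ * (ς * F.rad Y₁ Y₂ ς a θ) := by
  set f : ℝ × ℝ → ℝ := fun x => (F.R + ς * x.1) * κ x.1 * ζ x.2 * (ς * F.rad Y₁ Y₂ ς x.1 x.2)
    with hf
  set g : ℝ × ℝ → ℝ := fun x => κ x.1 * ζ x.2 * F.tan Y₁ Y₂ ς x.1 x.2 with hg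
  have hκ1 : ContDiff ℝ 1 (fun x : ℝ × ℝ => κ x.1) := hκ.comp contDiff_fst
  have hζ1 : ContDiff ℝ 1 (fun x : ℝ × ℝ => ζ x.2) := hζ.comp contDiff_snd
  have hr1 : ContDiff ℝ 1 (fun x : ℝ × ℝ => F.r1 x.2) := F.contDiff_r1.comp contDiff_snd
  have hr2 : ContDiff ℝ 1 (fun x : ℝ × ℝ => F.r2 x.2) := F.contDiff_r2.comp contDiff_snd
  have ht1 : ContDiff ℝ 1 (fun x : ℝ × ℝ => F.t1 x.2) := F.contDiff_t1.comp contDiff_snd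
  have ht2 : ContDiff ℝ 1 (fun x : ℝ × ℝ => F.t2 x.2) := F.contDiff_t2.comp contDiff_snd
  have h0 : ContDiff ℝ 1 (fun x : ℝ × ℝ => F.R + ς * x.1) := by fun_prop
  have hY1 : ∀ x ∈ uIcc a b ×ˢ uIcc c d,
      ContDiffAt ℝ 1 (fun x : ℝ × ℝ => Y₁ (F.pt ς x.1 x.2)) x := fun x hx =>
    ContDiffAt.comp x (hY x.1 hx.1 x.2 hx.2).1 (F.contDiff_pt ς).contDiffAt
  have hY2 : ∀ x ∈ uIcc a b ×ˢ uIcc c d,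
      ContDiffAt ℝ 1 (fun x : ℝ × ℝ => Y₂ (F.pt ς x.1 x.2)) x := fun x hx =>
    ContDiffAt.comp x (hY x.1 hx.1 x.2 hx.2).2 (F.contDiff_pt ς).contDiffAt
  have Hf : ∀ x ∈ uIcc a b ×ˢ uIcc c d, ContDiffAt ℝ 1 f x := fun x hx =>
    ((h0.mul hκ1).mul hζ1).contDiffAt.mul (contDiffAt_const.mul
      (((hY1 x hx).mul hr1.contDiffAt).add ((hY2 x hx).mul hr2.contDiffAt)))
  have Hg : ∀ x ∈ uIcc a b ×ˢ uIcc c d, ContDiffAt ℝ 1 g x := fun x hx =>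
    (hκ1.mul hζ1).contDiffAt.mul
      (((hY1 x hx).mul ht1.contDiffAt).add ((hY2 x hx).mul ht2.contDiffAt))
  have hsub : Ioo (min a b) (max a b) ×ˢ Ioo (min c d) (max c d) ⊆ uIcc a b ×ˢ uIcc c d :=
    prod_mono Ioo_subset_Icc_self Ioo_subset_Icc_self
  have key := integral2_divergence_prod_of_hasFDerivAt f g (fderiv ℝ f) (fderiv ℝ g) a c b d
    (fun x hx => (Hf x hx).continuousAt.continuousWithinAt)
    (fun x hx => (Hg x hx).continuousAt.continuousWithinAt)
    (fun x hx => ((Hf x (hsub hx)).differentiableAt (by norm_num)).hasFDerivAt)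
    (fun x hx => ((Hg x (hsub hx)).differentiableAt (by norm_num)).hasFDerivAt)
    (ContinuousOn.integrableOn_compact (isCompact_uIcc.prod isCompact_uIcc) (fun x hx =>
      ((((Hf x hx).continuousAt_fderiv (by norm_num)).clm_apply continuousAt_const).add
        (((Hg x hx).continuousAt_fderiv (by norm_num)).clm_apply
          continuousAt_const)).continuousWithinAt))
  rw [← key]
  refine intervalIntegral.integral_congr fun t ht => intervalIntegral.integral_congr fun θ hθ => ?_
  have hx : (t, θ) ∈ uIcc a b ×ˢ uIcc c d := ⟨ht, hθ⟩
  obtain ⟨hy1, hy2⟩ := hY t ht θ hθ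
  have D1 := (hy1.differentiableAt (n := 1) (by norm_num)).hasFDerivAt
  have D2 := (hy2.differentiableAt (n := 1) (by norm_num)).hasFDerivAt
  have Dκ := (hκ.differentiable (by norm_num) t).hasDerivAt
  have Dζ := (hζ.differentiable (by norm_num) θ).hasDerivAt
  have Dr : HasDerivAt (fun s => F.R + ς * s) ς t := by
    simpa using ((hasDerivAt_id t).const_mul ς).const_add F.R
  -- partial derivative of `f` in `t`
  have lf : HasDerivAt (fun s => ((s, θ) : ℝ × ℝ)) (1, 0) t :=
    (hasDerivAt_id t).prodMk (hasDerivAt_const t θ)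
  have lg : HasDerivAt (fun s => ((t, s) : ℝ × ℝ)) (0, 1) θ :=
    (hasDerivAt_const θ t).prodMk (hasDerivAt_id θ)
  have f1 : HasDerivAt (fun s => f (s, θ)) (fderiv ℝ f (t, θ) (1, 0)) t := by
    have hfd : HasFDerivAt f (fderiv ℝ f (t, θ)) ((fun s => ((s, θ) : ℝ × ℝ)) t) :=
      ((Hf _ hx).differentiableAt (n := 1) (by norm_num)).hasFDerivAt
    exact hfd.comp_hasDerivAt t lf
  have g1 : HasDerivAt (fun s => g (t, s)) (fderiv ℝ g (t, θ) (0, 1)) θ := by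
    have hgd : HasFDerivAt g (fderiv ℝ g (t, θ)) ((fun s => ((t, s) : ℝ × ℝ)) θ) :=
      ((Hg _ hx).differentiableAt (n := 1) (by norm_num)).hasFDerivAt
    exact hgd.comp_hasDerivAt θ lg
  have f2 := ((Dr.mul Dκ).mul_const (ζ θ)).mul
    ((((D1.comp_hasDerivAt t (F.hasDerivAt_pt_t ς t θ)).mul_const (F.r1 θ)).add
      ((D2.comp_hasDerivAt t (F.hasDerivAt_pt_t ς t θ)).mul_const (F.r2 θ))).const_mul ς)
  have g2 := (Dζ.const_mul (κ t)).mul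
    (((D1.comp_hasDerivAt θ (F.hasDerivAt_pt_θ ς t θ)).mul (F.hasDerivAt_t1 θ)).add
      ((D2.comp_hasDerivAt θ (F.hasDerivAt_pt_θ ς t θ)).mul (F.hasDerivAt_t2 θ)))
  have ef := f1.unique f2
  have eg := g1.unique g2
  rw [ef, eg]
  rw [clm_apply_pair (fderiv ℝ Y₁ _) (ς * _, _), clm_apply_pair (fderiv ℝ Y₂ _) (ς * _, _),
    clm_apply_pair (fderiv ℝ Y₁ _) ((_ + _) * _, _),
    clm_apply_pair (fderiv ℝ Y₂ _) ((_ + _) * _, _)]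
  have q1 := F.rt1 θ
  have q2 := F.rt2 θ
  have q3 := F.rt12 θ
  simp only [rad, tan, dvg, Function.comp, Pi.add_apply, Pi.mul_apply]
  generalize fderiv ℝ Y₁ (F.pt ς t θ) (1, 0) = A11
  generalize fderiv ℝ Y₁ (F.pt ς t θ) (0, 1) = A12
  generalize fderiv ℝ Y₂ (F.pt ς t θ) (1, 0) = A21
  generalize fderiv ℝ Y₂ (F.pt ς t θ) (0, 1) = A22
  generalize Y₁ (F.pt ς t θ) = y1
  generalize Y₂ (F.pt ς t θ) = y2
  linear_combination -(κ t * ζ θ * (y1 * F.r1 θ + y2 * F.r2 θ)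
      + (F.R + ς * t) * κ t * ζ θ * ((F.r1 θ * A11 + F.r2 θ * A12) * F.r1 θ
        + (F.r1 θ * A21 + F.r2 θ * A22) * F.r2 θ)) * hς
    - (F.R + ς * t) * κ t * ζ θ * (A11 * q1 + A22 * q2 + (A12 + A21) * q3)

end Frame

/-! ### Iterated integrals of continuous functions on a rectangle -/

section Dbl

variable {a b c d : ℝ} {f g : ℝ → ℝ → ℝ}

lemma dbl_inner (hcd : c ≤ d)
    (hg : ContinuousOn (fun x : ℝ × ℝ => g x.1 x.2) (Icc a b ×ˢ Icc c d)) {t : ℝ}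
    (ht : t ∈ Icc a b) : IntervalIntegrable (g t) volume c d := by
  apply ContinuousOn.intervalIntegrable
  rw [uIcc_of_le hcd]
  exact hg.comp (f := fun θ => ((t, θ) : ℝ × ℝ)) (by fun_prop) (fun θ hθ => ⟨ht, hθ⟩)

lemma dbl_cont (hab : a ≤ b) (hcd : c ≤ d)
    (hg : ContinuousOn (fun x : ℝ × ℝ => g x.1 x.2) (Icc a b ×ˢ Icc c d)) :
    ContinuousOn (fun t => ∫ θ in c..d, g t θ) (Icc a b) := by
  set G : ℝ → ℝ → ℝ := fun t θ => g (projIcc a b hab t) (projIcc c d hcd θ) with hG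
  have hGc : Continuous (fun x : ℝ × ℝ => G x.1 x.2) := by
    have hm : Continuous (fun x : ℝ × ℝ =>
        (((projIcc a b hab x.1 : ℝ), (projIcc c d hcd x.2 : ℝ)) : ℝ × ℝ)) := by
      fun_prop
    exact hg.comp_continuous hm (fun x => ⟨(projIcc a b hab x.1).2, (projIcc c d hcd x.2).2⟩)
  have h1 : Continuous (fun t => ∫ θ in c..d, G t θ) :=
    intervalIntegral.continuous_parametric_intervalIntegral_of_continuous' hGc c d
  refine h1.continuousOn.congr fun t ht => ?_
  refine intervalIntegral.integral_congr fun θ hθ => ?_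
  rw [uIcc_of_le hcd] at hθ
  simp only [hG, projIcc_of_mem hab ht, projIcc_of_mem hcd hθ]

lemma dbl_outer (hab : a ≤ b) (hcd : c ≤ d)
    (hg : ContinuousOn (fun x : ℝ × ℝ => g x.1 x.2) (Icc a b ×ˢ Icc c d)) :
    IntervalIntegrable (fun t => ∫ θ in c..d, g t θ) volume a b := by
  apply ContinuousOn.intervalIntegrable
  rw [uIcc_of_le hab]
  exact dbl_cont hab hcd hg

lemma dbl_mono (hab : a ≤ b) (hcd : c ≤ d)
    (hf : ContinuousOn (fun x : ℝ × ℝ => f x.1 x.2) (Icc a b ×ˢ Icc c d))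
    (hg : ContinuousOn (fun x : ℝ × ℝ => g x.1 x.2) (Icc a b ×ˢ Icc c d))
    (h : ∀ t ∈ Icc a b, ∀ θ ∈ Icc c d, f t θ ≤ g t θ) :
    (∫ t in a..b, ∫ θ in c..d, f t θ) ≤ ∫ t in a..b, ∫ θ in c..d, g t θ :=
  intervalIntegral.integral_mono_on hab (dbl_outer hab hcd hf) (dbl_outer hab hcd hg)
    fun t ht => intervalIntegral.integral_mono_on hcd (dbl_inner hcd hf ht) (dbl_inner hcd hg ht)
      (h t ht)

lemma dbl_add (hab : a ≤ b) (hcd : c ≤ d)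
    (hf : ContinuousOn (fun x : ℝ × ℝ => f x.1 x.2) (Icc a b ×ˢ Icc c d))
    (hg : ContinuousOn (fun x : ℝ × ℝ => g x.1 x.2) (Icc a b ×ˢ Icc c d)) :
    (∫ t in a..b, ∫ θ in c..d, (f t θ + g t θ))
      = (∫ t in a..b, ∫ θ in c..d, f t θ) + ∫ t in a..b, ∫ θ in c..d, g t θ := by
  rw [← intervalIntegral.integral_add (dbl_outer hab hcd hf) (dbl_outer hab hcd hg)]
  refine intervalIntegral.integral_congr fun t ht => ?_
  rw [uIcc_of_le hab] at ht
  exact intervalIntegral.integral_add (dbl_inner hcd hf ht) (dbl_inner hcd hg ht)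

lemma dbl_const (e : ℝ) : (∫ _t in a..b, ∫ _θ in c..d, e) = (b - a) * (d - c) * e := by
  simp only [intervalIntegral.integral_const, smul_eq_mul]; ring

/-- An upper bound for an iterated integral by monotonicity, with a constant bound. -/
lemma dbl_le_const (hab : a ≤ b) (hcd : c ≤ d) {e : ℝ}
    (hf : ContinuousOn (fun x : ℝ × ℝ => f x.1 x.2) (Icc a b ×ˢ Icc c d))
    (h : ∀ t ∈ Icc a b, ∀ θ ∈ Icc c d, f t θ ≤ e) :
    (∫ t in a..b, ∫ θ in c..d, f t θ) ≤ (b - a) * (d - c) * e := by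
  rw [← dbl_const]
  exact dbl_mono hab hcd hf continuousOn_const h

end Dbl

/-! ### Deficit and area in a strip around an arc -/

namespace Frame

variable (F : Frame)

lemma pt_sign (ς t θ : ℝ) : F.pt ς t θ = F.pt 1 (ς * t) θ := by
  simp only [pt, one_mul]

/-- Radial component of `X = ∇u / W`. -/
def Xr (u : ℝ × ℝ → ℝ) (ς t θ : ℝ) : ℝ := F.rad (Xa u) (Xb u) ς t θ

/-- Angular component of `X = ∇u / W`. -/
def Xt (u : ℝ × ℝ → ℝ) (ς t θ : ℝ) : ℝ := F.tan (Xa u) (Xb u) ς t θ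

lemma Xr_sq_add (u : ℝ × ℝ → ℝ) (ς t θ : ℝ) :
    F.Xr u ς t θ ^ 2 + F.Xt u ς t θ ^ 2
      = Xa u (F.pt ς t θ) ^ 2 + Xb u (F.pt ς t θ) ^ 2 := by
  unfold Xr Xt rad tan
  linear_combination Xa u (F.pt ς t θ) ^ 2 * F.rt1 θ + Xb u (F.pt ς t θ) ^ 2 * F.rt2 θ
    + 2 * Xa u (F.pt ς t θ) * Xb u (F.pt ς t θ) * F.rt12 θ

lemma abs_Xr_le (u : ℝ × ℝ → ℝ) (ς t θ : ℝ) : |F.Xr u ς t θ| ≤ 1 := by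
  rw [← sq_le_one_iff_abs_le_one]
  nlinarith [F.Xr_sq_add u ς t θ, X_lt_one u (F.pt ς t θ), sq_nonneg (F.Xt u ς t θ)]

lemma abs_Xt_le (u : ℝ × ℝ → ℝ) (ς t θ : ℝ) : |F.Xt u ς t θ| ≤ 1 := by
  rw [← sq_le_one_iff_abs_le_one]
  nlinarith [F.Xr_sq_add u ς t θ, X_lt_one u (F.pt ς t θ), sq_nonneg (F.Xr u ς t θ)]

lemma Xr_le (u : ℝ × ℝ → ℝ) (ς t θ : ℝ) : F.Xr u ς t θ ≤ 1 := (abs_le.1 (F.abs_Xr_le u ς t θ)).2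

lemma Xt_sq_le (u : ℝ × ℝ → ℝ) (ς t θ : ℝ) :
    F.Xt u ς t θ ^ 2 ≤ 2 * (1 - F.Xr u ς t θ) := by
  nlinarith [F.Xr_sq_add u ς t θ, X_lt_one u (F.pt ς t θ), sq_nonneg (1 - F.Xr u ς t θ)]

/-- Tangent-line form of `W ≥ (2 (1 - X_r)) ^ (-1/2)`: a lower bound for `W` which is affine
in `1 - X_r`. -/
lemma W_lower (u : ℝ × ℝ → ℝ) (ς t θ : ℝ) {h : ℝ} (hh : 0 < h) :
    3 / (2 * h) - (1 - F.Xr u ς t θ) / h ^ 3 ≤ Wgraph u (F.pt ς t θ) := by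
  have hW := Wgraph_pos u (F.pt ς t θ)
  have hX := X_sq u (F.pt ς t θ)
  rw [← F.Xr_sq_add u ς t θ] at hX
  have hr := (abs_le.1 (F.abs_Xr_le u ς t θ))
  set W := Wgraph u (F.pt ς t θ)
  set x := F.Xr u ς t θ
  set y := F.Xt u ς t θ
  have h1 : 1 ≤ 2 * (1 - x) * W ^ 2 := by
    have : (1 - (x ^ 2 + y ^ 2)) ≤ 2 * (1 - x) := by nlinarith [sq_nonneg (1 - x), sq_nonneg y]
    nlinarith [sq_nonneg W]
  have hW2 : 0 < W ^ 2 := by positivity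
  have h2 : 1 / (2 * W ^ 2) ≤ 1 - x := by
    rw [div_le_iff₀ (by positivity)]; linarith
  have h3 : 3 / (2 * h) - (1 / (2 * W ^ 2)) / h ^ 3 ≤ W := by
    have e : W - (3 / (2 * h) - (1 / (2 * W ^ 2)) / h ^ 3)
        = (2 * (W * h) ^ 3 - 3 * (W * h) ^ 2 + 1) / (2 * W ^ 2 * h ^ 3) := by
      field_simp
      ring
    have : 0 ≤ (2 * (W * h) ^ 3 - 3 * (W * h) ^ 2 + 1) / (2 * W ^ 2 * h ^ 3) := by
      apply div_nonneg _ (by positivity)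
      have : 2 * (W * h) ^ 3 - 3 * (W * h) ^ 2 + 1 = (W * h - 1) ^ 2 * (2 * (W * h) + 1) := by ring
      rw [this]; positivity
    linarith
  have h4 : (1 / (2 * W ^ 2)) / h ^ 3 ≤ (1 - x) / h ^ 3 := by gcongr
  linarith

end Frame

/-- A polar rectangle around an arc of the reference circle, contained in `Ω`, together with an
angular cut-off `ζ` vanishing at both ends. -/
structure Strip (H : ℝ) (Ω : Set (ℝ × ℝ)) where
  F : Frame
  s0 : ℝ
  c : ℝ
  d : ℝ
  K : ℝ
  ζ : ℝ → ℝ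
  hΩ : IsOpen Ω
  hRH : 2 * H * F.R = 1
  hs0 : 0 < s0
  hs0R : s0 ≤ F.R / 2
  hcd : c ≤ d
  hζ : ContDiff ℝ 1 ζ
  hζ0 : ∀ θ ∈ Icc c d, 0 ≤ ζ θ
  hζ1 : ∀ θ ∈ Icc c d, ζ θ ≤ 1
  hζc : ζ c = 0
  hζd : ζ d = 0
  hK0 : 0 < K
  hK : ∀ θ ∈ Icc c d, deriv ζ θ ^ 2 ≤ K * ζ θ
  hZ : 0 < ∫ θ in c..d, ζ θ
  hmem : ∀ t ∈ Icc (-s0) s0, ∀ θ ∈ Icc c d, F.pt 1 t θ ∈ Ω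

namespace Strip

variable {H : ℝ} {Ω : Set (ℝ × ℝ)} (S : Strip H Ω) {u : ℝ × ℝ → ℝ}

/-- Total mass of the cut-off. -/
def Z : ℝ := ∫ θ in S.c..S.d, S.ζ θ

/-- The deficit `∫ ζ (1 - X_r)` at signed depth `t`. -/
def y (u : ℝ × ℝ → ℝ) (t : ℝ) : ℝ := ∫ θ in S.c..S.d, S.ζ θ * (1 - S.F.Xr u 1 t θ)

lemma mem {ς t θ : ℝ} (hς : ς ^ 2 = 1) (ht : t ∈ Icc (-S.s0) S.s0) (hθ : θ ∈ Icc S.c S.d) :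
    S.F.pt ς t θ ∈ Ω := by
  rw [S.F.pt_sign]
  refine S.hmem _ ?_ _ hθ
  have h0 : (ς - 1) * (ς + 1) = 0 := by linear_combination hς
  rcases mul_eq_zero.1 h0 with h | h
  · rw [sub_eq_zero.1 h, one_mul]; exact ht
  · rw [eq_neg_of_add_eq_zero_left h]; constructor <;> linarith [ht.1, ht.2]

lemma cont_comp {ς : ℝ} (hς : ς ^ 2 = 1) {f : ℝ × ℝ → ℝ} (hf : ∀ q ∈ Ω, ContinuousAt f q)
    {a b : ℝ} (hab : Icc a b ⊆ Icc (-S.s0) S.s0) :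
    ContinuousOn (fun x : ℝ × ℝ => f (S.F.pt ς x.1 x.2)) (Icc a b ×ˢ Icc S.c S.d) := by
  intro x hx
  have h1 := hf _ (S.mem hς (hab hx.1) hx.2)
  exact (ContinuousAt.comp (f := fun x : ℝ × ℝ => S.F.pt ς x.1 x.2) (x := x) h1
    (S.F.continuous_pt ς).continuousAt).continuousWithinAt

lemma cont_Xr (hu : IsCMCSolution H Ω u) {ς : ℝ} (hς : ς ^ 2 = 1) {a b : ℝ}
    (hab : Icc a b ⊆ Icc (-S.s0) S.s0) :
    ContinuousOn (fun x : ℝ × ℝ => S.F.Xr u ς x.1 x.2) (Icc a b ×ˢ Icc S.c S.d) := by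
  have h1 := S.cont_comp hς (fun q hq => (cmc_Xa S.hΩ hu hq).continuousAt) hab
  have h2 := S.cont_comp hς (fun q hq => (cmc_Xb S.hΩ hu hq).continuousAt) hab
  have h3 := S.F.contDiff_r1.continuous
  have h4 := S.F.contDiff_r2.continuous
  unfold Frame.Xr Frame.rad
  fun_prop

lemma cont_Xt (hu : IsCMCSolution H Ω u) {ς : ℝ} (hς : ς ^ 2 = 1) {a b : ℝ}
    (hab : Icc a b ⊆ Icc (-S.s0) S.s0) :
    ContinuousOn (fun x : ℝ × ℝ => S.F.Xt u ς x.1 x.2) (Icc a b ×ˢ Icc S.c S.d) := by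
  have h1 := S.cont_comp hς (fun q hq => (cmc_Xa S.hΩ hu hq).continuousAt) hab
  have h2 := S.cont_comp hς (fun q hq => (cmc_Xb S.hΩ hu hq).continuousAt) hab
  have h3 := S.F.contDiff_t1.continuous
  have h4 := S.F.contDiff_t2.continuous
  unfold Frame.Xt Frame.tan
  fun_prop

lemma dζ_le {θ : ℝ} (hθ : θ ∈ Icc S.c S.d) : |deriv S.ζ θ| ≤ 1 + S.K := by
  have h := S.hK θ hθ
  have h1 := S.hζ1 θ hθ
  have h2 := S.hK0
  rw [← abs_of_pos (show 0 < 1 + S.K by linarith)]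
  apply sq_le_sq.1
  nlinarith

lemma y_nonneg (t : ℝ) : 0 ≤ S.y u t :=
  intervalIntegral.integral_nonneg S.hcd fun θ hθ =>
    mul_nonneg (S.hζ0 θ hθ) (by linarith [S.F.Xr_le u 1 t θ])

lemma cont_y (hu : IsCMCSolution H Ω u) :
    ContinuousOn (S.y u) (Icc (-S.s0) S.s0) := by
  apply dbl_cont (g := fun t θ => S.ζ θ * (1 - S.F.Xr u 1 t θ)) (by linarith [S.hs0]) S.hcd
  have h := S.cont_Xr hu (ς := 1) (by norm_num) (Subset.refl _)
  have h2 := S.hζ.continuous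
  fun_prop

end Strip

/-- `∇u · X`. -/
def gX (u : ℝ × ℝ → ℝ) (q : ℝ × ℝ) : ℝ := pdx u q * Xa u q + pdy u q * Xb u q

namespace Strip

variable {H : ℝ} {Ω : Set (ℝ × ℝ)} (S : Strip H Ω) {u : ℝ × ℝ → ℝ}

lemma cont_gX (hu : IsCMCSolution H Ω u) {ς : ℝ} (hς : ς ^ 2 = 1) {a b : ℝ}
    (hab : Icc a b ⊆ Icc (-S.s0) S.s0) :
    ContinuousOn (fun x : ℝ × ℝ => gX u (S.F.pt ς x.1 x.2)) (Icc a b ×ˢ Icc S.c S.d) :=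
  S.cont_comp hς (fun _ hq => ((cmc_pdx S.hΩ hu hq).continuousAt.mul
    (cmc_Xa S.hΩ hu hq).continuousAt).add ((cmc_pdy S.hΩ hu hq).continuousAt.mul
    (cmc_Xb S.hΩ hu hq).continuousAt)) hab

lemma cont_W (hu : IsCMCSolution H Ω u) {ς : ℝ} (hς : ς ^ 2 = 1) {a b : ℝ}
    (hab : Icc a b ⊆ Icc (-S.s0) S.s0) :
    ContinuousOn (fun x : ℝ × ℝ => Wgraph u (S.F.pt ς x.1 x.2)) (Icc a b ×ˢ Icc S.c S.d) :=
  S.cont_comp hς (fun _ hq => (cmc_W S.hΩ hu hq).continuousAt) hab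

lemma cont_u (hu : IsCMCSolution H Ω u) {ς : ℝ} (hς : ς ^ 2 = 1) {a b : ℝ}
    (hab : Icc a b ⊆ Icc (-S.s0) S.s0) :
    ContinuousOn (fun x : ℝ × ℝ => u (S.F.pt ς x.1 x.2)) (Icc a b ×ˢ Icc S.c S.d) :=
  S.cont_comp hς (fun _ hq => (cmc_contDiffAt S.hΩ hu hq).continuousAt) hab

/-- Divergence theorem in the strip for the field `κ ζ β(u) X`. -/
lemma strip_id (hu : IsCMCSolution H Ω u) {ς : ℝ} (hς : ς ^ 2 = 1) {κ β : ℝ → ℝ}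
    (hκ : ContDiff ℝ 1 κ) (hβ : ContDiff ℝ 1 β) {a b : ℝ} (hab : a ≤ b)
    (hsub : Icc a b ⊆ Icc (-S.s0) S.s0) :
    (∫ t in a..b, ∫ θ in S.c..S.d,
        ((S.F.R + ς * t) * κ t * S.ζ θ * (2 * H * β (u (S.F.pt ς t θ))
            + deriv β (u (S.F.pt ς t θ)) * gX u (S.F.pt ς t θ))
          + (S.F.R + ς * t) * deriv κ t * S.ζ θ * (ς * (β (u (S.F.pt ς t θ)) * S.F.Xr u ς t θ))
          + κ t * deriv S.ζ θ * (β (u (S.F.pt ς t θ)) * S.F.Xt u ς t θ)))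
      = (S.F.R + ς * b) * κ b * ς * (∫ θ in S.c..S.d, S.ζ θ * (β (u (S.F.pt ς b θ)) * S.F.Xr u ς b θ))
        - (S.F.R + ς * a) * κ a * ς *
          ∫ θ in S.c..S.d, S.ζ θ * (β (u (S.F.pt ς a θ)) * S.F.Xr u ς a θ) := by
  have hr : ∀ t θ, S.F.rad (fun x => β (u x) * Xa u x) (fun x => β (u x) * Xb u x) ς t θ
      = β (u (S.F.pt ς t θ)) * S.F.Xr u ς t θ := fun t θ => by
    simp only [Frame.rad, Frame.Xr]; ring
  have ht : ∀ t θ, S.F.tan (fun x => β (u x) * Xa u x) (fun x => β (u x) * Xb u x) ς t θ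
      = β (u (S.F.pt ς t θ)) * S.F.Xt u ς t θ := fun t θ => by
    simp only [Frame.tan, Frame.Xt]; ring
  have key := S.F.polar_div hς (Y₁ := fun x => β (u x) * Xa u x)
    (Y₂ := fun x => β (u x) * Xb u x) hκ S.hζ (a := a) (b := b) (c := S.c) (d := S.d)
    (fun t ht θ hθ => by
      rw [uIcc_of_le hab] at ht
      rw [uIcc_of_le S.hcd] at hθ
      have hm := S.mem hς (hsub ht) hθ
      exact ⟨cmc_comp_Xa S.hΩ hu hm hβ, cmc_comp_Xb S.hΩ hu hm hβ⟩)
  simp only [hr, ht, S.hζc, S.hζd, mul_zero, zero_mul, intervalIntegral.integral_zero, sub_zero,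
    zero_add] at key
  have e1 : ∀ t, (∫ θ in S.c..S.d, (S.F.R + ς * t) * κ t * S.ζ θ *
      (ς * (β (u (S.F.pt ς t θ)) * S.F.Xr u ς t θ)))
      = (S.F.R + ς * t) * κ t * ς *
        ∫ θ in S.c..S.d, S.ζ θ * (β (u (S.F.pt ς t θ)) * S.F.Xr u ς t θ) := fun t => by
    rw [← intervalIntegral.integral_const_mul]
    congr 1; ext θ; ring
  rw [e1, e1] at key
  rw [← key]
  refine intervalIntegral.integral_congr fun t ht => intervalIntegral.integral_congr fun θ hθ => ?_
  rw [uIcc_of_le hab] at ht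
  rw [uIcc_of_le S.hcd] at hθ
  have hm := S.mem hς (hsub ht) hθ
  simp only [cmc_dvg_comp S.hΩ hu hm hβ, gX]

/-- Decay of the deficit `∫ ζ (1 - X_r)` away from the reference circle: it is quadratic in the
depth, up to its value on the circle. -/
lemma y_bound (hu : IsCMCSolution H Ω u) {s : ℝ} (hs : 0 < s) (hs1 : s ≤ S.s0) :
    ∀ x ∈ Icc 0 s, S.y u (-x) ≤ 4 * S.y u 0 + 8 * S.K * (S.d - S.c) / S.F.R ^ 2 * s ^ 2 := by
  have hR := S.F.hR
  have hsR := S.hs0R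
  have hK := S.hK0
  have hcd := S.hcd
  have hXt := S.cont_Xt hu (ς := 1) (by norm_num) (Subset.refl _)
  have hXr := S.cont_Xr hu (ς := 1) (by norm_num) (Subset.refl _)
  have hζc := S.hζ.continuous
  have hζd : Continuous (deriv S.ζ) := S.hζ.continuous_deriv (by norm_num)
  have hs0 : -S.s0 ≤ S.s0 := by linarith
  -- bound of the flux through the circular sides of the cut-off
  have hin : ∀ B, (∀ x ∈ Icc 0 s, S.y u (-x) ≤ B) → ∀ x ∈ Icc 0 s,
      |∫ θ in S.c..S.d, deriv S.ζ θ * S.F.Xt u 1 (-x) θ|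
        ≤ S.K * (4 * s / S.F.R) * (S.d - S.c) / 2 + B / (4 * s / S.F.R) := by
    intro B hB x hx
    set m := 4 * s / S.F.R with hm
    have hm0 : 0 < m := by positivity
    have hx' : -x ∈ Icc (-S.s0) S.s0 := ⟨by linarith [hx.2], by linarith [hx.1]⟩
    have i1 : IntervalIntegrable (fun θ => S.K * m / 2) volume S.c S.d :=
      intervalIntegrable_const
    have i2 : IntervalIntegrable (fun θ => S.ζ θ * (1 - S.F.Xr u 1 (-x) θ)) volume S.c S.d :=
      dbl_inner (g := fun t θ => S.ζ θ * (1 - S.F.Xr u 1 t θ)) hcd (by fun_prop) hx'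
    have h1 : |∫ θ in S.c..S.d, deriv S.ζ θ * S.F.Xt u 1 (-x) θ|
        ≤ ∫ θ in S.c..S.d, (S.K * m / 2 + 1 / m * (S.ζ θ * (1 - S.F.Xr u 1 (-x) θ))) := by
      rw [← Real.norm_eq_abs]
      refine intervalIntegral.norm_integral_le_of_norm_le hcd ?_ (i1.add (i2.const_mul (1 / m)))
      refine Filter.Eventually.of_forall fun θ hθ => ?_
      have hθ' : θ ∈ Icc S.c S.d := ⟨hθ.1.le, hθ.2⟩
      have a1 := S.hK θ hθ'
      have a2 := S.F.Xt_sq_le u 1 (-x) θ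
      have a3 := S.hζ0 θ hθ'
      rw [Real.norm_eq_abs]
      have a4 : (deriv S.ζ θ * S.F.Xt u 1 (-x) θ) ^ 2
          ≤ (S.K * S.ζ θ) * (2 * (1 - S.F.Xr u 1 (-x) θ)) := by
        rw [mul_pow]; gcongr
      set w := S.ζ θ * (1 - S.F.Xr u 1 (-x) θ) with hw
      have hw0 : 0 ≤ w := mul_nonneg a3 (by linarith [S.F.Xr_le u 1 (-x) θ])
      have a5 : 0 ≤ S.K * m / 2 + 1 / m * w := by positivity
      rw [← abs_of_nonneg a5]
      apply sq_le_sq.1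
      refine a4.trans ?_
      have e : (S.K * m / 2 + 1 / m * w) ^ 2
          = (S.K * m / 2 - 1 / m * w) ^ 2 + 2 * S.K * w := by
        field_simp; ring
      rw [e, hw]; nlinarith [sq_nonneg (S.K * m / 2 - 1 / m * w)]
    refine h1.trans ?_
    rw [intervalIntegral.integral_add i1 (i2.const_mul (1 / m)),
      intervalIntegral.integral_const_mul, intervalIntegral.integral_const, smul_eq_mul]
    have : 1 / m * (∫ θ in S.c..S.d, S.ζ θ * (1 - S.F.Xr u 1 (-x) θ)) ≤ B / m := by
      rw [one_div, inv_mul_eq_div]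
      exact div_le_div_of_nonneg_right (hB x hx) hm0.le
    linarith
  -- the flux identity between the depths `0` and `x`
  have hid : ∀ x ∈ Icc 0 s, (S.F.R - x) * S.y u (-x)
      ≤ S.F.R * S.y u 0
        + ∫ t in (-x)..0, ∫ θ in S.c..S.d, deriv S.ζ θ * S.F.Xt u 1 t θ := by
    intro x hx
    have hsub : Icc (-x) 0 ⊆ Icc (-S.s0) S.s0 :=
      Icc_subset_Icc (by linarith [hx.2]) (by linarith)
    have hxx : -x ≤ 0 := by linarith [hx.1]
    have key := S.strip_id hu (ς := 1) (by norm_num) (κ := fun _ => 1) (β := fun _ => 1)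
      contDiff_const contDiff_const hxx hsub
    simp only [deriv_const, mul_one, one_mul, zero_mul, mul_zero, add_zero] at key
    have hXt' := hXt.mono (prod_mono hsub (Subset.refl (Icc S.c S.d)))
    have e1 := dbl_add (f := fun t θ => (S.F.R + t) * S.ζ θ * (2 * H))
      (g := fun t θ => deriv S.ζ θ * S.F.Xt u 1 t θ) hxx hcd
      (by fun_prop) (by fun_prop)
    rw [e1] at key
    have e2 : (∫ t in (-x)..0, ∫ θ in S.c..S.d, (S.F.R + t) * S.ζ θ * (2 * H))
        = S.Z * (2 * H) * (S.F.R * x - x ^ 2 / 2) := by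
      have : ∀ t, (∫ θ in S.c..S.d, (S.F.R + t) * S.ζ θ * (2 * H))
          = S.Z * (2 * H) * (S.F.R + t) := fun t => by
        rw [intervalIntegral.integral_mul_const, intervalIntegral.integral_const_mul, Z]; ring
      simp only [this]
      rw [intervalIntegral.integral_const_mul, intervalIntegral.integral_add (by simp) (by simp)]
      simp only [intervalIntegral.integral_const, integral_id, smul_eq_mul]
      ring
    rw [e2] at key
    have e3 : ∀ t ∈ Icc (-S.s0) S.s0, (∫ θ in S.c..S.d, S.ζ θ * S.F.Xr u 1 t θ)
        = S.Z - S.y u t := by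
      intro t ht
      rw [Z, y, ← intervalIntegral.integral_sub (hζc.intervalIntegrable _ _)
        (dbl_inner (g := fun t θ => S.ζ θ * (1 - S.F.Xr u 1 t θ)) hcd (by fun_prop) ht)]
      congr 1; ext θ; ring
    rw [e3 0 (hsub ⟨hxx, le_refl _⟩), e3 (-x) (hsub ⟨le_refl _, hxx⟩)] at key
    have hZ : 0 < S.Z := S.hZ
    have hRH := S.hRH
    have hH : 0 < 2 * H := by
      by_contra hc; push Not at hc; nlinarith
    have : 0 ≤ S.Z * (2 * H) * x ^ 2 / 2 := by positivity
    linear_combination this - key + S.Z * x * hRH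
  -- absorption
  set A := 2 * S.y u 0 + 4 * S.K * (S.d - S.c) / S.F.R ^ 2 * s ^ 2 with hA
  have habs : ∀ B, 0 ≤ B → (∀ x ∈ Icc 0 s, S.y u (-x) ≤ B) → ∀ x ∈ Icc 0 s,
      S.y u (-x) ≤ B / 2 + A := by
    intro B hB0 hB x hx
    have h1 := hid x hx
    have h2 : |∫ t in (-x)..0, ∫ θ in S.c..S.d, deriv S.ζ θ * S.F.Xt u 1 t θ|
        ≤ (S.K * (4 * s / S.F.R) * (S.d - S.c) / 2 + B / (4 * s / S.F.R)) * |0 - -x| := by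
      rw [← Real.norm_eq_abs]
      refine intervalIntegral.norm_integral_le_of_norm_le_const fun t ht => ?_
      rw [uIoc_of_le (by linarith [hx.1])] at ht
      have := hin B hB (-t) ⟨by linarith [ht.2], by linarith [ht.1, hx.2]⟩
      rw [neg_neg] at this
      exact this
    have h3 : |(0 : ℝ) - -x| ≤ s := by
      rw [zero_sub, neg_neg, abs_of_nonneg hx.1]; exact hx.2
    have h4 : 0 ≤ S.K * (4 * s / S.F.R) * (S.d - S.c) / 2 + B / (4 * s / S.F.R) := by
      have : 0 ≤ S.d - S.c := by linarith
      positivity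
    have h5 := (le_abs_self _).trans (h2.trans (mul_le_mul_of_nonneg_left h3 h4))
    have h6 : S.F.R / 2 * S.y u (-x) ≤ (S.F.R - x) * S.y u (-x) :=
      mul_le_mul_of_nonneg_right (by linarith [hx.2]) (S.y_nonneg _)
    have h7 : (S.K * (4 * s / S.F.R) * (S.d - S.c) / 2 + B / (4 * s / S.F.R)) * s
        = S.F.R / 2 * (4 * S.K * (S.d - S.c) / S.F.R ^ 2 * s ^ 2 + B / 2) := by
      field_simp; ring
    rw [h7] at h5
    have h8 : S.F.R / 2 * S.y u (-x) ≤ S.F.R / 2 * (B / 2 + A) := by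
      rw [hA]; linarith
    exact le_of_mul_le_mul_left h8 (by positivity)
  have hcont : ContinuousOn (fun x => S.y u (-x)) (Icc 0 s) :=
    (S.cont_y hu).comp (by fun_prop) (fun x hx => ⟨by linarith [hx.2], by linarith [hx.1]⟩)
  obtain ⟨x0, hx0, hmax⟩ := isCompact_Icc.exists_isMaxOn ⟨0, by constructor <;> linarith⟩ hcont
  have hfin := habs (S.y u (-x0)) (S.y_nonneg _) (fun x hx => hmax hx) x0 hx0
  intro x hx
  have : S.y u (-x) ≤ S.y u (-x0) := hmax hx
  have e : 4 * S.y u 0 + 8 * S.K * (S.d - S.c) / S.F.R ^ 2 * s ^ 2 = 2 * A := by rw [hA]; ring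
  rw [e]; linarith

end Strip

/-! ### Large values in a strip -/

/-- A bounded nondecreasing `C¹` function vanishing exactly on `(-∞, 0]`:
`x² / (1 + x²)` for `x ≥ 0`. -/
def psi (x : ℝ) : ℝ := max x 0 ^ 2 / (1 + max x 0 ^ 2)

lemma hasDerivAt_max_sq (x : ℝ) : HasDerivAt (fun x : ℝ => max x 0 ^ 2) (2 * max x 0) x := by
  rcases lt_trichotomy x 0 with h | h | h
  · have e : (fun x : ℝ => max x 0 ^ 2) =ᶠ[nhds x] fun _ => 0 := by
      filter_upwards [Iio_mem_nhds h] with y hy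
      rw [max_eq_right (le_of_lt hy)]; norm_num
    rw [max_eq_right h.le, mul_zero]
    exact (hasDerivAt_const x (0 : ℝ)).congr_of_eventuallyEq e
  · subst h
    rw [max_self, mul_zero, hasDerivAt_iff_isLittleO]
    have : (fun x : ℝ => max x 0 ^ 2 - max 0 0 ^ 2 - (x - 0) • (0 : ℝ))
        =O[nhds 0] fun x : ℝ => x ^ 2 := by
      apply Asymptotics.IsBigO.of_bound 1
      refine Eventually.of_forall fun x => ?_
      simp only [max_self, smul_zero, sub_zero, one_mul, Real.norm_eq_abs]
      rcases le_total x 0 with h | h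
      · rw [max_eq_right h]; simpa using sq_nonneg x
      · rw [max_eq_left h]; simp
    refine this.trans_isLittleO ?_
    simpa using Asymptotics.isLittleO_pow_id (𝕜 := ℝ) (n := 2) (by norm_num)
  · have e : (fun x : ℝ => max x 0 ^ 2) =ᶠ[nhds x] fun y => y ^ 2 := by
      filter_upwards [Ioi_mem_nhds h] with y hy
      rw [max_eq_left (le_of_lt hy)]
    rw [max_eq_left h.le]
    have := (hasDerivAt_pow 2 x).congr_of_eventuallyEq e
    simpa using this

lemma contDiff_max_sq : ContDiff ℝ 1 (fun x : ℝ => max x 0 ^ 2) := by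
  rw [contDiff_one_iff_deriv]
  refine ⟨fun x => (hasDerivAt_max_sq x).differentiableAt, ?_⟩
  have : deriv (fun x : ℝ => max x 0 ^ 2) = fun x => 2 * max x 0 :=
    funext fun x => (hasDerivAt_max_sq x).deriv
  rw [this]; fun_prop

lemma contDiff_psi : ContDiff ℝ 1 psi :=
  contDiff_max_sq.div (contDiff_const.add contDiff_max_sq) fun x => by positivity

lemma hasDerivAt_psi (x : ℝ) : HasDerivAt psi (2 * max x 0 / (1 + max x 0 ^ 2) ^ 2) x := by
  have h := hasDerivAt_max_sq x
  have h2 := h.div (h.const_add 1) (by positivity)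
  exact h2.congr_deriv (by congr 1; ring)

lemma psi_nonneg (x : ℝ) : 0 ≤ psi x := by unfold psi; positivity

lemma psi_le_one (x : ℝ) : psi x ≤ 1 := by
  unfold psi; rw [div_le_one (by positivity)]; linarith

lemma psi_zero {x : ℝ} (hx : x ≤ 0) : psi x = 0 := by
  unfold psi; rw [max_eq_right hx]; norm_num

lemma deriv_psi_nonneg (x : ℝ) : 0 ≤ deriv psi x := by
  rw [(hasDerivAt_psi x).deriv]
  have := le_max_right x 0
  positivity

lemma deriv_psi_le (x : ℝ) : deriv psi x ≤ 1 := by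
  rw [(hasDerivAt_psi x).deriv, div_le_one (by positivity)]
  nlinarith [sq_nonneg (max x 0 - 1), sq_nonneg (max x 0), sq_nonneg (max x 0 ^ 2)]

/-- Smooth indicator of the set where `ς v` is much larger than `m`, at scale `T`. -/
def betaF (ς m T v : ℝ) : ℝ := psi ((ς * v - m) / T)

lemma contDiff_betaF (ς m T : ℝ) : ContDiff ℝ 1 (betaF ς m T) :=
  contDiff_psi.comp (by fun_prop)

lemma hasDerivAt_betaF (ς m T v : ℝ) :
    HasDerivAt (betaF ς m T) (deriv psi ((ς * v - m) / T) * (ς / T)) v := by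
  have h : HasDerivAt (fun v => (ς * v - m) / T) (ς / T) v := by
    simpa using (((hasDerivAt_id v).const_mul ς).sub_const m).div_const T
  exact HasDerivAt.comp v (hasDerivAt_psi _).differentiableAt.hasDerivAt h

/-- `|u| ≫ T` is detected by one of the two functions `betaF (±1)`. -/
lemma one_sub_b_le {m T : ℝ} (hm : 0 ≤ m) (hT : 0 < T) (v : ℝ) :
    1 - 1 / (1 + (v / T) ^ 2) ≤ 4 * (betaF 1 m T v + betaF (-1) m T v) + 4 * m ^ 2 / T ^ 2 := by
  have e : 1 - 1 / (1 + (v / T) ^ 2) = (v / T) ^ 2 / (1 + (v / T) ^ 2) := by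
    field_simp; ring
  have key : ∀ x : ℝ, (v / T) ^ 2 ≤ 4 * x ^ 2 → 0 ≤ x →
      (v / T) ^ 2 / (1 + (v / T) ^ 2) ≤ 4 * psi x := by
    intro x hx h0
    unfold psi
    rw [max_eq_left h0, ← mul_div_assoc, div_le_div_iff₀ (by positivity) (by positivity)]
    nlinarith [sq_nonneg (v / T), sq_nonneg x, mul_nonneg (sq_nonneg (v / T)) (sq_nonneg x)]
  have n1 := psi_nonneg ((1 * v - m) / T)
  have n2 := psi_nonneg ((-1 * v - m) / T)
  have n3 : 0 ≤ 4 * m ^ 2 / T ^ 2 := by positivity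
  rw [e]
  unfold betaF
  rcases le_or_gt |v| (2 * m) with h | h
  · have h1 : (v / T) ^ 2 / (1 + (v / T) ^ 2) ≤ (v / T) ^ 2 :=
      div_le_self (by positivity) (by nlinarith [sq_nonneg (v / T)])
    have h2 : (v / T) ^ 2 ≤ 4 * m ^ 2 / T ^ 2 := by
      rw [div_pow]
      apply div_le_div_of_nonneg_right _ (by positivity)
      rw [← sq_abs]; nlinarith [abs_nonneg v]
    linarith
  · rcases le_total 0 v with h0 | h0
    · rw [abs_of_nonneg h0] at h
      have := key ((1 * v - m) / T) (by
        rw [div_pow, div_pow, ← mul_div_assoc]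
        apply div_le_div_of_nonneg_right _ (by positivity)
        nlinarith) (div_nonneg (by linarith) hT.le)
      linarith
    · rw [abs_of_nonpos h0] at h
      have := key ((-1 * v - m) / T) (by
        rw [div_pow, div_pow, ← mul_div_assoc]
        apply div_le_div_of_nonneg_right _ (by positivity)
        nlinarith) (div_nonneg (by linarith) hT.le)
      linarith

namespace Strip

variable {H : ℝ} {Ω : Set (ℝ × ℝ)} (S : Strip H Ω) {u : ℝ × ℝ → ℝ}

lemma R_bounds {ς t : ℝ} (hς : ς ^ 2 = 1) (ht : t ∈ Icc (-S.s0) S.s0) :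
    S.F.R / 2 ≤ S.F.R + ς * t ∧ S.F.R + ς * t ≤ 2 * S.F.R := by
  have h := S.hs0R
  have hR := S.F.hR
  have h0 : (ς - 1) * (ς + 1) = 0 := by linear_combination hς
  rcases mul_eq_zero.1 h0 with h | h
  · rw [sub_eq_zero.1 h, one_mul]; constructor <;> linarith [ht.1, ht.2]
  · rw [eq_neg_of_add_eq_zero_left h]; constructor <;> linarith [ht.1, ht.2]

/-- The flux constant of `flux_bound`. -/
def C2 : ℝ := 2 * S.F.R + 4 * S.s0 + 2 * S.s0 * (1 + S.K)

/-- The flux of `β(u) X` through the circle at signed distance `t₀`, for `β` monotone in the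
direction `ς`, is controlled by the integral of `β(u)` over the part of the strip beyond it. -/
lemma flux_bound (hu : IsCMCSolution H Ω u) {ς : ℝ} (hς : ς ^ 2 = 1) {β : ℝ → ℝ}
    (hβ : ContDiff ℝ 1 β) (hβ0 : ∀ v, 0 ≤ β v) (hβ' : ∀ v, 0 ≤ ς * deriv β v) {t0 : ℝ}
    (ht0 : t0 ∈ Icc (-(S.s0 / 2)) (S.s0 / 2)) :
    S.F.R * S.s0 / 4 * (∫ θ in S.c..S.d, S.ζ θ * (β (u (S.F.pt ς t0 θ)) * S.F.Xr u ς t0 θ))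
      ≤ S.C2 * ∫ t in t0..S.s0, ∫ θ in S.c..S.d, β (u (S.F.pt ς t θ)) := by
  have hs0 := S.hs0
  have hR := S.F.hR
  have hcd := S.hcd
  have hK := S.hK0
  have hle : t0 ≤ S.s0 := by linarith [ht0.2]
  have hsub : Icc t0 S.s0 ⊆ Icc (-S.s0) S.s0 := Icc_subset_Icc (by linarith [ht0.1]) le_rfl
  have key := S.strip_id hu hς (κ := fun t => S.s0 - t) (β := β) (by fun_prop) hβ hle hsub
  have hd : ∀ t, deriv (fun t => S.s0 - t) t = -1 := fun t => by
    rw [deriv_const_sub, deriv_id'']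
  simp only [hd, sub_self, mul_zero, zero_mul, zero_sub] at key
  set I := ∫ θ in S.c..S.d, S.ζ θ * (β (u (S.F.pt ς t0 θ)) * S.F.Xr u ς t0 θ) with hI
  have c1 : ContinuousOn (fun x : ℝ × ℝ => β (u (S.F.pt ς x.1 x.2)))
      (Icc t0 S.s0 ×ˢ Icc S.c S.d) :=
    hβ.continuous.comp_continuousOn (S.cont_u hu hς hsub)
  have c2 : ContinuousOn (fun x : ℝ × ℝ => deriv β (u (S.F.pt ς x.1 x.2)))
      (Icc t0 S.s0 ×ˢ Icc S.c S.d) :=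
    (hβ.continuous_deriv (by norm_num)).comp_continuousOn (S.cont_u hu hς hsub)
  have c3 := S.cont_gX hu hς hsub
  have c4 := S.cont_Xr hu hς hsub
  have c5 := S.cont_Xt hu hς hsub
  have c6 := S.hζ.continuous
  have c7 : Continuous (deriv S.ζ) := S.hζ.continuous_deriv (by norm_num)
  have hRH := S.hRH
  have hH : 0 < 2 * H := by
    by_contra hc; push Not at hc; nlinarith
  have hς1 : |ς| = 1 := by
    rw [← sq_eq_sq₀ (abs_nonneg _) zero_le_one, sq_abs, hς]; norm_num
  have main : (S.F.R + ς * t0) * (S.s0 - t0) * I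
      ≤ S.C2 * ∫ t in t0..S.s0, ∫ θ in S.c..S.d, β (u (S.F.pt ς t θ)) := by
    have e : (S.F.R + ς * t0) * (S.s0 - t0) * I
        = -ς * -((S.F.R + ς * t0) * (S.s0 - t0) * ς * I) := by
      linear_combination -(S.F.R + ς * t0) * (S.s0 - t0) * I * hς
    rw [e, ← key]
    simp only [← intervalIntegral.integral_const_mul]
    have cR : ContinuousOn (fun x : ℝ × ℝ => S.F.R + ς * x.1) (Icc t0 S.s0 ×ˢ Icc S.c S.d) := by
      fun_prop
    have ck : ContinuousOn (fun x : ℝ × ℝ => S.s0 - x.1) (Icc t0 S.s0 ×ˢ Icc S.c S.d) := by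
      fun_prop
    have cz : ContinuousOn (fun x : ℝ × ℝ => S.ζ x.2) (Icc t0 S.s0 ×ˢ Icc S.c S.d) :=
      (c6.comp continuous_snd).continuousOn
    have cz' : ContinuousOn (fun x : ℝ × ℝ => deriv S.ζ x.2) (Icc t0 S.s0 ×ˢ Icc S.c S.d) :=
      (c7.comp continuous_snd).continuousOn
    refine dbl_mono hle hcd
      (continuousOn_const.mul (((((cR.mul ck).mul cz).mul
        ((continuousOn_const.mul c1).add (c2.mul c3))).add
        (((cR.mul continuousOn_const).mul cz).mul (continuousOn_const.mul (c1.mul c4)))).add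
        ((ck.mul cz').mul (c1.mul c5))))
      (continuousOn_const.mul c1) fun t ht θ hθ => ?_
    obtain ⟨r1, r2⟩ := S.R_bounds hς (hsub ht)
    have z0 := S.hζ0 θ hθ
    have z1 := S.hζ1 θ hθ
    have z2 := S.dζ_le hθ
    have x1 := S.F.abs_Xr_le u ς t θ
    have x2 := S.F.abs_Xt_le u ς t θ
    have g0 : 0 ≤ gX u (S.F.pt ς t θ) := grad_dot_X_nonneg u _
    have b0 := hβ0 (u (S.F.pt ς t θ))
    have b1 := hβ' (u (S.F.pt ς t θ))
    have k0 : 0 ≤ S.s0 - t := by linarith [ht.2]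
    have k1 : S.s0 - t ≤ 2 * S.s0 := by linarith [ht.1, ht0.1]
    generalize S.F.Xr u ς t θ = xr at *
    generalize S.F.Xt u ς t θ = xt at *
    generalize gX u (S.F.pt ς t θ) = g at *
    generalize deriv β (u (S.F.pt ς t θ)) = b' at *
    generalize β (u (S.F.pt ς t θ)) = bb at *
    generalize S.ζ θ = z at *
    generalize deriv S.ζ θ = z' at *
    generalize S.s0 - t = k at *
    generalize S.F.R + ς * t = r at *
    have r0 : 0 ≤ r := by linarith
    -- the three terms of the flux identity
    have m1 : r * z * (bb * xr) ≤ 2 * S.F.R * bb := by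
      calc r * z * (bb * xr) ≤ (2 * S.F.R) * 1 * (bb * 1) := by
            have : bb * xr ≤ bb * 1 := mul_le_mul_of_nonneg_left (abs_le.1 x1).2 b0
            have h2 : r * z * (bb * xr) ≤ r * z * (bb * 1) :=
              mul_le_mul_of_nonneg_left this (by positivity)
            refine h2.trans ?_
            gcongr
        _ = _ := by ring
    have m2 : -ς * (r * k * z * (2 * H * bb + b' * g)) ≤ 4 * S.s0 * bb := by
      have h1 : -ς * (2 * H * bb + b' * g) ≤ 2 * H * bb := by
        have : -ς * (2 * H * bb) ≤ 1 * (2 * H * bb) :=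
          mul_le_mul_of_nonneg_right (by linarith [neg_abs_le ς]) (by positivity)
        nlinarith [mul_nonneg b1 g0]
      have h2 : r * k * z * (-ς * (2 * H * bb + b' * g)) ≤ r * k * z * (2 * H * bb) :=
        mul_le_mul_of_nonneg_left h1 (by positivity)
      have h3 : r * k * z * (2 * H * bb) ≤ (2 * S.F.R) * (2 * S.s0) * 1 * (2 * H * bb) := by
        gcongr
      have h4 : (2 * S.F.R) * (2 * S.s0) * 1 * (2 * H * bb) = 4 * S.s0 * bb := by
        linear_combination 4 * S.s0 * bb * hRH
      linarith
    have m3 : -ς * (k * z' * (bb * xt)) ≤ 2 * S.s0 * (1 + S.K) * bb := by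
      have : |-ς * (k * z' * (bb * xt))| ≤ 2 * S.s0 * (1 + S.K) * bb := by
        rw [abs_mul, abs_neg, hς1, abs_mul, abs_mul, abs_mul, abs_of_nonneg k0, abs_of_nonneg b0]
        calc 1 * (k * |z'| * (bb * |xt|)) ≤ 1 * ((2 * S.s0) * (1 + S.K) * (bb * 1)) := by gcongr
          _ = _ := by ring
      exact (le_abs_self _).trans this
    have e2 : -ς * (r * k * z * (2 * H * bb + b' * g) + r * -1 * z * (ς * (bb * xr))
        + k * z' * (bb * xt)) = -ς * (r * k * z * (2 * H * bb + b' * g))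
        + r * z * (bb * xr) + -ς * (k * z' * (bb * xt)) := by
      linear_combination r * z * (bb * xr) * hς
    rw [e2, C2]
    linarith
  have hA : S.F.R * S.s0 / 4 ≤ (S.F.R + ς * t0) * (S.s0 - t0) := by
    have h1 := (S.R_bounds hς (hsub ⟨le_rfl, hle⟩)).1
    have h2 : S.s0 / 2 ≤ S.s0 - t0 := by linarith [ht0.2]
    calc S.F.R * S.s0 / 4 = S.F.R / 2 * (S.s0 / 2) := by ring
      _ ≤ _ := by gcongr; linarith
  have hB : 0 ≤ S.C2 * ∫ t in t0..S.s0, ∫ θ in S.c..S.d, β (u (S.F.pt ς t θ)) := by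
    apply mul_nonneg
    · unfold C2; positivity
    · exact intervalIntegral.integral_nonneg hle fun t _ =>
        intervalIntegral.integral_nonneg hcd fun θ _ => hβ0 _
  rcases le_total I 0 with h | h
  · exact (mul_nonpos_of_nonneg_of_nonpos (by positivity) h).trans hB
  · exact (mul_le_mul_of_nonneg_right hA h).trans main

end Strip

namespace Strip

variable {H : ℝ} {Ω : Set (ℝ × ℝ)} (S : Strip H Ω) {u : ℝ × ℝ → ℝ}

lemma Xr_sign (u : ℝ × ℝ → ℝ) (ς t θ : ℝ) : S.F.Xr u ς t θ = S.F.Xr u 1 (ς * t) θ := by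
  simp only [Frame.Xr, Frame.rad, S.F.pt_sign ς t θ]

lemma abs_le_of_sq {ς : ℝ} (hς : ς ^ 2 = 1) : |ς| = 1 := by
  rw [← sq_eq_sq₀ (abs_nonneg _) zero_le_one, sq_abs, hς]; norm_num

/-- `∫ ζ β(u)` on a circle at distance at most `s` is controlled by the integral of `β(u)` over one
half of the strip, up to `O(s)` and the deficit. -/
lemma mass_bound (hu : IsCMCSolution H Ω u) {ς : ℝ} (hς : ς ^ 2 = 1) {β : ℝ → ℝ}
    (hβ : ContDiff ℝ 1 β) (hβ0 : ∀ v, 0 ≤ β v) (hβ1 : ∀ v, β v ≤ 1)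
    (hβ' : ∀ v, 0 ≤ ς * deriv β v) {s t0 : ℝ}
    (hs : s ≤ S.s0 / 2) (ht0 : t0 ∈ Icc (-s) s) :
    (∫ θ in S.c..S.d, S.ζ θ * β (u (S.F.pt ς t0 θ)))
      ≤ S.C2 / (S.F.R * S.s0 / 4) * (s * (S.d - S.c)
          + ∫ t in (0 : ℝ)..S.s0, ∫ θ in S.c..S.d, β (u (S.F.pt ς t θ))) + S.y u (ς * t0) := by
  have hs0 := S.hs0
  have hR := S.F.hR
  have hcd := S.hcd
  have hK := S.hK0
  have hs' : 0 ≤ s := by linarith [ht0.1, ht0.2]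
  have hC2 : 0 < S.C2 := by unfold C2; positivity
  have h1 := S.flux_bound hu hς hβ hβ0 hβ' (t0 := t0) ⟨by linarith [ht0.1], by linarith [ht0.2]⟩
  set I := ∫ θ in S.c..S.d, S.ζ θ * (β (u (S.F.pt ς t0 θ)) * S.F.Xr u ς t0 θ) with hI
  have hsub : Icc (-S.s0) S.s0 ⊆ Icc (-S.s0) S.s0 := Subset.refl _
  have c1 : ContinuousOn (fun x : ℝ × ℝ => β (u (S.F.pt ς x.1 x.2)))
      (Icc (-S.s0) S.s0 ×ˢ Icc S.c S.d) :=
    hβ.continuous.comp_continuousOn (S.cont_u hu hς hsub)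
  have c4 := S.cont_Xr hu hς hsub
  have cz : ContinuousOn (fun x : ℝ × ℝ => S.ζ x.2) (Icc (-S.s0) S.s0 ×ˢ Icc S.c S.d) :=
    (S.hζ.continuous.comp continuous_snd).continuousOn
  have ht0' : t0 ∈ Icc (-S.s0) S.s0 := ⟨by linarith [ht0.1], by linarith [ht0.2]⟩
  have hpos : ∀ t, 0 ≤ ∫ θ in S.c..S.d, β (u (S.F.pt ς t θ)) := fun t =>
    intervalIntegral.integral_nonneg hcd fun θ _ => hβ0 _
  have hIntg : ∀ a b, a ∈ Icc (-S.s0) S.s0 → b ∈ Icc (-S.s0) S.s0 →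
      IntervalIntegrable (fun t => ∫ θ in S.c..S.d, β (u (S.F.pt ς t θ))) volume a b := by
    intro a b ha hb
    have := dbl_cont (g := fun t θ => β (u (S.F.pt ς t θ))) (by linarith) hcd c1
    exact (this.mono (uIcc_subset_Icc ha hb)).intervalIntegrable
  have m1 : -s ∈ Icc (-S.s0) S.s0 := ⟨by linarith, by linarith⟩
  have m2 : (0 : ℝ) ∈ Icc (-S.s0) S.s0 := ⟨by linarith, by linarith⟩
  have m3 : S.s0 ∈ Icc (-S.s0) S.s0 := ⟨by linarith, by linarith⟩
  have h2 : (∫ t in t0..S.s0, ∫ θ in S.c..S.d, β (u (S.F.pt ς t θ)))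
      ≤ s * (S.d - S.c) + ∫ t in (0 : ℝ)..S.s0, ∫ θ in S.c..S.d, β (u (S.F.pt ς t θ)) := by
    have a1 : (∫ t in t0..S.s0, ∫ θ in S.c..S.d, β (u (S.F.pt ς t θ)))
        ≤ ∫ t in (-s)..S.s0, ∫ θ in S.c..S.d, β (u (S.F.pt ς t θ)) :=
      intervalIntegral.integral_mono_interval ht0.1 (by linarith [ht0.2]) le_rfl
        (Eventually.of_forall hpos) (hIntg _ _ m1 m3)
    rw [← intervalIntegral.integral_add_adjacent_intervals (hIntg _ _ m1 m2) (hIntg _ _ m2 m3)] at a1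
    have a2 := dbl_le_const (f := fun t θ => β (u (S.F.pt ς t θ))) (a := -s) (b := 0) (e := 1)
      (by linarith) hcd
      (c1.mono (prod_mono (Icc_subset_Icc m1.1 m2.2) (Subset.refl (Icc S.c S.d))))
      (fun t _ θ _ => hβ1 _)
    linarith
  have h3 : I ≤ S.C2 / (S.F.R * S.s0 / 4) * (s * (S.d - S.c)
      + ∫ t in (0 : ℝ)..S.s0, ∫ θ in S.c..S.d, β (u (S.F.pt ς t θ))) := by
    rw [div_mul_eq_mul_div, le_div_iff₀ (by positivity), mul_comm]
    exact h1.trans (mul_le_mul_of_nonneg_left h2 hC2.le)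
  have i1 := dbl_inner (g := fun t θ => S.ζ θ * (β (u (S.F.pt ς t θ)) * S.F.Xr u ς t θ)) hcd
    (cz.mul (c1.mul c4)) ht0'
  have i2 := dbl_inner (g := fun t θ => S.ζ θ * (1 - S.F.Xr u ς t θ)) hcd
    (cz.mul (continuousOn_const.sub c4)) ht0'
  have i3 := dbl_inner (g := fun t θ => S.ζ θ * β (u (S.F.pt ς t θ))) hcd (cz.mul c1) ht0'
  have ey : S.y u (ς * t0) = ∫ θ in S.c..S.d, S.ζ θ * (1 - S.F.Xr u ς t0 θ) := by
    unfold y; simp only [← S.Xr_sign u ς t0]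
  have h4 : (∫ θ in S.c..S.d, S.ζ θ * β (u (S.F.pt ς t0 θ))) ≤ I + S.y u (ς * t0) := by
    rw [ey, hI, ← intervalIntegral.integral_add i1 i2]
    refine intervalIntegral.integral_mono_on hcd i3 (i1.add i2) fun θ hθ => ?_
    have z0 := S.hζ0 θ hθ
    have x0 := S.F.Xr_le u ς t0 θ
    have b1 := hβ1 (u (S.F.pt ς t0 θ))
    have : 0 ≤ S.ζ θ * ((1 - β (u (S.F.pt ς t0 θ))) * (1 - S.F.Xr u ς t0 θ)) :=
      mul_nonneg z0 (mul_nonneg (by linarith) (by linarith))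
    show S.ζ θ * β (u (S.F.pt ς t0 θ)) ≤ S.ζ θ * (β (u (S.F.pt ς t0 θ)) * S.F.Xr u ς t0 θ)
      + S.ζ θ * (1 - S.F.Xr u ς t0 θ)
    linarith
  linarith

/-- Upper bound of the area weighted by `1 / (1 + (u / T)²)`: it is at most linear in `T`, with a
constant depending on the strip only. -/
lemma area_bound : ∃ C3 : ℝ, 0 < C3 ∧ ∀ u, IsCMCSolution H Ω u → ∀ T : ℝ, 0 < T →
    ∀ σ s : ℝ, 0 < σ → σ ≤ s → s ≤ S.s0 →
    (∫ t in (-s)..(-σ), ∫ θ in S.c..S.d,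
      S.ζ θ * (1 / (1 + (u (S.F.pt 1 t θ) / T) ^ 2) * Wgraph u (S.F.pt 1 t θ))) ≤ C3 * (T + 1) := by
  have hs0 := S.hs0
  have hR := S.F.hR
  have hcd := S.hcd
  have hK := S.hK0
  have hRH := S.hRH
  have hH : 0 < 2 * H := by
    by_contra hc; push Not at hc; nlinarith
  have hdc : 0 ≤ S.d - S.c := by linarith
  refine ⟨2 / S.F.R * ((S.d - S.c) * (4 * S.F.R + S.s0 * (S.F.R / 2 + 2 + (1 + S.K) * 2))) + 1,
    by positivity, ?_⟩
  intro u hu T hT σ s hσ hσs hs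
  have hle : -s ≤ -σ := by linarith
  have hsub : Icc (-s) (-σ) ⊆ Icc (-S.s0) S.s0 := Icc_subset_Icc (by linarith) (by linarith)
  have hB : ∀ v, HasDerivAt (fun v => T * arctan (v / T)) (1 / (1 + (v / T) ^ 2)) v := by
    intro v
    have h1 : HasDerivAt (fun v : ℝ => v / T) (1 / T) v := (hasDerivAt_id v).div_const T
    refine ((h1.arctan).const_mul T).congr_deriv ?_
    field_simp
  have hBc : ContDiff ℝ 1 (fun v : ℝ => T * arctan (v / T)) :=
    contDiff_const.mul (contDiff_arctan.comp (contDiff_id.div_const T))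
  have hBd : ∀ v, deriv (fun v => T * arctan (v / T)) v = 1 / (1 + (v / T) ^ 2) := fun v =>
    (hB v).deriv
  have hBb : ∀ v, |T * arctan (v / T)| ≤ 2 * T := by
    intro v
    have h1 := Real.neg_pi_div_two_lt_arctan (v / T)
    have h2 := Real.arctan_lt_pi_div_two (v / T)
    have h3 := Real.pi_lt_four
    rw [abs_mul, abs_of_pos hT]
    have : |arctan (v / T)| ≤ 2 := by rw [abs_le]; constructor <;> linarith
    nlinarith
  have key := S.strip_id hu (ς := 1) (by norm_num) (κ := fun _ => 1)
    (β := fun v => T * arctan (v / T)) contDiff_const hBc hle hsub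
  simp only [deriv_const, mul_one, one_mul, zero_mul, mul_zero, add_zero, hBd] at key
  have hflux : ∀ t, |∫ θ in S.c..S.d, S.ζ θ * (T * arctan (u (S.F.pt 1 t θ) / T) * S.F.Xr u 1 t θ)|
      ≤ 2 * T * (S.d - S.c) := by
    intro t
    rw [← Real.norm_eq_abs]
    refine (intervalIntegral.norm_integral_le_of_norm_le_const (C := 2 * T) fun θ hθ => ?_).trans ?_
    · rw [uIoc_of_le hcd] at hθ
      have hθ' : θ ∈ Icc S.c S.d := ⟨hθ.1.le, hθ.2⟩
      rw [Real.norm_eq_abs, abs_mul, abs_mul, abs_of_nonneg (S.hζ0 θ hθ')]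
      calc _ ≤ 1 * (2 * T * 1) := by
            have := S.hζ1 θ hθ'
            have := S.hζ0 θ hθ'
            have := hBb (u (S.F.pt 1 t θ))
            have := S.F.abs_Xr_le u 1 t θ
            gcongr
        _ = _ := by ring
    · rw [abs_of_nonneg hdc]
  have cu := S.cont_u hu (ς := 1) (by norm_num) hsub
  have c1 : ContinuousOn (fun x : ℝ × ℝ => T * arctan (u (S.F.pt 1 x.1 x.2) / T))
      (Icc (-s) (-σ) ×ˢ Icc S.c S.d) := hBc.continuous.comp_continuousOn cu
  have c2 : ContinuousOn (fun x : ℝ × ℝ => 1 / (1 + (u (S.F.pt 1 x.1 x.2) / T) ^ 2))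
      (Icc (-s) (-σ) ×ˢ Icc S.c S.d) := by
    refine ContinuousOn.div₀ continuousOn_const
      (continuousOn_const.add ((cu.div_const T).pow 2)) fun x _ => by positivity
  have c3 := S.cont_gX hu (ς := 1) (by norm_num) hsub
  have c4 := S.cont_W hu (ς := 1) (by norm_num) hsub
  have c5 := S.cont_Xt hu (ς := 1) (by norm_num) hsub
  have cz : ContinuousOn (fun x : ℝ × ℝ => S.ζ x.2) (Icc (-s) (-σ) ×ˢ Icc S.c S.d) :=
    (S.hζ.continuous.comp continuous_snd).continuousOn
  have cz' : ContinuousOn (fun x : ℝ × ℝ => deriv S.ζ x.2) (Icc (-s) (-σ) ×ˢ Icc S.c S.d) :=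
    ((S.hζ.continuous_deriv (by norm_num)).comp continuous_snd).continuousOn
  have cR : ContinuousOn (fun x : ℝ × ℝ => S.F.R + x.1) (Icc (-s) (-σ) ×ˢ Icc S.c S.d) := by
    fun_prop
  set e := S.F.R / 2 + 2 * T + (1 + S.K) * (2 * T) with he
  have c6 := ((cR.mul cz).mul ((continuousOn_const (c := 2 * H)).mul c1 |>.add (c2.mul c3))).add
    (cz'.mul (c1.mul c5))
  have hm := dbl_mono (f := fun t θ => S.F.R / 2 * (S.ζ θ *
      (1 / (1 + (u (S.F.pt 1 t θ) / T) ^ 2) * Wgraph u (S.F.pt 1 t θ))))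
    (g := fun t θ => ((S.F.R + t) * S.ζ θ * (2 * H * (T * arctan (u (S.F.pt 1 t θ) / T))
      + 1 / (1 + (u (S.F.pt 1 t θ) / T) ^ 2) * gX u (S.F.pt 1 t θ))
      + deriv S.ζ θ * (T * arctan (u (S.F.pt 1 t θ) / T) * S.F.Xt u 1 t θ)) + e)
    hle hcd (continuousOn_const.mul (cz.mul (c2.mul c4))) (c6.add continuousOn_const)
    (by
      intro t ht θ hθ
      have r1 := (S.R_bounds (ς := 1) (by norm_num) (hsub ht)).1
      rw [one_mul] at r1
      have r2 : S.F.R + t ≤ S.F.R := by linarith [ht.2]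
      have z0 := S.hζ0 θ hθ
      have z1 := S.hζ1 θ hθ
      have z2 := S.dζ_le hθ
      have x2 := S.F.abs_Xt_le u 1 t θ
      have g0 : Wgraph u (S.F.pt 1 t θ) - 1 ≤ gX u (S.F.pt 1 t θ) := grad_dot_X u _
      have g1 : 0 ≤ gX u (S.F.pt 1 t θ) := grad_dot_X_nonneg u _
      have hb := hBb (u (S.F.pt 1 t θ))
      have b0 : 0 ≤ 1 / (1 + (u (S.F.pt 1 t θ) / T) ^ 2) := by positivity
      have b1 : 1 / (1 + (u (S.F.pt 1 t θ) / T) ^ 2) ≤ 1 := by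
        rw [div_le_one (by positivity)]; nlinarith [sq_nonneg (u (S.F.pt 1 t θ) / T)]
      generalize S.F.Xt u 1 t θ = xt at *
      generalize gX u (S.F.pt 1 t θ) = g at *
      generalize Wgraph u (S.F.pt 1 t θ) = W at *
      generalize 1 / (1 + (u (S.F.pt 1 t θ) / T) ^ 2) = b at *
      generalize T * arctan (u (S.F.pt 1 t θ) / T) = B at *
      generalize S.ζ θ = z at *
      generalize deriv S.ζ θ = z' at *
      generalize S.F.R + t = r at *
      have r0 : 0 ≤ r := by linarith
      have m1 : -(z' * (B * xt)) ≤ (1 + S.K) * (2 * T) := by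
        have : |z' * (B * xt)| ≤ (1 + S.K) * (2 * T * 1) := by
          rw [abs_mul, abs_mul]; gcongr
        linarith [neg_abs_le (z' * (B * xt))]
      have m2 : -(r * z * (2 * H * B)) ≤ 2 * T := by
        have : |r * z * (2 * H * B)| ≤ S.F.R * 1 * (2 * H * (2 * T)) := by
          rw [abs_mul, abs_mul, abs_mul, abs_of_nonneg r0, abs_of_nonneg z0, abs_of_pos hH]
          gcongr
        have e1 : S.F.R * 1 * (2 * H * (2 * T)) = 2 * T := by linear_combination 2 * T * hRH
        linarith [neg_abs_le (r * z * (2 * H * B))]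
      have m3 : S.F.R / 2 * (z * (b * W)) ≤ r * z * (b * g) + S.F.R / 2 := by
        have a1 : S.F.R / 2 * (z * (b * (W - 1))) ≤ S.F.R / 2 * (z * (b * g)) := by gcongr
        have a2 : S.F.R / 2 * (z * (b * g)) ≤ r * (z * (b * g)) := by gcongr
        have a3 : S.F.R / 2 * (z * b) ≤ S.F.R / 2 * (1 * 1) := by gcongr
        linarith
      rw [he]
      linarith)
  rw [dbl_add hle hcd c6 continuousOn_const, key, dbl_const] at hm
  simp only [intervalIntegral.integral_const_mul] at hm
  have f1 := hflux (-σ)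
  have f2 := hflux (-s)
  simp only [← mul_assoc] at f1 f2 hm ⊢
  set I := ∫ t in (-s)..(-σ), ∫ θ in S.c..S.d,
      S.ζ θ * (1 / (1 + (u (S.F.pt 1 t θ) / T) ^ 2)) * Wgraph u (S.F.pt 1 t θ) with hI
  generalize (∫ θ in S.c..S.d, S.ζ θ * T * arctan (u (S.F.pt 1 (-σ) θ) / T) * S.F.Xr u 1 (-σ) θ)
    = I1 at *
  generalize (∫ θ in S.c..S.d, S.ζ θ * T * arctan (u (S.F.pt 1 (-s) θ) / T) * S.F.Xr u 1 (-s) θ)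
    = I2 at *
  have hsR := S.hs0R
  have n1 : (S.F.R + -σ) * I1 ≤ S.F.R * (2 * T * (S.d - S.c)) := by
    have a1 : (S.F.R + -σ) * I1 ≤ (S.F.R + -σ) * (2 * T * (S.d - S.c)) :=
      mul_le_mul_of_nonneg_left (abs_le.1 f1).2 (by linarith)
    have a2 : (S.F.R + -σ) * (2 * T * (S.d - S.c)) ≤ S.F.R * (2 * T * (S.d - S.c)) :=
      mul_le_mul_of_nonneg_right (by linarith) (by positivity)
    linarith
  have n2 : -((S.F.R + -s) * I2) ≤ S.F.R * (2 * T * (S.d - S.c)) := by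
    have a1 : (S.F.R + -s) * (-I2) ≤ (S.F.R + -s) * (2 * T * (S.d - S.c)) :=
      mul_le_mul_of_nonneg_left (by linarith [(abs_le.1 f2).1]) (by linarith)
    have a2 : (S.F.R + -s) * (2 * T * (S.d - S.c)) ≤ S.F.R * (2 * T * (S.d - S.c)) :=
      mul_le_mul_of_nonneg_right (by linarith) (by positivity)
    linarith
  have he0 : 0 ≤ e := by rw [he]; positivity
  have n3 : (-σ - -s) * (S.d - S.c) * e ≤ S.s0 * (S.d - S.c) * e := by
    gcongr; linarith
  have n4 : e ≤ (S.F.R / 2 + 2 + (1 + S.K) * 2) * (T + 1) := by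
    rw [he]
    have : 0 ≤ S.F.R / 2 * T + 2 + (1 + S.K) * 2 := by positivity
    linarith
  have n5 : S.s0 * (S.d - S.c) * e
      ≤ S.s0 * (S.d - S.c) * ((S.F.R / 2 + 2 + (1 + S.K) * 2) * (T + 1)) := by gcongr
  have n6 : S.F.R / 2 * I ≤ (S.d - S.c) * (4 * S.F.R + S.s0 * (S.F.R / 2 + 2 + (1 + S.K) * 2))
      * (T + 1) := by
    have : 0 ≤ (S.d - S.c) * (4 * S.F.R) := by positivity
    linarith
  have n7 : I ≤ 2 / S.F.R * ((S.d - S.c) * (4 * S.F.R + S.s0 * (S.F.R / 2 + 2 + (1 + S.K) * 2))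
      * (T + 1)) := by
    have := mul_le_mul_of_nonneg_left n6 (show 0 ≤ 2 / S.F.R by positivity)
    have e3 : 2 / S.F.R * (S.F.R / 2 * I) = I := by field_simp
    linarith
  linarith

end Strip

/-! ### Logarithmic divergence of the area -/

namespace Strip

variable {H : ℝ} {Ω : Set (ℝ × ℝ)} (S : Strip H Ω)

/-- Lower bound of the weighted area at depth `x`, of order `1 / x`. -/
lemma area_lower {u : ℝ × ℝ → ℝ} (hu : IsCMCSolution H Ω u) {T lam x : ℝ}
    (hlam : 0 < lam) (hx : 0 < x) (hx0 : x ≤ S.s0) {Γ : ℝ} (hΓ : lam ^ 2 * Γ ≤ S.Z / 4)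
    (hy : S.y u (-x) ≤ Γ * x ^ 2)
    (hb : (∫ θ in S.c..S.d, S.ζ θ * (1 - 1 / (1 + (u (S.F.pt 1 (-x) θ) / T) ^ 2))) ≤ S.Z / 2) :
    lam * S.Z / 2 * x⁻¹ ≤ ∫ θ in S.c..S.d,
      S.ζ θ * (1 / (1 + (u (S.F.pt 1 (-x) θ) / T) ^ 2) * Wgraph u (S.F.pt 1 (-x) θ)) := by
  have hcd := S.hcd
  have hs0 := S.hs0
  have hsub : Icc (-S.s0) S.s0 ⊆ Icc (-S.s0) S.s0 := Subset.refl _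
  have hx' : -x ∈ Icc (-S.s0) S.s0 := ⟨by linarith, by linarith⟩
  have cu := S.cont_u hu (ς := 1) (by norm_num) hsub
  have c2 : ContinuousOn (fun x : ℝ × ℝ => 1 / (1 + (u (S.F.pt 1 x.1 x.2) / T) ^ 2))
      (Icc (-S.s0) S.s0 ×ˢ Icc S.c S.d) :=
    ContinuousOn.div₀ continuousOn_const
      (continuousOn_const.add ((cu.div_const T).pow 2)) fun x _ => by positivity
  have c4 := S.cont_W hu (ς := 1) (by norm_num) hsub
  have c5 := S.cont_Xr hu (ς := 1) (by norm_num) hsub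
  have cz : ContinuousOn (fun x : ℝ × ℝ => S.ζ x.2) (Icc (-S.s0) S.s0 ×ˢ Icc S.c S.d) :=
    (S.hζ.continuous.comp continuous_snd).continuousOn
  have i0 : IntervalIntegrable S.ζ volume S.c S.d := S.hζ.continuous.intervalIntegrable _ _
  have i1 := dbl_inner (g := fun t θ => S.ζ θ * (1 - 1 / (1 + (u (S.F.pt 1 t θ) / T) ^ 2))) hcd
    (cz.mul (continuousOn_const.sub c2)) hx'
  have i2 := dbl_inner (g := fun t θ => S.ζ θ * (1 - S.F.Xr u 1 t θ)) hcd
    (cz.mul (continuousOn_const.sub c5)) hx'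
  have i3 := dbl_inner (g := fun t θ => S.ζ θ * (1 / (1 + (u (S.F.pt 1 t θ) / T) ^ 2)
    * Wgraph u (S.F.pt 1 t θ))) hcd (cz.mul (c2.mul c4)) hx'
  set p := 3 * lam / (2 * x) with hp
  set r := lam ^ 3 / x ^ 3 with hr
  have hp0 : 0 < p := by positivity
  have hr0 : 0 < r := by positivity
  have h1 : (∫ θ in S.c..S.d, (p * S.ζ θ
      - p * (S.ζ θ * (1 - 1 / (1 + (u (S.F.pt 1 (-x) θ) / T) ^ 2)))
      - r * (S.ζ θ * (1 - S.F.Xr u 1 (-x) θ)))) ≤ ∫ θ in S.c..S.d,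
      S.ζ θ * (1 / (1 + (u (S.F.pt 1 (-x) θ) / T) ^ 2) * Wgraph u (S.F.pt 1 (-x) θ)) := by
    refine intervalIntegral.integral_mono_on hcd
      (((i0.const_mul p).sub (i1.const_mul p)).sub (i2.const_mul r)) i3 fun θ hθ => ?_
    have hW := S.F.W_lower u 1 (-x) θ (h := x / lam) (by positivity)
    have e1 : 3 / (2 * (x / lam)) = p := by rw [hp]; field_simp
    have e2 : (1 - S.F.Xr u 1 (-x) θ) / (x / lam) ^ 3 = r * (1 - S.F.Xr u 1 (-x) θ) := by
      rw [hr]; field_simp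
    rw [e1, e2] at hW
    have x0 := S.F.Xr_le u 1 (-x) θ
    have z0 := S.hζ0 θ hθ
    have b0 : 0 ≤ 1 / (1 + (u (S.F.pt 1 (-x) θ) / T) ^ 2) := by positivity
    have b1 : 1 / (1 + (u (S.F.pt 1 (-x) θ) / T) ^ 2) ≤ 1 := by
      rw [div_le_one (by positivity)]; nlinarith [sq_nonneg (u (S.F.pt 1 (-x) θ) / T)]
    generalize 1 / (1 + (u (S.F.pt 1 (-x) θ) / T) ^ 2) = b at *
    generalize Wgraph u (S.F.pt 1 (-x) θ) = W at *
    generalize S.F.Xr u 1 (-x) θ = xr at *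
    generalize S.ζ θ = z at *
    have a1 : z * (b * (p - r * (1 - xr))) ≤ z * (b * W) := by gcongr
    have a2 : 0 ≤ z * ((1 - b) * (r * (1 - xr))) :=
      mul_nonneg z0 (mul_nonneg (by linarith) (mul_nonneg hr0.le (by linarith)))
    linarith
  rw [intervalIntegral.integral_sub ((i0.const_mul p).sub (i1.const_mul p)) (i2.const_mul r),
    intervalIntegral.integral_sub (i0.const_mul p) (i1.const_mul p),
    intervalIntegral.integral_const_mul, intervalIntegral.integral_const_mul,
    intervalIntegral.integral_const_mul] at h1
  refine le_trans ?_ h1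
  change _ ≤ p * S.Z - p * _ - r * S.y u (-x)
  have k1 := mul_le_mul_of_nonneg_left hb hp0.le
  have k2 := mul_le_mul_of_nonneg_left hy hr0.le
  have k3 : r * (Γ * x ^ 2) = lam * x⁻¹ * (lam ^ 2 * Γ) := by rw [hr]; field_simp
  have k4 : lam * x⁻¹ * (lam ^ 2 * Γ) ≤ lam * x⁻¹ * (S.Z / 4) :=
    mul_le_mul_of_nonneg_left hΓ (by positivity)
  have k5 : p = 3 / 2 * (lam * x⁻¹) := by rw [hp]; field_simp
  rw [k5] at k1 ⊢
  linarith

/-- In a fixed strip, the deficit on the reference circle of a solution cannot be arbitrarily small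
if the solution takes only a small proportion of large values on both sides of it. The weighted
area of the inner part of depth between `σ` and `s` is at least a constant times `log (s / σ)`,
whereas it is bounded independently of `σ`. -/
lemma strip_final {m : ℝ} (hm : 0 ≤ m) : ∃ ε0 : ℝ, 0 < ε0 ∧ ∃ T0 : ℝ, 0 < T0 ∧ ∀ T : ℝ, T0 ≤ T →
    ∃ η : ℝ, 0 < η ∧ ∀ u, IsCMCSolution H Ω u →
      (∀ ς : ℝ, ς ^ 2 = 1 → (∫ t in (0 : ℝ)..S.s0, ∫ θ in S.c..S.d,
        betaF ς m T (u (S.F.pt ς t θ))) ≤ ε0) → η < S.y u 0 := by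
  have hs0 := S.hs0
  have hR := S.F.hR
  have hcd := S.hcd
  have hK := S.hK0
  have hZ : 0 < S.Z := S.hZ
  have hdc : 0 ≤ S.d - S.c := by linarith
  obtain ⟨C3, hC3, harea⟩ := S.area_bound
  set A2 := S.C2 / (S.F.R * S.s0 / 4) with hA2
  have hA20 : 0 < A2 := by
    have : 0 < S.C2 := by unfold C2; positivity
    positivity
  set Γ := 4 + 8 * S.K * (S.d - S.c) / S.F.R ^ 2 with hΓ
  have hΓ0 : 0 < Γ := by positivity
  -- the outer depth
  obtain ⟨s, hs, hs1, hs2, hs3⟩ : ∃ s : ℝ, 0 < s ∧ s ≤ S.s0 / 2 ∧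
      8 * A2 * (s * (S.d - S.c)) ≤ S.Z / 8 ∧ 8 * (Γ * s ^ 2) ≤ S.Z / 8 := by
    set s := min (min (S.s0 / 2) 1) (min (S.Z / (64 * A2 * (S.d - S.c) + 1)) (S.Z / (64 * Γ)))
    have q1 : s ≤ S.s0 / 2 := (min_le_left _ _).trans (min_le_left _ _)
    have q2 : s ≤ 1 := (min_le_left _ _).trans (min_le_right _ _)
    have q3 : s ≤ S.Z / (64 * A2 * (S.d - S.c) + 1) := (min_le_right _ _).trans (min_le_left _ _)
    have q4 : s ≤ S.Z / (64 * Γ) := (min_le_right _ _).trans (min_le_right _ _)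
    have q0 : 0 < s := by
      apply lt_min (lt_min (by linarith) one_pos) (lt_min _ _) <;> positivity
    refine ⟨s, q0, q1, ?_, ?_⟩
    · rw [le_div_iff₀ (by positivity)] at q3
      linarith
    · rw [le_div_iff₀ (by positivity)] at q4
      have : s ^ 2 ≤ s := by nlinarith
      have := mul_le_mul_of_nonneg_left this hΓ0.le
      linarith
  obtain ⟨lam, hlam, hlamΓ⟩ : ∃ lam : ℝ, 0 < lam ∧ lam ^ 2 * Γ ≤ S.Z / 4 := by
    refine ⟨Real.sqrt (S.Z / (4 * Γ)), by positivity, ?_⟩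
    rw [Real.sq_sqrt (by positivity)]
    apply le_of_eq; field_simp
  refine ⟨S.Z / (64 * A2), by positivity, 6 * m + 1, by positivity, ?_⟩
  intro T hT
  have hT0 : 0 < T := by linarith
  -- the inner depth
  set E := 2 * C3 * (T + 1) / (lam * S.Z) + 1 with hE
  set σ := s * Real.exp (-E) with hσ
  have hE0 : 0 < E := by positivity
  have hσ0 : 0 < σ := by positivity
  have hσs : σ ≤ s := by
    have : Real.exp (-E) ≤ 1 := Real.exp_le_one_iff.2 (by linarith)
    nlinarith
  refine ⟨σ ^ 2, by positivity, fun u hu hΦ => ?_⟩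
  by_contra hc
  push Not at hc
  have hy : ∀ x ∈ Icc σ s, S.y u (-x) ≤ Γ * x ^ 2 := by
    intro x hx
    have hx0 : 0 < x := by linarith [hx.1]
    have h1 := S.y_bound hu hx0 (by linarith [hx.2]) x ⟨hx0.le, le_rfl⟩
    have h2 : σ ^ 2 ≤ x ^ 2 := by have := hx.1; gcongr
    rw [hΓ]; linarith
  have hb : ∀ x ∈ Icc σ s,
      (∫ θ in S.c..S.d, S.ζ θ * (1 - 1 / (1 + (u (S.F.pt 1 (-x) θ) / T) ^ 2))) ≤ S.Z / 2 := by
    intro x hx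
    have hx0 : 0 < x := by linarith [hx.1]
    have hmass : ∀ ς : ℝ, ς ^ 2 = 1 →
        (∫ θ in S.c..S.d, S.ζ θ * betaF ς m T (u (S.F.pt 1 (-x) θ)))
          ≤ A2 * (s * (S.d - S.c) + S.Z / (64 * A2)) + Γ * s ^ 2 := by
      intro ς hς
      have hs' : -(ς * x) ∈ Icc (-s) s := by
        have : |-(ς * x)| ≤ s := by
          rw [abs_neg, abs_mul, abs_le_of_sq hς, one_mul, abs_of_pos hx0]; exact hx.2
        exact abs_le.1 this
      have h1 := S.mass_bound hu hς (contDiff_betaF ς m T) (fun v => psi_nonneg _)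
        (fun v => psi_le_one _) (fun v => by
          rw [(hasDerivAt_betaF ς m T v).deriv]
          have e : ς * (deriv psi ((ς * v - m) / T) * (ς / T))
              = deriv psi ((ς * v - m) / T) * (1 / T) := by
            linear_combination deriv psi ((ς * v - m) / T) * (1 / T) * hς
          rw [e]
          exact mul_nonneg (deriv_psi_nonneg _) (by positivity)) hs1 hs'
      have e : ς * -(ς * x) = -x := by linear_combination -x * hς
      simp only [S.F.pt_sign ς (-(ς * x)), e] at h1
      rw [← hA2] at h1
      have h2 : Γ * x ^ 2 ≤ Γ * s ^ 2 := by have := hx.2; gcongr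
      have h3 := hy x hx
      have h4 := mul_le_mul_of_nonneg_left (add_le_add_right (hΦ ς hς) (s * (S.d - S.c))) hA20.le
      linarith
    have hsub : Icc (-S.s0) S.s0 ⊆ Icc (-S.s0) S.s0 := Subset.refl _
    have hx' : -x ∈ Icc (-S.s0) S.s0 := ⟨by linarith [hx.2], by linarith⟩
    have cu := S.cont_u hu (ς := 1) (by norm_num) hsub
    have cz : ContinuousOn (fun x : ℝ × ℝ => S.ζ x.2) (Icc (-S.s0) S.s0 ×ˢ Icc S.c S.d) :=
      (S.hζ.continuous.comp continuous_snd).continuousOn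
    have c2 : ContinuousOn (fun x : ℝ × ℝ => 1 / (1 + (u (S.F.pt 1 x.1 x.2) / T) ^ 2))
        (Icc (-S.s0) S.s0 ×ˢ Icc S.c S.d) :=
      ContinuousOn.div₀ continuousOn_const
        (continuousOn_const.add ((cu.div_const T).pow 2)) fun x _ => by positivity
    have i0 : IntervalIntegrable S.ζ volume S.c S.d := S.hζ.continuous.intervalIntegrable _ _
    have i1 := dbl_inner (g := fun t θ => S.ζ θ * (1 - 1 / (1 + (u (S.F.pt 1 t θ) / T) ^ 2))) hcd
      (cz.mul (continuousOn_const.sub c2)) hx'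
    have i2 : ∀ ς, IntervalIntegrable (fun θ => S.ζ θ * betaF ς m T (u (S.F.pt 1 (-x) θ)))
        volume S.c S.d := fun ς =>
      dbl_inner (g := fun t θ => S.ζ θ * betaF ς m T (u (S.F.pt 1 t θ))) hcd
        (cz.mul ((contDiff_betaF ς m T).continuous.comp_continuousOn cu)) hx'
    have h1 : (∫ θ in S.c..S.d, S.ζ θ * (1 - 1 / (1 + (u (S.F.pt 1 (-x) θ) / T) ^ 2)))
        ≤ ∫ θ in S.c..S.d, (4 * (S.ζ θ * betaF 1 m T (u (S.F.pt 1 (-x) θ)))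
          + 4 * (S.ζ θ * betaF (-1) m T (u (S.F.pt 1 (-x) θ))) + 4 * m ^ 2 / T ^ 2 * S.ζ θ) := by
      refine intervalIntegral.integral_mono_on hcd i1
        ((((i2 1).const_mul 4).add ((i2 (-1)).const_mul 4)).add (i0.const_mul _)) fun θ hθ => ?_
      have h2 := mul_le_mul_of_nonneg_left (one_sub_b_le hm hT0 (u (S.F.pt 1 (-x) θ)))
        (S.hζ0 θ hθ)
      linarith
    rw [intervalIntegral.integral_add (((i2 1).const_mul 4).add ((i2 (-1)).const_mul 4))
      (i0.const_mul _), intervalIntegral.integral_add ((i2 1).const_mul 4) ((i2 (-1)).const_mul 4),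
      intervalIntegral.integral_const_mul, intervalIntegral.integral_const_mul,
      intervalIntegral.integral_const_mul] at h1
    have h3 : 4 * m ^ 2 / T ^ 2 * S.Z ≤ S.Z / 8 := by
      have : 4 * m ^ 2 / T ^ 2 ≤ 1 / 8 := by
        rw [div_le_div_iff₀ (by positivity) (by norm_num)]
        nlinarith
      nlinarith
    have h4 := hmass 1 (by norm_num)
    have h5 := hmass (-1) (by norm_num)
    have h6 : A2 * (s * (S.d - S.c) + S.Z / (64 * A2)) = A2 * (s * (S.d - S.c)) + S.Z / 64 := by
      field_simp
    rw [h6] at h4 h5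
    have h7 : (∫ θ in S.c..S.d, S.ζ θ) = S.Z := rfl
    rw [h7] at h1
    linarith
  have hlow : ∀ x ∈ Icc σ s, _ := fun x hx => S.area_lower hu hlam
    (by linarith [hx.1]) (by linarith [hx.2]) hlamΓ (hy x hx) (hb x hx)
  have hup := harea u hu T hT0 σ s hσ0 hσs (by linarith)
  -- integrate the lower bound over the depths between `σ` and `s`
  have hcont : ContinuousOn (fun t => ∫ θ in S.c..S.d,
      S.ζ θ * (1 / (1 + (u (S.F.pt 1 t θ) / T) ^ 2) * Wgraph u (S.F.pt 1 t θ)))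
      (Icc (-S.s0) S.s0) := by
    have hsub : Icc (-S.s0) S.s0 ⊆ Icc (-S.s0) S.s0 := Subset.refl _
    have cu := S.cont_u hu (ς := 1) (by norm_num) hsub
    have cz : ContinuousOn (fun x : ℝ × ℝ => S.ζ x.2) (Icc (-S.s0) S.s0 ×ˢ Icc S.c S.d) :=
      (S.hζ.continuous.comp continuous_snd).continuousOn
    have c2 : ContinuousOn (fun x : ℝ × ℝ => 1 / (1 + (u (S.F.pt 1 x.1 x.2) / T) ^ 2))
        (Icc (-S.s0) S.s0 ×ˢ Icc S.c S.d) :=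
      ContinuousOn.div₀ continuousOn_const
        (continuousOn_const.add ((cu.div_const T).pow 2)) fun x _ => by positivity
    exact dbl_cont (g := fun t θ => S.ζ θ * (1 / (1 + (u (S.F.pt 1 t θ) / T) ^ 2) *
      Wgraph u (S.F.pt 1 t θ))) (by linarith) hcd
      (cz.mul (c2.mul (S.cont_W hu (ς := 1) (by norm_num) hsub)))
  have e1 := intervalIntegral.integral_comp_neg (a := σ) (b := s) (fun t => ∫ θ in S.c..S.d,
      S.ζ θ * (1 / (1 + (u (S.F.pt 1 t θ) / T) ^ 2) * Wgraph u (S.F.pt 1 t θ)))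
  rw [← e1] at hup
  have e2 : (∫ x in σ..s, lam * S.Z / 2 * x⁻¹) = lam * S.Z / 2 * E := by
    rw [intervalIntegral.integral_const_mul, integral_inv_of_pos hσ0 hs]
    have : s / σ = Real.exp E := by
      rw [hσ, Real.exp_neg]; field_simp
    rw [this, Real.log_exp]
  have h1 : (∫ x in σ..s, lam * S.Z / 2 * x⁻¹) ≤ ∫ x in σ..s, ∫ θ in S.c..S.d,
      S.ζ θ * (1 / (1 + (u (S.F.pt 1 (-x) θ) / T) ^ 2) * Wgraph u (S.F.pt 1 (-x) θ)) := by
    refine intervalIntegral.integral_mono_on hσs ?_ ?_ hlow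
    · apply ContinuousOn.intervalIntegrable
      rw [uIcc_of_le hσs]
      refine continuousOn_const.mul (continuousOn_id.inv₀ fun x hx => ?_)
      have : 0 < x := by linarith [hx.1]
      exact this.ne'
    · apply ContinuousOn.intervalIntegrable
      rw [uIcc_of_le hσs]
      exact hcont.comp (f := fun x => -x) (by fun_prop)
        (fun x hx => ⟨by linarith [hx.2], by linarith [hx.1]⟩)
  rw [e2] at h1
  have e3 : lam * S.Z / 2 * E = C3 * (T + 1) + lam * S.Z / 2 := by
    rw [hE]; field_simp
  have : 0 < lam * S.Z / 2 := by positivity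
  linarith

end Strip

/-! ### The test field at a corner -/

section Dvg

variable {f Y₁ Y₂ Z₁ Z₂ : ℝ × ℝ → ℝ} {q : ℝ × ℝ}

lemma dvg_mul (hf : DifferentiableAt ℝ f q) (h1 : DifferentiableAt ℝ Z₁ q)
    (h2 : DifferentiableAt ℝ Z₂ q) :
    dvg (fun x => f x * Z₁ x) (fun x => f x * Z₂ x) q
      = f q * dvg Z₁ Z₂ q + (fderiv ℝ f q (1, 0) * Z₁ q + fderiv ℝ f q (0, 1) * Z₂ q) := by
  unfold dvg
  rw [fderiv_fun_mul hf h1, fderiv_fun_mul hf h2]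
  simp only [add_apply, smul_apply, smul_eq_mul]
  ring

lemma dvg_add (h1 : DifferentiableAt ℝ Y₁ q) (h2 : DifferentiableAt ℝ Y₂ q)
    (h3 : DifferentiableAt ℝ Z₁ q) (h4 : DifferentiableAt ℝ Z₂ q) :
    dvg (fun x => Y₁ x + Z₁ x) (fun x => Y₂ x + Z₂ x) q = dvg Y₁ Y₂ q + dvg Z₁ Z₂ q := by
  unfold dvg
  rw [fderiv_fun_add h1 h3, fderiv_fun_add h2 h4]
  simp only [add_apply]
  ring

lemma fderiv_comp_real {φ : ℝ → ℝ} {φ' : ℝ} (hφ : HasDerivAt φ φ' (f q))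
    (hf : DifferentiableAt ℝ f q) (v : ℝ × ℝ) :
    fderiv ℝ (fun x => φ (f x)) q v = φ' * fderiv ℝ f q v := by
  have h := hφ.comp_hasFDerivAt q hf.hasFDerivAt
  have h2 : fderiv ℝ (fun x => φ (f x)) q = φ' • fderiv ℝ f q := h.fderiv
  rw [h2]; rfl

end Dvg

/-- Squared Euclidean distance to `A`. -/
def sqd (A x : ℝ × ℝ) : ℝ := (x.1 - A.1) ^ 2 + (x.2 - A.2) ^ 2

lemma contDiff_sqd (A : ℝ × ℝ) : ContDiff ℝ 1 (sqd A) := by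
  unfold sqd; fun_prop

lemma fderiv_sqd (A q v : ℝ × ℝ) :
    fderiv ℝ (sqd A) q v = 2 * (q.1 - A.1) * v.1 + 2 * (q.2 - A.2) * v.2 := by
  have h1 : HasFDerivAt (fun x : ℝ × ℝ => x.1 - A.1) (ContinuousLinearMap.fst ℝ ℝ ℝ) q :=
    hasFDerivAt_fst.sub_const _
  have h2 : HasFDerivAt (fun x : ℝ × ℝ => x.2 - A.2) (ContinuousLinearMap.snd ℝ ℝ ℝ) q :=
    hasFDerivAt_snd.sub_const _
  have h3 := (h1.pow 2).add (h2.pow 2)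
  have h4 : fderiv ℝ (sqd A) q = _ := h3.fderiv
  rw [h4]
  simp [mul_assoc]

lemma dvg_sub_const (A q : ℝ × ℝ) : dvg (fun x => x.1 - A.1) (fun x => x.2 - A.2) q = 2 := by
  have h1 : HasFDerivAt (fun x : ℝ × ℝ => x.1 - A.1) (ContinuousLinearMap.fst ℝ ℝ ℝ) q :=
    hasFDerivAt_fst.sub_const _
  have h2 : HasFDerivAt (fun x : ℝ × ℝ => x.2 - A.2) (ContinuousLinearMap.snd ℝ ℝ ℝ) q :=
    hasFDerivAt_snd.sub_const _
  unfold dvg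
  rw [h1.fderiv, h2.fderiv]
  norm_num

/-- The radial cut-off `((|x - A|² - e)⁺)²`. -/
def chi (A : ℝ × ℝ) (e : ℝ) (x : ℝ × ℝ) : ℝ := max (sqd A x - e) 0 ^ 2

lemma contDiff_chi (A : ℝ × ℝ) (e : ℝ) : ContDiff ℝ 1 (chi A e) :=
  contDiff_max_sq.comp ((contDiff_sqd A).sub contDiff_const)

lemma chi_nonneg (A : ℝ × ℝ) (e : ℝ) (x : ℝ × ℝ) : 0 ≤ chi A e x := sq_nonneg _

lemma fderiv_chi (A : ℝ × ℝ) (e : ℝ) (q v : ℝ × ℝ) :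
    fderiv ℝ (chi A e) q v = 2 * max (sqd A q - e) 0 * fderiv ℝ (sqd A) q v := by
  have hd : DifferentiableAt ℝ (sqd A) q := (contDiff_sqd A).differentiable (by norm_num) q
  have h : HasDerivAt (fun s : ℝ => max (s - e) 0 ^ 2) (2 * max (sqd A q - e) 0) (sqd A q) := by
    have h1 := (hasDerivAt_max_sq (sqd A q - e)).comp (sqd A q) ((hasDerivAt_id _).sub_const e)
    exact h1.congr_deriv (mul_one _)
  exact fderiv_comp_real h hd v

lemma hasDerivAt_inv_sqrt {s : ℝ} (hs : 0 < s) :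
    HasDerivAt (fun s => (Real.sqrt s)⁻¹) (-(1 / (2 * Real.sqrt s)) / Real.sqrt s ^ 2) s := by
  have h := (Real.hasDerivAt_sqrt hs.ne').inv (Real.sqrt_pos.2 hs).ne'
  exact h

lemma contDiffAt_inv_rho {A q : ℝ × ℝ} (hq : 0 < sqd A q) :
    ContDiffAt ℝ 1 (fun x => (Real.sqrt (sqd A x))⁻¹) q := by
  have h1 : ContDiffAt ℝ 1 (fun x => Real.sqrt (sqd A x)) q :=
    (contDiff_sqd A).contDiffAt.sqrt hq.ne'
  exact h1.inv (Real.sqrt_pos.2 hq).ne'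

lemma dvg_unit {A q : ℝ × ℝ} (hq : 0 < sqd A q) :
    dvg (fun x => (Real.sqrt (sqd A x))⁻¹ * (x.1 - A.1))
      (fun x => (Real.sqrt (sqd A x))⁻¹ * (x.2 - A.2)) q = 1 / Real.sqrt (sqd A q) := by
  have hd : DifferentiableAt ℝ (sqd A) q := (contDiff_sqd A).differentiable (by norm_num) q
  rw [dvg_mul ((contDiffAt_inv_rho hq).differentiableAt (by norm_num)) (by fun_prop) (by fun_prop),
    dvg_sub_const, fderiv_comp_real (hasDerivAt_inv_sqrt hq) hd,
    fderiv_comp_real (hasDerivAt_inv_sqrt hq) hd, fderiv_sqd, fderiv_sqd]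
  have h1 : 0 < Real.sqrt (sqd A q) := Real.sqrt_pos.2 hq
  have h2 : Real.sqrt (sqd A q) ^ 2 = (q.1 - A.1) ^ 2 + (q.2 - A.2) ^ 2 := Real.sq_sqrt hq.le
  field_simp
  rw [h2]
  ring

section Field

variable {H : ℝ} {Ω : Set (ℝ × ℝ)} {u : ℝ × ℝ → ℝ} {q A : ℝ × ℝ}

/-- First component of `β(u) (e_A + ς X)`, where `e_A` is the unit radial field from `A`. -/
def Za (β : ℝ → ℝ) (u : ℝ × ℝ → ℝ) (A : ℝ × ℝ) (ς : ℝ) (x : ℝ × ℝ) : ℝ :=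
  β (u x) * ((Real.sqrt (sqd A x))⁻¹ * (x.1 - A.1)) + ς * (β (u x) * Xa u x)

/-- Second component of `β(u) (e_A + ς X)`. -/
def Zb (β : ℝ → ℝ) (u : ℝ × ℝ → ℝ) (A : ℝ × ℝ) (ς : ℝ) (x : ℝ × ℝ) : ℝ :=
  β (u x) * ((Real.sqrt (sqd A x))⁻¹ * (x.2 - A.2)) + ς * (β (u x) * Xb u x)

lemma contDiffAt_Z (hΩ : IsOpen Ω) (hu : IsCMCSolution H Ω u) (hq : q ∈ Ω) {β : ℝ → ℝ}
    (hβ : ContDiff ℝ 1 β) (ς : ℝ) (hA : 0 < sqd A q) :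
    ContDiffAt ℝ 1 (Za β u A ς) q ∧ ContDiffAt ℝ 1 (Zb β u A ς) q := by
  have h1 : ContDiffAt ℝ 1 (fun x => β (u x)) q :=
    hβ.contDiffAt.comp q ((cmc_contDiffAt hΩ hu hq).of_le (by norm_num))
  have h2 := contDiffAt_inv_rho hA
  exact ⟨(h1.mul (h2.mul (by fun_prop))).add (contDiffAt_const.mul (cmc_comp_Xa hΩ hu hq hβ)),
    (h1.mul (h2.mul (by fun_prop))).add (contDiffAt_const.mul (cmc_comp_Xb hΩ hu hq hβ))⟩

lemma dvg_Z (hΩ : IsOpen Ω) (hu : IsCMCSolution H Ω u) (hq : q ∈ Ω) {β : ℝ → ℝ}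
    (hβ : ContDiff ℝ 1 β) (ς : ℝ) (hA : 0 < sqd A q) :
    dvg (Za β u A ς) (Zb β u A ς) q
      = β (u q) * (1 / Real.sqrt (sqd A q))
        + deriv β (u q) * (pdx u q * ((Real.sqrt (sqd A q))⁻¹ * (q.1 - A.1))
          + pdy u q * ((Real.sqrt (sqd A q))⁻¹ * (q.2 - A.2)))
        + ς * (2 * H * β (u q) + deriv β (u q) * gX u q) := by
  have hud : DifferentiableAt ℝ u q := (cmc_contDiffAt hΩ hu hq).differentiableAt (by norm_num)
  have hβd : HasDerivAt β (deriv β (u q)) (u q) := (hβ.differentiable (by norm_num) _).hasDerivAt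
  have h1 : DifferentiableAt ℝ (fun x => β (u x)) q :=
    DifferentiableAt.comp q (hβ.differentiable (by norm_num) _) hud
  have h2 := (contDiffAt_inv_rho hA).differentiableAt (n := 1) (by norm_num)
  have h3 : DifferentiableAt ℝ (fun x : ℝ × ℝ => (Real.sqrt (sqd A x))⁻¹ * (x.1 - A.1)) q :=
    h2.mul (by fun_prop)
  have h4 : DifferentiableAt ℝ (fun x : ℝ × ℝ => (Real.sqrt (sqd A x))⁻¹ * (x.2 - A.2)) q :=
    h2.mul (by fun_prop)
  have h5 := (cmc_comp_Xa hΩ hu hq hβ).differentiableAt (n := 1) (by norm_num)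
  have h6 := (cmc_comp_Xb hΩ hu hq hβ).differentiableAt (n := 1) (by norm_num)
  have e1 : dvg (Za β u A ς) (Zb β u A ς) q = _ := dvg_add (h1.mul h3) (h1.mul h4)
    ((differentiableAt_const ς).mul h5) ((differentiableAt_const ς).mul h6)
  rw [e1, dvg_mul h1 h3 h4, dvg_mul (differentiableAt_const ς) h5 h6, dvg_unit hA,
    cmc_dvg_comp hΩ hu hq hβ, fderiv_comp_real hβd hud, fderiv_comp_real hβd hud]
  simp only [fderiv_fun_const, Pi.zero_apply, zero_apply, zero_mul,
    add_zero, gX, pdx, pdy]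
  ring

/-- The key inequality: the test field `χ β(u) (e_A + ς X)` has a divergence bounded below by
`2 H χ β(u)`, up to an error of order `1 / T`. -/
lemma dvg_lower (hH : 0 < H) (hΩ : IsOpen Ω) (hu : IsCMCSolution H Ω u) (hq : q ∈ Ω)
    {ς m T e Θ : ℝ} (hς : ς ^ 2 = 1) (hT : 0 < T) (hA : 0 < sqd A q)
    (hΘ : max (sqd A q - e) 0 ≤ Θ) (hρ : 4 * H * Real.sqrt (sqd A q) ≤ 1) :
    2 * H * (chi A e q * betaF ς m T (u q)) - Θ ^ 2 / T
      ≤ dvg (fun x => chi A e x * Za (betaF ς m T) u A ς x)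
          (fun x => chi A e x * Zb (betaF ς m T) u A ς x) q := by
  have hβ := contDiff_betaF ς m T
  obtain ⟨c1, c2⟩ := contDiffAt_Z hΩ hu hq hβ ς hA
  rw [dvg_mul ((contDiff_chi A e).differentiable (by norm_num) q)
    (c1.differentiableAt (by norm_num)) (c2.differentiableAt (by norm_num)),
    dvg_Z hΩ hu hq hβ ς hA, fderiv_chi, fderiv_chi, fderiv_sqd, fderiv_sqd,
    (hasDerivAt_betaF ς m T (u q)).deriv]
  simp only [Za, Zb]
  have hm0 : 0 ≤ max (sqd A q - e) 0 := le_max_right _ _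
  have hb0 : 0 ≤ betaF ς m T (u q) := psi_nonneg _
  have hp0 := deriv_psi_nonneg ((ς * u q - m) / T)
  have hp1 := deriv_psi_le ((ς * u q - m) / T)
  have hgX : Wgraph u q - 1 ≤ gX u q := grad_dot_X u q
  have hX := (X_lt_one u q).le
  have hW := Wgraph_sq u q
  have hW0 := Wgraph_pos u q
  have hs : Real.sqrt (sqd A q) ^ 2 = (q.1 - A.1) ^ 2 + (q.2 - A.2) ^ 2 := Real.sq_sqrt hA.le
  have hs0 : 0 < Real.sqrt (sqd A q) := Real.sqrt_pos.2 hA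
  have hχ : chi A e q = max (sqd A q - e) 0 ^ 2 := rfl
  rw [hχ]
  generalize betaF ς m T (u q) = b at *
  generalize max (sqd A q - e) 0 = τ at *
  generalize deriv psi ((ς * u q - m) / T) = p at *
  generalize gX u q = g at *
  generalize Wgraph u q = W at *
  generalize Real.sqrt (sqd A q) = ρ at *
  generalize Xa u q = X1 at *
  generalize Xb u q = X2 at *
  generalize pdx u q = u1 at *
  generalize pdy u q = u2 at *
  obtain ⟨e1, he1⟩ : ∃ e1, e1 = ρ⁻¹ * (q.1 - A.1) := ⟨_, rfl⟩
  obtain ⟨e2, he2⟩ : ∃ e2, e2 = ρ⁻¹ * (q.2 - A.2) := ⟨_, rfl⟩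
  have k1 : q.1 - A.1 = ρ * e1 := by rw [he1]; field_simp
  have k2 : q.2 - A.2 = ρ * e2 := by rw [he2]; field_simp
  rw [← he1, ← he2, k1, k2]
  have hee : e1 ^ 2 + e2 ^ 2 = 1 := by
    rw [k1, k2] at hs
    have : ρ ^ 2 * (e1 ^ 2 + e2 ^ 2) = ρ ^ 2 * 1 := by linarith
    exact mul_left_cancel₀ (by positivity) this
  -- the term carrying the gradient of the cut-off
  have t1 : 0 ≤ 1 + ς * (e1 * X1 + e2 * X2) := by
    have h1 : (ς * (e1 * X1 + e2 * X2)) ^ 2 ≤ 1 := by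
      rw [mul_pow, hς]
      nlinarith [sq_nonneg (e1 * X2 - e2 * X1)]
    have h2 := (abs_le_of_sq_le_sq' (h1.trans_eq (one_pow 2).symm) zero_le_one).1
    linarith
  have t2 : 0 ≤ 4 * τ * ρ * b * (1 + ς * (e1 * X1 + e2 * X2)) := by positivity
  -- the term carrying the gradient of `u`
  have t3 : -1 ≤ ς * (u1 * e1 + u2 * e2) + g := by
    have h1 : (ς * (u1 * e1 + u2 * e2)) ^ 2 ≤ W ^ 2 := by
      rw [mul_pow, hς, hW]
      nlinarith [sq_nonneg (u1 * e2 - u2 * e1)]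
    have := (abs_le_of_sq_le_sq' h1 hW0.le).1
    linarith
  have t4 : -(Θ ^ 2 / T) ≤ τ ^ 2 * (p / T) * (ς * (u1 * e1 + u2 * e2) + g) := by
    have h1 : τ ^ 2 * (p / T) ≤ Θ ^ 2 * (1 / T) := by gcongr
    have h2 : 0 ≤ τ ^ 2 * (p / T) := by positivity
    have h3 : Θ ^ 2 / T = Θ ^ 2 * (1 / T) := by ring
    have h4 := mul_le_mul_of_nonneg_left t3 h2
    linarith
  have t5 : 2 * H ≤ 1 / ρ + ς * (2 * H) := by
    have h1 : 4 * H ≤ 1 / ρ := by rw [le_div_iff₀ hs0]; exact hρ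
    have h2 : -1 ≤ ς := 
      (abs_le_of_sq_le_sq' (hς.trans (one_pow 2).symm).le zero_le_one).1
    have h3 := mul_le_mul_of_nonneg_right h2 (show 0 ≤ 2 * H by linarith)
    linarith
  have t6 := mul_le_mul_of_nonneg_left t5 (show 0 ≤ τ ^ 2 * b by positivity)
  have hdiv : ς / T = ς * (1 / T) := by ring
  have e3 : τ ^ 2 * (b * (1 / ρ) + p * (ς / T) * (u1 * e1 + u2 * e2)
        + ς * (2 * H * b + p * (ς / T) * g))
      + (2 * τ * (2 * (ρ * e1) * 1 + 2 * (ρ * e2) * 0) * (b * e1 + ς * (b * X1))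
        + 2 * τ * (2 * (ρ * e1) * 0 + 2 * (ρ * e2) * 1) * (b * e2 + ς * (b * X2)))
      = τ ^ 2 * b * (1 / ρ + ς * (2 * H)) + τ ^ 2 * (p / T) * (ς * (u1 * e1 + u2 * e2) + g)
        + 4 * τ * ρ * b * (1 + ς * (e1 * X1 + e2 * X2)) := by
    linear_combination τ ^ 2 * (p / T) * g * hς + 4 * τ * ρ * b * hee
  rw [e3]
  linarith

end Field

/-! ### Geometry of the corner -/

/-- In a corner of opening `< π` between a circle and a supporting circle, the linear form
`ς n₂ a + (1 - ς n₁) b` controls the distance to the vertex. -/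
lemma corner_geo {a b n1 n2 R ρ0 ς : ℝ} (hn : n1 ^ 2 + n2 ^ 2 = 1) (hn2 : 0 < n2) (hR : 0 < R)
    (hς : ς ^ 2 = 1) (hρ : ρ0 ≤ R * n2 / 50) (hρ0 : 0 < ρ0) (hN : a ^ 2 + b ^ 2 ≤ ρ0 ^ 2)
    (hB : a ^ 2 + b ^ 2 ≤ 2 * R * (n1 * a + n2 * b))
    (hbox : 0 ≤ ς * (2 * R * a + (a ^ 2 + b ^ 2))) :
    0 ≤ ς * n2 * a + (1 - ς * n1) * b ∧
      (1 - ς * n1) ^ 2 * (a ^ 2 + b ^ 2) ≤ 1.0816 * (ς * n2 * a + (1 - ς * n1) * b) ^ 2 := by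
  have hς1 := abs_le_of_sq_le_sq' (hς.trans (one_pow 2).symm).le zero_le_one
  have hk0 : 0 ≤ 1 - ς * n1 := by
    have h1 : (ς * n1) ^ 2 ≤ 1 ^ 2 := by rw [mul_pow, hς]; nlinarith
    linarith [(abs_le_of_sq_le_sq' h1 zero_le_one).2]
  have hςn : |ς * n1| ≤ 1 := by
    rw [← sq_le_one_iff_abs_le_one, mul_pow, hς]; nlinarith
  obtain ⟨r, hr⟩ : ∃ r, r = Real.sqrt (a ^ 2 + b ^ 2) := ⟨_, rfl⟩
  have hr0 : 0 ≤ r := hr ▸ Real.sqrt_nonneg _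
  have hrN : r ^ 2 = a ^ 2 + b ^ 2 := hr ▸ Real.sq_sqrt (by positivity)
  have hrρ : r ≤ ρ0 := by
    apply (abs_le_of_sq_le_sq' _ hρ0.le).2
    linarith
  obtain ⟨x, hx⟩ : ∃ x, x = (n1 * a + n2 * b) / n2 := ⟨_, rfl⟩
  obtain ⟨y, hy⟩ : ∃ y, y = ς * a / n2 := ⟨_, rfl⟩
  have hxe : n2 * x = n1 * a + n2 * b := by rw [hx]; field_simp
  have hye : n2 * y = ς * a := by rw [hy]; field_simp
  have ha : a = ς * n2 * y := by linear_combination (-ς) * hye - a * hς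
  have hb : b = x - ς * n1 * y := by
    apply mul_left_cancel₀ hn2.ne'
    linear_combination (-1) * hxe + ς * n1 * hye + n1 * a * hς
  have hx0 : 0 ≤ x := by
    have : 0 ≤ 2 * R * (n2 * x) := by rw [hxe]; nlinarith
    have h2 : 0 ≤ (2 * R * n2) * x := by linarith
    exact nonneg_of_mul_nonneg_right h2 (by positivity)
  have hσ : ς * n2 * a + (1 - ς * n1) * b = (1 - ς * n1) * (x + y) := by
    rw [hb, ha]
    linear_combination (n2 ^ 2 + n1 ^ 2) * y * hς + y * hn
  -- the constraint `hbox` bounds `y` below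
  have hyl : -(r / 100) ≤ y := by
    have h1 : -(r ^ 2) ≤ 2 * R * (n2 * y) := by
      rw [hye, hrN]
      nlinarith [sq_nonneg a, sq_nonneg b]
    have h2 : r ^ 2 ≤ r * (R * n2 / 50) := by nlinarith
    have h3 : (2 * R * n2) * -(r / 100) ≤ (2 * R * n2) * y := by nlinarith
    exact le_of_mul_le_mul_left h3 (by positivity)
  have habs : |y| ≤ y + r / 50 := by
    rw [abs_le]; constructor <;> linarith
  have hNxy : r ^ 2 ≤ (x + |y|) ^ 2 := by
    have e : r ^ 2 = x ^ 2 + y ^ 2 - 2 * (ς * n1 * (x * y)) := by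
      rw [hrN, ha, hb]
      linear_combination y ^ 2 * (n2 ^ 2 + n1 ^ 2) * hς + y ^ 2 * hn
    have h1 : -(ς * n1 * (x * y)) ≤ x * |y| := by
      calc -(ς * n1 * (x * y)) ≤ |ς * n1 * (x * y)| := neg_le_abs _
        _ = |ς * n1| * (x * |y|) := by rw [abs_mul (ς * n1), abs_mul x, abs_of_nonneg hx0]
        _ ≤ 1 * (x * |y|) := by gcongr
        _ = x * |y| := one_mul _
    rw [e, add_sq, sq_abs]
    linarith
  have hrxy : r ≤ x + |y| := (abs_le_of_sq_le_sq' hNxy (by positivity)).2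
  have hs : 0.98 * r ≤ x + y := by linarith
  have hxy0 : 0 ≤ x + y := by linarith
  rw [hσ]
  refine ⟨mul_nonneg hk0 hxy0, ?_⟩
  rw [mul_pow, ← hrN]
  have h5 : r ^ 2 ≤ 1.0816 * (x + y) ^ 2 := by nlinarith
  have h6 := mul_le_mul_of_nonneg_left h5 (sq_nonneg (1 - ς * n1))
  linarith

namespace Frame

variable (F : Frame)

/-- Radial coordinate with respect to the point at angle `0` of the reference circle. -/
def ca (x : ℝ × ℝ) : ℝ := (x.1 - (F.z.1 + F.R * F.p)) * F.p + (x.2 - (F.z.2 + F.R * F.q)) * F.q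

/-- Angular coordinate with respect to the point at angle `0` of the reference circle. -/
def cb (x : ℝ × ℝ) : ℝ :=
  F.ω * (-(x.1 - (F.z.1 + F.R * F.p)) * F.q + (x.2 - (F.z.2 + F.R * F.q)) * F.p)

/-- Squared distance to the point at angle `0` of the reference circle. -/
def nn (x : ℝ × ℝ) : ℝ := F.ca x ^ 2 + F.cb x ^ 2

lemma continuous_ca : Continuous F.ca := by unfold ca; fun_prop
lemma continuous_cb : Continuous F.cb := by unfold cb; fun_prop
lemma continuous_nn : Continuous F.nn := (F.continuous_ca.pow 2).add (F.continuous_cb.pow 2)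

lemma nn_eq (x : ℝ × ℝ) :
    F.nn x = (x.1 - (F.z.1 + F.R * F.p)) ^ 2 + (x.2 - (F.z.2 + F.R * F.q)) ^ 2 := by
  unfold nn ca cb
  generalize x.1 - (F.z.1 + F.R * F.p) = v
  generalize x.2 - (F.z.2 + F.R * F.q) = w
  linear_combination (-v * F.q + w * F.p) ^ 2 * F.hω + (v ^ 2 + w ^ 2) * F.hpq

lemma ca_pt (ς t θ : ℝ) : F.ca (F.pt ς t θ) = (F.R + ς * t) * cos θ - F.R := by
  unfold ca pt r1 r2
  linear_combination ((F.R + ς * t) * cos θ - F.R) * F.hpq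

lemma cb_pt (ς t θ : ℝ) : F.cb (F.pt ς t θ) = (F.R + ς * t) * sin θ := by
  unfold cb pt r1 r2
  linear_combination ((F.R + ς * t) * sin θ) * (F.ω ^ 2 * F.hpq + F.hω)

lemma nn_pt (ς t θ : ℝ) :
    2 * F.R * F.ca (F.pt ς t θ) + F.nn (F.pt ς t θ) = (F.R + ς * t) ^ 2 - F.R ^ 2 := by
  unfold nn
  rw [ca_pt, cb_pt]
  linear_combination (F.R + ς * t) ^ 2 * sin_sq_add_cos_sq θ

/-- The point with coordinates `(a, b)` in the frame of the vertex. -/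
def ofc (a b : ℝ) : ℝ × ℝ :=
  (F.z.1 + F.R * F.p + a * F.p - b * F.ω * F.q, F.z.2 + F.R * F.q + a * F.q + b * F.ω * F.p)

lemma sqd_ofc (a b : ℝ) (x : ℝ × ℝ) :
    sqd (F.ofc a b) x = (F.ca x - a) ^ 2 + (F.cb x - b) ^ 2 := by
  unfold sqd ofc ca cb
  simp only
  generalize hv : x.1 - (F.z.1 + F.R * F.p) = v
  generalize hw : x.2 - (F.z.2 + F.R * F.q) = w
  have e1 : x.1 - (F.z.1 + F.R * F.p + a * F.p - b * F.ω * F.q) = v - a * F.p + b * F.ω * F.q := by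
    rw [← hv]; ring
  have e2 : x.2 - (F.z.2 + F.R * F.q + a * F.q + b * F.ω * F.p) = w - a * F.q - b * F.ω * F.p := by
    rw [← hw]; ring
  rw [e1, e2]
  linear_combination (-(v ^ 2 + w ^ 2) + a ^ 2 + b ^ 2 * F.ω ^ 2) * F.hpq
    + (b ^ 2 - (-v * F.q + w * F.p) ^ 2) * F.hω

end Frame

/-! ### The flux inequality at a corner -/

/-- The corner of `Ω` at the point `P` at angle `0` of the circle of `F`, of radius `1 / (2 H)`:
near `P`, the domain lies inside a circle of the same radius through `P`, whose centre is in the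
direction `(n1, n2)` of the frame at `P`. The number `ε` is the scale of the test field. -/
structure Corner (H : ℝ) (Ω C : Set (ℝ × ℝ)) where
  F : Frame
  n1 : ℝ
  n2 : ℝ
  ρ0 : ℝ
  ε : ℝ
  hΩ : IsOpen Ω
  hRH : 2 * H * F.R = 1
  hn : n1 ^ 2 + n2 ^ 2 = 1
  hn2 : 0 < n2
  hρ : ρ0 ≤ F.R * n2 / 50
  hε : 0 < ε
  hερ : 2.1 * ε < ρ0
  hB : ∀ x ∈ closure Ω, F.nn x ≤ ρ0 ^ 2 → F.nn x ≤ 2 * F.R * (n1 * F.ca x + n2 * F.cb x)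
  hC : ∀ x ∈ frontier Ω, F.nn x ≤ ρ0 ^ 2 → x ∈ C

namespace Corner

variable {H : ℝ} {Ω C : Set (ℝ × ℝ)} (K : Corner H Ω C)

/-- The constant `1 - ς n₁ ∈ (0, 2)`. -/
def k (ς : ℝ) : ℝ := 1 - ς * K.n1

/-- The linear form cutting the corner. -/
def σ (ς : ℝ) (x : ℝ × ℝ) : ℝ := ς * K.n2 * K.F.ca x + K.k ς * K.F.cb x

/-- The centre of the radial part of the test field. -/
def A (ς : ℝ) : ℝ × ℝ := K.F.ofc (K.ε * (ς * K.n2)) (K.ε * K.k ς)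

/-- The squared radius of the disc on which the cut-off vanishes. -/
def e (ς : ℝ) : ℝ := K.ε ^ 2 * (2 * K.k ς - 3 / 4 * K.k ς ^ 2)

/-- The piece of `Ω` cut off at the corner, where the test field lives. -/
def G (ς : ℝ) : Set (ℝ × ℝ) := {x | x ∈ Ω ∧ K.F.nn x < K.ρ0 ^ 2 ∧ K.σ ς x < K.ε * K.k ς ^ 2}

lemma hρ0 : 0 < K.ρ0 := by linarith [K.hε, K.hερ]

lemma k_bounds {ς : ℝ} (hς : ς ^ 2 = 1) : 0 < K.k ς ∧ K.k ς < 2 := by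
  have h1 : (ς * K.n1) ^ 2 < 1 ^ 2 := by
    rw [mul_pow, hς]; nlinarith [K.hn, K.hn2, sq_pos_of_pos K.hn2]
  have := abs_lt_of_sq_lt_sq' h1 zero_le_one
  unfold k
  constructor <;> linarith [this.1, this.2]

lemma e_pos {ς : ℝ} (hς : ς ^ 2 = 1) : 0 < K.e ς := by
  obtain ⟨h0, h2⟩ := K.k_bounds hς
  have := K.hε
  unfold e
  have : 0 < 2 * K.k ς - 3 / 4 * K.k ς ^ 2 := by nlinarith
  positivity

lemma e_le {ς : ℝ} (hς : ς ^ 2 = 1) : K.e ς ≤ 4 * K.ε ^ 2 := by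
  obtain ⟨h0, h2⟩ := K.k_bounds hς
  unfold e
  nlinarith [sq_nonneg K.ε, mul_nonneg (sq_nonneg K.ε) (sq_nonneg (K.k ς))]

lemma tau_eq {ς : ℝ} (hς : ς ^ 2 = 1) (x : ℝ × ℝ) :
    sqd (K.A ς) x - K.e ς
      = K.F.nn x - 2 * K.ε * K.σ ς x + 3 / 4 * K.ε ^ 2 * K.k ς ^ 2 := by
  unfold A e σ Frame.nn
  rw [Frame.sqd_ofc]
  unfold k
  linear_combination K.ε ^ 2 * (K.n2 ^ 2 + K.n1 ^ 2) * hς + K.ε ^ 2 * K.hn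

lemma continuous_σ (ς : ℝ) : Continuous (K.σ ς) := by
  have h1 := K.F.continuous_ca
  have h2 := K.F.continuous_cb
  unfold σ; fun_prop

lemma isOpen_G (ς : ℝ) : IsOpen (K.G ς) :=
  K.hΩ.inter ((isOpen_lt K.F.continuous_nn continuous_const).inter
    (isOpen_lt (K.continuous_σ ς) continuous_const))

lemma box {ς t : ℝ} (hς : ς ^ 2 = 1) (ht : t ∈ Icc 0 (K.F.R / 2)) (θ : ℝ) :
    0 ≤ ς * (2 * K.F.R * K.F.ca (K.F.pt ς t θ) + K.F.nn (K.F.pt ς t θ)) := by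
  rw [Frame.nn_pt]
  have hς1 := (abs_le_of_sq_le_sq' (hς.trans (one_pow 2).symm).le zero_le_one).1
  have e : ς * ((K.F.R + ς * t) ^ 2 - K.F.R ^ 2) = t * (2 * K.F.R + ς * t) := by
    linear_combination (2 * K.F.R * t + ς * t ^ 2) * hς
  rw [e]
  refine mul_nonneg ht.1 ?_
  nlinarith [ht.1, ht.2, K.F.hR]

/-- The corner is small: points of the closure of `G` are at distance `O(ε)` of the vertex. -/
lemma small {ς : ℝ} (hς : ς ^ 2 = 1) {x : ℝ × ℝ} (hx : x ∈ closure Ω)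
    (hN : K.F.nn x ≤ K.ρ0 ^ 2) (hbox : 0 ≤ ς * (2 * K.F.R * K.F.ca x + K.F.nn x))
    (hσ : K.σ ς x ≤ K.ε * K.k ς ^ 2) :
    0 ≤ K.σ ς x ∧ K.F.nn x ≤ 1.0816 * (K.ε ^ 2 * K.k ς ^ 2) := by
  obtain ⟨h1, h2⟩ := corner_geo K.hn K.hn2 K.F.hR hς K.hρ K.hρ0 hN (K.hB x hx hN) hbox
  obtain ⟨k0, k2⟩ := K.k_bounds hς
  have h1' : 0 ≤ K.σ ς x := h1
  have h2' : K.k ς ^ 2 * K.F.nn x ≤ 1.0816 * K.σ ς x ^ 2 := h2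
  refine ⟨h1', ?_⟩
  have h3 : K.σ ς x ^ 2 ≤ (K.ε * K.k ς ^ 2) ^ 2 := by gcongr
  have h4 : K.k ς ^ 2 * K.F.nn x ≤ K.k ς ^ 2 * (1.0816 * (K.ε ^ 2 * K.k ς ^ 2)) := by
    nlinarith
  exact le_of_mul_le_mul_left h4 (by positivity)

/-- On the relevant part of the polar box, either the test function vanishes nearby or the point
lies in `G`, off the disc where the cut-off vanishes. -/
lemma dichotomy {ς m T : ℝ} (hς : ς ^ 2 = 1) (hT : 0 < T) {u : ℝ × ℝ → ℝ}
    (hcont : ContinuousOn u (Ω ∪ C)) (hm : ∀ x ∈ C, |u x| < m)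
    {x : ℝ × ℝ} (hbox : 0 ≤ ς * (2 * K.F.R * K.F.ca x + K.F.nn x)) :
    (∀ᶠ y in nhds x, y ∈ K.G ς → chi (K.A ς) (K.e ς) y * betaF ς m T (u y) = 0) ∨
      (x ∈ K.G ς ∧ 0 ≤ sqd (K.A ς) x - K.e ς) := by
  have hε := K.hε
  obtain ⟨k0, k2⟩ := K.k_bounds hς
  by_cases hN : K.F.nn x ≤ K.ρ0 ^ 2
  swap
  · left
    have h := (isOpen_lt continuous_const K.F.continuous_nn).mem_nhds
      (show x ∈ {x | K.ρ0 ^ 2 < K.F.nn x} from not_le.1 hN)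
    filter_upwards [h] with y hy hG
    exact absurd hG.2.1 (not_lt.2 (le_of_lt hy))
  by_cases hx : x ∈ closure Ω
  swap
  · left
    filter_upwards [isClosed_closure.isOpen_compl.mem_nhds hx] with y hy hG
    exact absurd (subset_closure hG.1) hy
  by_cases hσ : K.σ ς x ≤ K.ε * K.k ς ^ 2
  swap
  · left
    have h := (isOpen_lt continuous_const (K.continuous_σ ς)).mem_nhds
      (show x ∈ {x | K.ε * K.k ς ^ 2 < K.σ ς x} from not_le.1 hσ)
    filter_upwards [h] with y hy hG
    exact absurd hG.2.2 (not_lt.2 (le_of_lt hy))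
  by_cases hτ : sqd (K.A ς) x - K.e ς < 0
  · left
    have h := (isOpen_lt ((contDiff_sqd (K.A ς)).continuous.sub continuous_const)
      continuous_const).mem_nhds (show x ∈ {x | sqd (K.A ς) x - K.e ς < 0} from hτ)
    filter_upwards [h] with y hy _
    have hy' : sqd (K.A ς) y - K.e ς ≤ 0 := le_of_lt hy
    unfold chi
    rw [max_eq_right hy']; ring
  obtain ⟨hσ0, hsm⟩ := K.small hς hx hN hbox hσ
  have hσ' : K.σ ς x < K.ε * K.k ς ^ 2 := by
    refine lt_of_le_of_ne hσ fun heq => hτ ?_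
    rw [K.tau_eq hς, heq]
    have : 0 < K.ε ^ 2 * K.k ς ^ 2 := by positivity
    nlinarith
  have hN' : K.F.nn x < K.ρ0 ^ 2 := by
    have h1 : (2.1 * K.ε) ^ 2 < K.ρ0 ^ 2 := by
      have := K.hερ
      gcongr
    have h2 : K.k ς ^ 2 ≤ 4 := by nlinarith
    nlinarith [mul_le_mul_of_nonneg_left h2 (sq_nonneg K.ε)]
  by_cases hxΩ : x ∈ Ω
  · exact Or.inr ⟨⟨hxΩ, hN', hσ'⟩, not_lt.1 hτ⟩
  · left
    have hxC : x ∈ C := K.hC x (by rw [K.hΩ.frontier_eq]; exact ⟨hx, hxΩ⟩) hN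
    have h1 : ContinuousWithinAt u (Ω ∪ C) x := hcont x (Or.inr hxC)
    have hu := hm x hxC
    have h2 : ∀ᶠ y in nhdsWithin x (Ω ∪ C), |u y| < m :=
      (h1.abs).eventually_lt continuousWithinAt_const hu
    filter_upwards [eventually_nhdsWithin_iff.1 h2] with y hy hG
    have h3 := hy (Or.inl hG.1)
    have h4 : ς * u y ≤ |u y| := by
      calc ς * u y ≤ |ς * u y| := le_abs_self _
        _ = |u y| := by rw [abs_mul, Strip.abs_le_of_sq hς, one_mul]
    unfold betaF
    rw [psi_zero, mul_zero]
    exact div_nonpos_of_nonpos_of_nonneg (by linarith) hT.le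

end Corner

namespace Corner

variable {H : ℝ} {Ω C : Set (ℝ × ℝ)} (K : Corner H Ω C)

/-- The weighted indicator of `{ς u ≫ m}` near the corner. -/
def Psi (ς m T : ℝ) (u : ℝ × ℝ → ℝ) : ℝ × ℝ → ℝ :=
  indicator (K.G ς) fun y => chi (K.A ς) (K.e ς) y * betaF ς m T (u y)

/-- First component of the test field `Ψ (e_A + ς X)`. -/
def Ya (ς m T : ℝ) (u : ℝ × ℝ → ℝ) (x : ℝ × ℝ) : ℝ :=
  K.Psi ς m T u x * ((Real.sqrt (sqd (K.A ς) x))⁻¹ * (x.1 - (K.A ς).1) + ς * Xa u x)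

/-- Second component of the test field `Ψ (e_A + ς X)`. -/
def Yb (ς m T : ℝ) (u : ℝ × ℝ → ℝ) (x : ℝ × ℝ) : ℝ :=
  K.Psi ς m T u x * ((Real.sqrt (sqd (K.A ς) x))⁻¹ * (x.2 - (K.A ς).2) + ς * Xb u x)

lemma Psi_nonneg (ς m T : ℝ) (u : ℝ × ℝ → ℝ) (x : ℝ × ℝ) : 0 ≤ K.Psi ς m T u x :=
  indicator_nonneg (fun _ _ => mul_nonneg (chi_nonneg _ _ _) (psi_nonneg _)) x

lemma ε_le : 100 * K.ε ≤ K.F.R := by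
  have h1 := K.hρ
  have h2 := K.hερ
  have h3 : K.n2 ≤ 1 := by nlinarith [K.hn, K.hn2, sq_nonneg K.n1]
  have h4 := mul_le_mul_of_nonneg_left h3 K.F.hR.le
  linarith [K.hε]

lemma tau_le {ς : ℝ} (hς : ς ^ 2 = 1) {x : ℝ × ℝ} (hx : x ∈ K.G ς)
    (hbox : 0 ≤ ς * (2 * K.F.R * K.F.ca x + K.F.nn x)) :
    max (sqd (K.A ς) x - K.e ς) 0 ≤ 8 * K.ε ^ 2 := by
  obtain ⟨h0, h1⟩ := K.small hς (subset_closure hx.1) hx.2.1.le hbox hx.2.2.le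
  have hε := K.hε
  obtain ⟨k0, k2⟩ := K.k_bounds hς
  have h2 : K.k ς ^ 2 ≤ 4 := by nlinarith
  have h3 := mul_le_mul_of_nonneg_left h2 (sq_nonneg K.ε)
  refine max_le ?_ (by positivity)
  rw [K.tau_eq hς]
  have h4 : 0 ≤ K.ε * K.σ ς x := by positivity
  nlinarith

lemma Psi_le {ς m T : ℝ} (hς : ς ^ 2 = 1) (u : ℝ × ℝ → ℝ) {x : ℝ × ℝ}
    (hbox : 0 ≤ ς * (2 * K.F.R * K.F.ca x + K.F.nn x)) :
    K.Psi ς m T u x ≤ 64 * K.ε ^ 4 := by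
  have hε := K.hε
  by_cases hx : x ∈ K.G ς
  · unfold Psi
    rw [indicator_of_mem hx]
    have h1 := K.tau_le hς hx hbox
    have h2 : chi (K.A ς) (K.e ς) x ≤ (8 * K.ε ^ 2) ^ 2 :=
      pow_le_pow_left₀ (le_max_right _ _) h1 2
    calc chi (K.A ς) (K.e ς) x * betaF ς m T (u x) ≤ (8 * K.ε ^ 2) ^ 2 * 1 :=
          mul_le_mul h2 (psi_le_one _) (psi_nonneg _) (by positivity)
      _ = 64 * K.ε ^ 4 := by ring
  · unfold Psi
    rw [indicator_of_notMem hx]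
    positivity

variable {ς m T : ℝ} {u : ℝ × ℝ → ℝ} {x : ℝ × ℝ}

lemma Psi_cont (hς : ς ^ 2 = 1) (hT : 0 < T) (hu : IsCMCSolution H Ω u)
    (hcont : ContinuousOn u (Ω ∪ C)) (hm : ∀ x ∈ C, |u x| < m) {f : ℝ × ℝ → ℝ}
    (hf : ∀ x ∈ Ω, ContinuousAt f x)
    (hbox : 0 ≤ ς * (2 * K.F.R * K.F.ca x + K.F.nn x)) :
    ContinuousAt (fun y => K.Psi ς m T u y * f y) x := by
  rcases K.dichotomy hς hT hcont hm hbox with h | ⟨h, -⟩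
  · have e : (fun y => K.Psi ς m T u y * f y) =ᶠ[nhds x] fun _ => 0 := by
      filter_upwards [h] with y hy
      rw [mul_eq_zero]; left
      by_cases hG : y ∈ K.G ς
      · exact (indicator_of_mem hG _).trans (hy hG)
      · exact indicator_of_notMem hG _
    exact continuousAt_const.congr e.symm
  · have e : (fun y => K.Psi ς m T u y * f y) =ᶠ[nhds x]
        fun y => chi (K.A ς) (K.e ς) y * betaF ς m T (u y) * f y := by
      filter_upwards [(K.isOpen_G ς).mem_nhds h] with y hy
      unfold Psi
      rw [indicator_of_mem hy]
    have h1 : ContinuousAt (fun y => betaF ς m T (u y)) x :=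
      ContinuousAt.comp (g := betaF ς m T) (f := u) (contDiff_betaF ς m T).continuous.continuousAt
        (cmc_contDiffAt K.hΩ hu h.1).continuousAt
    exact (((contDiff_chi _ _).continuous.continuousAt.mul h1).mul (hf x h.1)).congr e.symm

/-- The test field is `C¹` on the polar box, and its divergence is bounded below. -/
lemma field (hH : 0 < H) (hς : ς ^ 2 = 1) (hT : 0 < T) (hu : IsCMCSolution H Ω u)
    (hcont : ContinuousOn u (Ω ∪ C)) (hm : ∀ x ∈ C, |u x| < m)
    (hbox : 0 ≤ ς * (2 * K.F.R * K.F.ca x + K.F.nn x)) :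
    ContDiffAt ℝ 1 (K.Ya ς m T u) x ∧ ContDiffAt ℝ 1 (K.Yb ς m T u) x ∧
      2 * H * K.Psi ς m T u x - 64 * K.ε ^ 4 / T ≤ dvg (K.Ya ς m T u) (K.Yb ς m T u) x := by
  have hε := K.hε
  rcases K.dichotomy hς hT hcont hm hbox with h | ⟨h, hτ⟩
  · have e : ∀ᶠ y in nhds x, K.Psi ς m T u y = 0 := by
      filter_upwards [h] with y hy
      by_cases hG : y ∈ K.G ς
      · exact (indicator_of_mem hG _).trans (hy hG)
      · exact indicator_of_notMem hG _
    have ea : K.Ya ς m T u =ᶠ[nhds x] fun _ => 0 := by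
      filter_upwards [e] with y hy
      unfold Ya; rw [hy, zero_mul]
    have eb : K.Yb ς m T u =ᶠ[nhds x] fun _ => 0 := by
      filter_upwards [e] with y hy
      unfold Yb; rw [hy, zero_mul]
    refine ⟨contDiffAt_const.congr_of_eventuallyEq ea,
      contDiffAt_const.congr_of_eventuallyEq eb, ?_⟩
    unfold dvg
    rw [ea.fderiv_eq, eb.fderiv_eq, e.self_of_nhds]
    have : 0 ≤ 64 * K.ε ^ 4 / T := by positivity
    simpa using this
  · have ea : K.Ya ς m T u =ᶠ[nhds x]
        fun y => chi (K.A ς) (K.e ς) y * Za (betaF ς m T) u (K.A ς) ς y := by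
      filter_upwards [(K.isOpen_G ς).mem_nhds h] with y hy
      unfold Ya Psi Za
      rw [indicator_of_mem hy]; ring
    have eb : K.Yb ς m T u =ᶠ[nhds x]
        fun y => chi (K.A ς) (K.e ς) y * Zb (betaF ς m T) u (K.A ς) ς y := by
      filter_upwards [(K.isOpen_G ς).mem_nhds h] with y hy
      unfold Yb Psi Zb
      rw [indicator_of_mem hy]; ring
    have hA : 0 < sqd (K.A ς) x := by linarith [K.e_pos hς]
    have hΘ := K.tau_le hς h hbox
    obtain ⟨c1, c2⟩ := contDiffAt_Z K.hΩ hu h.1 (contDiff_betaF ς m T) ς hA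
    refine ⟨((contDiff_chi _ _).contDiffAt.mul c1).congr_of_eventuallyEq ea,
      ((contDiff_chi _ _).contDiffAt.mul c2).congr_of_eventuallyEq eb, ?_⟩
    have hsq : Real.sqrt (sqd (K.A ς) x) ≤ 4 * K.ε := by
      rw [Real.sqrt_le_left (by positivity)]
      have h1 := (le_max_left _ _).trans hΘ
      nlinarith [K.e_le hς, sq_nonneg K.ε]
    have hρ : 4 * H * Real.sqrt (sqd (K.A ς) x) ≤ 1 := by
      have h1 := K.ε_le
      have h2 := K.hRH
      have h3 : 4 * H * Real.sqrt (sqd (K.A ς) x) ≤ 4 * H * (4 * K.ε) := by gcongr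
      nlinarith
    have key := dvg_lower (m := m) (e := K.e ς) hH K.hΩ hu h.1 hς hT hA hΘ hρ
    have ed : dvg (K.Ya ς m T u) (K.Yb ς m T u) x
        = dvg (fun y => chi (K.A ς) (K.e ς) y * Za (betaF ς m T) u (K.A ς) ς y)
          (fun y => chi (K.A ς) (K.e ς) y * Zb (betaF ς m T) u (K.A ς) ς y) x := by
      unfold dvg; rw [ea.fderiv_eq, eb.fderiv_eq]
    rw [ed]
    have eP : K.Psi ς m T u x = chi (K.A ς) (K.e ς) x * betaF ς m T (u x) :=
      indicator_of_mem h _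
    rw [eP]
    calc _ = 2 * H * (chi (K.A ς) (K.e ς) x * betaF ς m T (u x)) - (8 * K.ε ^ 2) ^ 2 / T := by ring
      _ ≤ _ := key

/-- `Ψ` vanishes far from the vertex, in particular (`far_side`, `far_end`) on the three sides of
the polar box away from the reference circle. -/
lemma Psi_far (h : K.ρ0 ^ 2 ≤ K.F.nn x) : K.Psi ς m T u x = 0 :=
  indicator_of_notMem (fun hx => not_lt.2 h hx.2.1) _

lemma far_side (hς : ς ^ 2 = 1) (θ : ℝ) : K.ρ0 ^ 2 ≤ K.F.nn (K.F.pt ς (K.F.R / 2) θ) := by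
  have hR := K.F.hR
  have h3 : K.n2 ≤ 1 := by nlinarith [K.hn, K.hn2, sq_nonneg K.n1]
  have h1 : K.ρ0 ≤ K.F.R / 50 := by
    have := mul_le_mul_of_nonneg_left h3 hR.le
    linarith [K.hρ]
  have h2 : K.ρ0 ^ 2 ≤ (K.F.R / 50) ^ 2 := pow_le_pow_left₀ K.hρ0.le h1 2
  unfold Frame.nn
  rw [Frame.ca_pt, Frame.cb_pt]
  have h4 := sin_sq_add_cos_sq θ
  have h5 := cos_le_one θ
  have e : ((K.F.R + ς * (K.F.R / 2)) * cos θ - K.F.R) ^ 2 + ((K.F.R + ς * (K.F.R / 2)) * sin θ) ^ 2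
      = K.F.R ^ 2 / 4 + 2 * (1 - cos θ) * K.F.R ^ 2 * (1 + ς / 2) := by
    linear_combination (K.F.R + ς * (K.F.R / 2)) ^ 2 * h4 + K.F.R ^ 2 / 4 * hς
  rw [e]
  have h6 := (abs_le_of_sq_le_sq' (hς.trans (one_pow 2).symm).le zero_le_one).1
  have h7 : 0 ≤ 2 * (1 - cos θ) * K.F.R ^ 2 * (1 + ς / 2) := by
    have : 0 ≤ 1 - cos θ := by linarith
    have : 0 ≤ 1 + ς / 2 := by linarith
    positivity
  nlinarith

lemma far_end (hς : ς ^ 2 = 1) {t θ : ℝ} (ht : t ∈ Icc 0 (K.F.R / 2)) (hθ : sin θ ^ 2 = sin 1 ^ 2) :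
    K.ρ0 ^ 2 ≤ K.F.nn (K.F.pt ς t θ) := by
  have hR := K.F.hR
  have h3 : K.n2 ≤ 1 := by nlinarith [K.hn, K.hn2, sq_nonneg K.n1]
  have h1 : K.ρ0 ≤ K.F.R / 50 := by
    have := mul_le_mul_of_nonneg_left h3 hR.le
    linarith [K.hρ]
  have h2 : K.ρ0 ^ 2 ≤ (K.F.R / 50) ^ 2 := pow_le_pow_left₀ K.hρ0.le h1 2
  have h6 := (abs_le_of_sq_le_sq' (hς.trans (one_pow 2).symm).le zero_le_one).1
  unfold Frame.nn
  rw [Frame.cb_pt, mul_pow, hθ]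
  have hs : (1 / 4 : ℝ) ≤ sin 1 := by
    have := Real.mul_le_sin (x := 1) (by norm_num) (by linarith [Real.pi_gt_three])
    have hp := Real.pi_lt_four
    have : (1 / 4 : ℝ) ≤ 2 / Real.pi * 1 := by
      rw [mul_one, div_le_div_iff₀ (by norm_num) Real.pi_pos]; linarith
    linarith
  have h7 : K.F.R / 2 ≤ K.F.R + ς * t := by nlinarith [ht.1, ht.2]
  have h8 : (K.F.R / 2) ^ 2 * (1 / 4) ^ 2 ≤ (K.F.R + ς * t) ^ 2 * sin 1 ^ 2 := by gcongr
  nlinarith [sq_nonneg (K.F.ca (K.F.pt ς t θ))]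

lemma cont_box (hς : ς ^ 2 = 1) (hT : 0 < T) (hu : IsCMCSolution H Ω u)
    (hcont : ContinuousOn u (Ω ∪ C)) (hm : ∀ x ∈ C, |u x| < m) {f : ℝ × ℝ → ℝ}
    (hf : ∀ x ∈ Ω, ContinuousAt f x) :
    ContinuousOn (fun x : ℝ × ℝ => K.Psi ς m T u (K.F.pt ς x.1 x.2) * f (K.F.pt ς x.1 x.2))
      (Icc 0 (K.F.R / 2) ×ˢ Icc (-1) 1) := by
  intro x hx
  exact (ContinuousAt.comp (f := fun x : ℝ × ℝ => K.F.pt ς x.1 x.2)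
    (K.Psi_cont hς hT hu hcont hm hf (K.box hς hx.1 x.2))
    (K.F.continuous_pt ς).continuousAt).continuousWithinAt

lemma cont_Psi (hς : ς ^ 2 = 1) (hT : 0 < T) (hu : IsCMCSolution H Ω u)
    (hcont : ContinuousOn u (Ω ∪ C)) (hm : ∀ x ∈ C, |u x| < m) :
    ContinuousOn (fun x : ℝ × ℝ => K.Psi ς m T u (K.F.pt ς x.1 x.2))
      (Icc 0 (K.F.R / 2) ×ˢ Icc (-1) 1) := by
  simpa using K.cont_box (T := T) hς hT hu hcont hm (f := fun _ => 1) (fun _ _ => continuousAt_const)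

lemma cont_flux (hς : ς ^ 2 = 1) (hT : 0 < T) (hu : IsCMCSolution H Ω u)
    (hcont : ContinuousOn u (Ω ∪ C)) (hm : ∀ x ∈ C, |u x| < m) :
    ContinuousOn (fun θ => K.Psi ς m T u (K.F.pt ς 0 θ) * (1 - K.F.Xr u ς 0 θ)) (Icc (-1) 1) := by
  have hab : (0 : ℝ) ≤ K.F.R / 2 := by linarith [K.F.hR]
  have c0 : ∀ f : ℝ × ℝ → ℝ, (∀ x ∈ Ω, ContinuousAt f x) →
      ContinuousOn (fun θ => K.Psi ς m T u (K.F.pt ς 0 θ) * f (K.F.pt ς 0 θ)) (Icc (-1) 1) := by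
    intro f hf
    exact (K.cont_box hς hT hu hcont hm hf).comp (f := fun θ => ((0 : ℝ), θ)) (by fun_prop)
      (fun θ hθ => ⟨⟨le_rfl, hab⟩, hθ⟩)
  have ca := c0 (Xa u) (fun x hx => (cmc_Xa K.hΩ hu hx).continuousAt)
  have cb := c0 (Xb u) (fun x hx => (cmc_Xb K.hΩ hu hx).continuousAt)
  have c1 := c0 (fun _ => 1) (fun _ _ => continuousAt_const)
  have := c1.sub ((ca.mul K.F.contDiff_r1.continuous.continuousOn).add
    (cb.mul K.F.contDiff_r2.continuous.continuousOn))
  refine this.congr fun θ _ => ?_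
  simp only [Frame.Xr, Frame.rad, Pi.mul_apply, Pi.sub_apply, Pi.add_apply]; ring

/-- The mass of `Ψ` on the polar box is controlled by the flux deficit through the reference
circle, up to an error of order `1 / T`. -/
lemma flux (hH : 0 < H) (hς : ς ^ 2 = 1) (hT : 0 < T) (hu : IsCMCSolution H Ω u)
    (hcont : ContinuousOn u (Ω ∪ C)) (hm : ∀ x ∈ C, |u x| < m) :
    (1 / 2) * (∫ t in (0)..(K.F.R / 2), ∫ θ in (-1)..1, K.Psi ς m T u (K.F.pt ς t θ))
      ≤ K.F.R * (∫ θ in (-1)..1, K.Psi ς m T u (K.F.pt ς 0 θ) * (1 - K.F.Xr u ς 0 θ))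
        + 96 * K.F.R ^ 2 * K.ε ^ 4 / T := by
  have hR := K.F.hR
  have hε := K.hε
  have hab : (0 : ℝ) ≤ K.F.R / 2 := by positivity
  have hcd : (-1 : ℝ) ≤ 1 := by norm_num
  have hς1 := abs_le_of_sq_le_sq' (hς.trans (one_pow 2).symm).le zero_le_one
  have hbox := fun t (ht : t ∈ Icc 0 (K.F.R / 2)) θ => K.box hς ht θ
  have hfield := fun t (ht : t ∈ Icc 0 (K.F.R / 2)) θ =>
    K.field (T := T) hH hς hT hu hcont hm (hbox t ht θ)
  have key := K.F.polar_div hς (Y₁ := K.Ya ς m T u) (Y₂ := K.Yb ς m T u) (κ := fun _ => 1)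
    (ζ := fun _ => 1) contDiff_const contDiff_const (a := 0) (b := K.F.R / 2) (c := -1) (d := 1)
    (by
      intro t ht θ _
      rw [uIcc_of_le hab] at ht
      exact ⟨(hfield t ht θ).1, (hfield t ht θ).2.1⟩)
  have htan : ∀ t ∈ Icc 0 (K.F.R / 2), ∀ θ, sin θ ^ 2 = sin 1 ^ 2 →
      K.F.tan (K.Ya ς m T u) (K.Yb ς m T u) ς t θ = 0 := by
    intro t ht θ hθ
    unfold Frame.tan Ya Yb
    rw [K.Psi_far (K.far_end hς ht hθ)]; ring
  have z1 : (∫ t in (0)..(K.F.R / 2), (1 : ℝ) * 1 * K.F.tan (K.Ya ς m T u) (K.Yb ς m T u) ς t 1)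
      = 0 := by
    rw [intervalIntegral.integral_congr (g := fun _ => 0), intervalIntegral.integral_zero]
    intro t ht
    rw [uIcc_of_le hab] at ht
    simp only [htan t ht 1 rfl, mul_zero]
  have z2 : (∫ t in (0)..(K.F.R / 2), (1 : ℝ) * 1 * K.F.tan (K.Ya ς m T u) (K.Yb ς m T u) ς t (-1))
      = 0 := by
    rw [intervalIntegral.integral_congr (g := fun _ => 0), intervalIntegral.integral_zero]
    intro t ht
    rw [uIcc_of_le hab] at ht
    simp only [htan t ht (-1) (by rw [sin_neg]; ring), mul_zero]
  have z3 : (∫ θ in (-1 : ℝ)..1, (K.F.R + ς * (K.F.R / 2)) * 1 * 1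
      * (ς * K.F.rad (K.Ya ς m T u) (K.Yb ς m T u) ς (K.F.R / 2) θ)) = 0 := by
    rw [intervalIntegral.integral_congr (g := fun _ => 0), intervalIntegral.integral_zero]
    intro θ _
    simp only [Frame.rad, Ya, Yb, K.Psi_far (K.far_side hς θ)]; ring
  simp only [deriv_const, mul_one, mul_zero, zero_mul, add_zero] at key z1 z2 z3
  rw [z1, z2, z3] at key
  -- the integrand on the left is bounded below
  have ptc := fun ς => K.F.continuous_pt ς
  have cP := K.cont_Psi hς hT hu hcont hm
  have cD : ContinuousOn (fun x : ℝ × ℝ => (K.F.R + ς * x.1)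
      * dvg (K.Ya ς m T u) (K.Yb ς m T u) (K.F.pt ς x.1 x.2))
      (Icc 0 (K.F.R / 2) ×ˢ Icc (-1) 1) := by
    intro x hx
    obtain ⟨c1, c2, -⟩ := hfield x.1 hx.1 x.2
    have d1 := ((c1.continuousAt_fderiv (by norm_num)).clm_apply
      (continuousAt_const (y := ((1 : ℝ), (0 : ℝ))))).add
      ((c2.continuousAt_fderiv (by norm_num)).clm_apply
        (continuousAt_const (y := ((0 : ℝ), (1 : ℝ)))))
    have d2 : ContinuousAt (fun x : ℝ × ℝ => dvg (K.Ya ς m T u) (K.Yb ς m T u) (K.F.pt ς x.1 x.2)) x :=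
      ContinuousAt.comp (f := fun x : ℝ × ℝ => K.F.pt ς x.1 x.2) d1 (ptc ς).continuousAt
    have d3 : ContinuousAt (fun x : ℝ × ℝ => K.F.R + ς * x.1) x := by fun_prop
    exact (d3.mul d2).continuousWithinAt
  have low := dbl_mono hab hcd
    (f := fun t θ => (1 / 2) * K.Psi ς m T u (K.F.pt ς t θ) + -(96 * K.F.R * K.ε ^ 4 / T))
    (g := fun t θ => (K.F.R + ς * t) * dvg (K.Ya ς m T u) (K.Yb ς m T u) (K.F.pt ς t θ))
    ((continuousOn_const.mul cP).add continuousOn_const) cD (by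
      intro t ht θ _
      have h1 := (hfield t ht θ).2.2
      have h2 := K.Psi_nonneg ς m T u (K.F.pt ς t θ)
      have h3 : K.F.R / 2 ≤ K.F.R + ς * t := by nlinarith [ht.1, ht.2]
      have h4 : K.F.R + ς * t ≤ 3 * K.F.R / 2 := by nlinarith [ht.1, ht.2]
      have h5 := mul_le_mul_of_nonneg_left h1 (show 0 ≤ K.F.R + ς * t by linarith)
      have h6 : 0 ≤ 64 * K.ε ^ 4 / T := by positivity
      have h7 := mul_le_mul_of_nonneg_right h4 h6
      have h8 := mul_le_mul_of_nonneg_right h3 (mul_nonneg (by linarith : 0 ≤ 2 * H) h2)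
      have h9 : K.F.R / 2 * (2 * H * K.Psi ς m T u (K.F.pt ς t θ))
          = 1 / 2 * K.Psi ς m T u (K.F.pt ς t θ) := by
        linear_combination K.Psi ς m T u (K.F.pt ς t θ) / 2 * K.hRH
      have h10 : 3 * K.F.R / 2 * (64 * K.ε ^ 4 / T) = 96 * K.F.R * K.ε ^ 4 / T := by ring
      linarith)
  rw [dbl_add hab hcd (continuousOn_const.mul cP) continuousOn_const, dbl_const] at low
  -- the flux through the reference circle
  have cr1 := K.F.contDiff_r1.continuous
  have cr2 := K.F.contDiff_r2.continuous
  have cflux := (continuousOn_const (c := K.F.R)).mul (K.cont_flux hς hT hu hcont hm)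
  have crad : ContinuousOn (fun θ => (K.F.R + ς * 0)
      * (ς * K.F.rad (K.Ya ς m T u) (K.Yb ς m T u) ς 0 θ)) (Icc (-1) 1) := by
    have hpt : Continuous (fun θ => K.F.pt ς 0 θ) :=
      (ptc ς).comp (f := fun θ => ((0 : ℝ), θ)) (by fun_prop)
    have h1 : ContinuousOn (fun θ => K.Ya ς m T u (K.F.pt ς 0 θ)) (Icc (-1) 1) := fun θ _ =>
      (ContinuousAt.comp (f := fun θ => K.F.pt ς 0 θ)
        (hfield 0 ⟨le_rfl, hab⟩ θ).1.continuousAt hpt.continuousAt).continuousWithinAt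
    have h2 : ContinuousOn (fun θ => K.Yb ς m T u (K.F.pt ς 0 θ)) (Icc (-1) 1) := fun θ _ =>
      (ContinuousAt.comp (f := fun θ => K.F.pt ς 0 θ)
        (hfield 0 ⟨le_rfl, hab⟩ θ).2.1.continuousAt hpt.continuousAt).continuousWithinAt
    exact continuousOn_const.mul (continuousOn_const.mul
      ((h1.mul cr1.continuousOn).add (h2.mul cr2.continuousOn)))
  have up : -(∫ θ in (-1 : ℝ)..1, (K.F.R + ς * 0)
      * (ς * K.F.rad (K.Ya ς m T u) (K.Yb ς m T u) ς 0 θ))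
      ≤ ∫ θ in (-1 : ℝ)..1, K.F.R * (K.Psi ς m T u (K.F.pt ς 0 θ) * (1 - K.F.Xr u ς 0 θ)) := by
    rw [← intervalIntegral.integral_neg]
    refine intervalIntegral.integral_mono_on hcd
      ((uIcc_of_le hcd).symm ▸ crad.neg).intervalIntegrable
      ((uIcc_of_le hcd).symm ▸ cflux).intervalIntegrable fun θ _ => ?_
    have h2 := K.Psi_nonneg ς m T u (K.F.pt ς 0 θ)
    have hr := K.F.r_sq θ
    have he : ((Real.sqrt (sqd (K.A ς) (K.F.pt ς 0 θ)))⁻¹ * ((K.F.pt ς 0 θ).1 - (K.A ς).1)) ^ 2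
        + ((Real.sqrt (sqd (K.A ς) (K.F.pt ς 0 θ)))⁻¹ * ((K.F.pt ς 0 θ).2 - (K.A ς).2)) ^ 2 ≤ 1 := by
      have hs : 0 ≤ sqd (K.A ς) (K.F.pt ς 0 θ) := by unfold sqd; positivity
      have : ((Real.sqrt (sqd (K.A ς) (K.F.pt ς 0 θ)))⁻¹ * ((K.F.pt ς 0 θ).1 - (K.A ς).1)) ^ 2
        + ((Real.sqrt (sqd (K.A ς) (K.F.pt ς 0 θ)))⁻¹ * ((K.F.pt ς 0 θ).2 - (K.A ς).2)) ^ 2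
        = (sqd (K.A ς) (K.F.pt ς 0 θ))⁻¹ * sqd (K.A ς) (K.F.pt ς 0 θ) := by
        rw [mul_pow, mul_pow, inv_pow, Real.sq_sqrt hs]
        conv_rhs => rw [sqd]
        conv_lhs => rw [sqd]
        ring
      rw [this]
      exact inv_mul_le_one
    simp only [Frame.rad, Ya, Yb, Frame.Xr, mul_zero, add_zero]
    generalize (Real.sqrt (sqd (K.A ς) (K.F.pt ς 0 θ)))⁻¹ * ((K.F.pt ς 0 θ).1 - (K.A ς).1) = e1
      at he ⊢
    generalize (Real.sqrt (sqd (K.A ς) (K.F.pt ς 0 θ)))⁻¹ * ((K.F.pt ς 0 θ).2 - (K.A ς).2) = e2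
      at he ⊢
    generalize K.Psi ς m T u (K.F.pt ς 0 θ) = w at *
    have h5 : (ς * (e1 * K.F.r1 θ + e2 * K.F.r2 θ)) ^ 2 ≤ 1 ^ 2 := by
      rw [mul_pow, hς]
      nlinarith [sq_nonneg (e1 * K.F.r2 θ - e2 * K.F.r1 θ)]
    have h6 := (abs_le_of_sq_le_sq' h5 zero_le_one).1
    have h7 := mul_le_mul_of_nonneg_left h6 (mul_nonneg hR.le h2)
    have e3 : -(K.F.R * (ς * (w * (e1 + ς * Xa u (K.F.pt ς 0 θ)) * K.F.r1 θ
          + w * (e2 + ς * Xb u (K.F.pt ς 0 θ)) * K.F.r2 θ)))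
        = -(K.F.R * w * (ς * (e1 * K.F.r1 θ + e2 * K.F.r2 θ)))
          - K.F.R * w * (Xa u (K.F.pt ς 0 θ) * K.F.r1 θ + Xb u (K.F.pt ς 0 θ) * K.F.r2 θ) := by
      linear_combination -(K.F.R * w
        * (Xa u (K.F.pt ς 0 θ) * K.F.r1 θ + Xb u (K.F.pt ς 0 θ) * K.F.r2 θ)) * hς
    rw [e3]
    linarith
  have e4 : (K.F.R / 2 - 0) * (1 - -1) * -(96 * K.F.R * K.ε ^ 4 / T)
      = -(96 * K.F.R ^ 2 * K.ε ^ 4 / T) := by ring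
  rw [e4] at low
  simp only [intervalIntegral.integral_const_mul, mul_zero, add_zero] at key low up
  linarith

end Corner

/-! ### The contradiction at a corner -/

lemma sgn_cases {ς : ℝ} (hς : ς ^ 2 = 1) : ς = 1 ∨ ς = -1 := by
  have h0 : (ς - 1) * (ς + 1) = 0 := by linear_combination hς
  rcases mul_eq_zero.1 h0 with h | h
  · exact Or.inl (by linarith)
  · exact Or.inr (by linarith)

namespace Frame

variable (F : Frame)

lemma pt_zero (ς θ : ℝ) : F.pt ς 0 θ = F.pt 1 0 θ := by
  rw [F.pt_sign ς, mul_zero]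

lemma Xr_zero (u : ℝ × ℝ → ℝ) (ς θ : ℝ) : F.Xr u ς 0 θ = F.Xr u 1 0 θ := by
  unfold Xr rad; rw [F.pt_zero ς]

end Frame

namespace Corner

variable {H : ℝ} {Ω C : Set (ℝ × ℝ)} (K : Corner H Ω C)

/-- The part of the reference circle inside `G` is contained in the arc `0 < θ < θ₁`. -/
lemma arc_of_mem {ς θ θ1 : ℝ} (hθ : θ ∈ Icc (-1) 1)
    (hP : K.F.pt 1 0 0 ∉ Ω) (hρθ : K.ρ0 ≤ K.F.R * θ1 / 4) (hx : K.F.pt ς 0 θ ∈ K.G ς) :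
    θ ∈ Ioo 0 θ1 := by
  obtain ⟨hΩ, hN, -⟩ := hx
  have hR := K.F.hR
  have hB := K.hB _ (subset_closure hΩ) hN.le
  have hpi := Real.pi_gt_three
  have hnn := K.F.nn_pt ς 0 θ
  have hcb := K.F.cb_pt ς 0 θ
  have hca := K.F.ca_pt ς 0 θ
  rw [mul_zero, add_zero] at hnn hcb hca
  have hsin : 0 ≤ sin θ := by
    have h1 : 0 ≤ 1 - cos θ := by linarith [cos_le_one θ]
    have h2 : 0 ≤ 1 + K.n1 := by nlinarith [K.hn, K.hn2, sq_nonneg (K.n1 - 1)]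
    rw [hcb] at hB
    have h3 : 2 * K.F.R ^ 2 * ((1 + K.n1) * (1 - cos θ)) ≤ 2 * K.F.R ^ 2 * (K.n2 * sin θ) := by
      rw [hca] at hB hnn
      nlinarith
    have h4 := le_of_mul_le_mul_left h3 (by positivity)
    have h5 : 0 ≤ K.n2 * sin θ := (mul_nonneg h2 h1).trans h4
    exact nonneg_of_mul_nonneg_right h5 K.hn2
  have h0 : 0 < θ := by
    rcases lt_trichotomy θ 0 with h | h | h
    · have := sin_neg_of_neg_of_neg_pi_lt h (by linarith [hθ.1])
      linarith
    · subst h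
      rw [K.F.pt_zero] at hΩ
      exact absurd hΩ hP
    · exact h
  refine ⟨h0, ?_⟩
  have h1 : K.F.R * sin θ ≤ K.ρ0 := by
    rw [← hcb]
    refine (abs_le_of_sq_le_sq' ?_ K.hρ0.le).2
    refine le_trans ?_ hN.le
    unfold Frame.nn
    linarith [sq_nonneg (K.F.ca (K.F.pt ς 0 θ))]
  have h2 : θ / 2 ≤ sin θ := by
    have := Real.mul_le_sin h0.le (by linarith [hθ.2])
    have h3 : (1 / 2 : ℝ) ≤ 2 / Real.pi := by
      rw [div_le_div_iff₀ (by norm_num) Real.pi_pos]; linarith [Real.pi_le_four]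
    nlinarith
  have h3 : K.F.R * sin θ ≤ K.F.R * (θ1 / 4) := by linarith
  have h4 := le_of_mul_le_mul_left h3 hR
  linarith

variable {v : ℕ → ℝ × ℝ → ℝ} {θ1 M : ℝ}

/-- The flux deficits through the reference circle tend to `0`. -/
lemma flux_tendsto (hP : K.F.pt 1 0 0 ∉ Ω) (hρθ : K.ρ0 ≤ K.F.R * θ1 / 4)
    (hv : ∀ n, IsCMCSolution H Ω (v n)) (hcont : ∀ n, ContinuousOn (v n) (Ω ∪ C))
    (hM : ∀ n, ∀ x ∈ C, |v n x| ≤ M)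
    (hlim : ∀ θ ∈ Ioo 0 θ1, Tendsto (fun n => K.F.Xr (v n) 1 0 θ) atTop (nhds 1))
    {ς T : ℝ} (hς : ς ^ 2 = 1) (hT : 0 < T) :
    Tendsto (fun n => ∫ θ in (-1)..1,
      K.Psi ς (M + 1) T (v n) (K.F.pt ς 0 θ) * (1 - K.F.Xr (v n) ς 0 θ)) atTop (nhds 0) := by
  have hm : ∀ n, ∀ x ∈ C, |v n x| < M + 1 := fun n x hx => by linarith [hM n x hx]
  have hcd : (-1 : ℝ) ≤ 1 := by norm_num
  have hab : (0 : ℝ) ≤ K.F.R / 2 := by linarith [K.F.hR]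
  have hbd : ∀ n θ, |K.Psi ς (M + 1) T (v n) (K.F.pt ς 0 θ) * (1 - K.F.Xr (v n) ς 0 θ)|
      ≤ 64 * K.ε ^ 4 * (1 - K.F.Xr (v n) ς 0 θ) := by
    intro n θ
    have h1 := K.Psi_nonneg ς (M + 1) T (v n) (K.F.pt ς 0 θ)
    have h2 : 0 ≤ 1 - K.F.Xr (v n) ς 0 θ := by linarith [K.F.Xr_le (v n) ς 0 θ]
    rw [abs_of_nonneg (mul_nonneg h1 h2)]
    exact mul_le_mul_of_nonneg_right (K.Psi_le hς (v n) (K.box hς ⟨le_rfl, hab⟩ θ)) h2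
  have key := intervalIntegral.tendsto_integral_filter_of_dominated_convergence
    (μ := volume) (a := -1) (b := 1) (l := atTop)
    (F := fun n θ => K.Psi ς (M + 1) T (v n) (K.F.pt ς 0 θ) * (1 - K.F.Xr (v n) ς 0 θ))
    (f := fun _ => (0 : ℝ)) (fun _ => 64 * K.ε ^ 4 * 2)
    (Eventually.of_forall fun n => by
      have := K.cont_flux (T := T) hς hT (hv n) (hcont n) (hm n)
      rw [uIoc_of_le hcd]
      exact (this.mono Ioc_subset_Icc_self).aestronglyMeasurable measurableSet_Ioc)
    (Eventually.of_forall fun n => Eventually.of_forall fun θ _ => by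
      rw [Real.norm_eq_abs]
      refine (hbd n θ).trans ?_
      have h1 := (abs_le.1 (K.F.abs_Xr_le (v n) ς 0 θ)).1
      have h2 : 0 ≤ 64 * K.ε ^ 4 := by have := K.hε; positivity
      exact mul_le_mul_of_nonneg_left (by linarith) h2)
    intervalIntegrable_const
    (Eventually.of_forall fun θ hθ => by
      rw [uIoc_of_le hcd] at hθ
      by_cases hx : K.F.pt ς 0 θ ∈ K.G ς
      · have h1 := hlim θ (K.arc_of_mem ⟨hθ.1.le, hθ.2⟩ hP hρθ hx)
        refine squeeze_zero_norm (fun n => hbd n θ) ?_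
        have h2 := (h1.const_sub 1).const_mul (64 * K.ε ^ 4)
        simpa [K.F.Xr_zero _ ς] using h2
      · have : ∀ n, K.Psi ς (M + 1) T (v n) (K.F.pt ς 0 θ) = 0 := fun n =>
          indicator_of_notMem hx _
        simp [this])
  simpa using key

/-- A rectangle of the polar box, around an arc of the reference circle, on which both cut-offs
are bounded below. -/
lemma exists_rect (hθ1 : 0 < θ1) (hL : ∀ θ ∈ Ioo 0 θ1, K.F.pt 1 0 θ ∈ Ω) :
    ∃ θ0 w c0 : ℝ, 0 < w ∧ w ≤ 1 ∧ w ≤ K.F.R / 2 ∧ 0 < c0 ∧ 0 < θ0 - w ∧ θ0 + w < θ1 ∧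
      θ0 + w < 1 ∧ ∀ t ∈ Icc (-w) w, ∀ θ ∈ Icc (θ0 - w) (θ0 + w), K.F.pt 1 t θ ∈ Ω ∧
        ∀ ς : ℝ, ς ^ 2 = 1 → K.F.pt 1 t θ ∈ K.G ς ∧
          c0 ≤ chi (K.A ς) (K.e ς) (K.F.pt 1 t θ) := by
  have hε := K.hε
  have hpt0 : Continuous (fun θ => K.F.pt 1 0 θ) :=
    (K.F.continuous_pt 1).comp (f := fun θ => ((0 : ℝ), θ)) (by fun_prop)
  have hca : K.F.ca (K.F.pt 1 0 0) = 0 := by rw [Frame.ca_pt]; simp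
  have hcb : K.F.cb (K.F.pt 1 0 0) = 0 := by rw [Frame.cb_pt]; simp
  have hnn : K.F.nn (K.F.pt 1 0 0) = 0 := by unfold Frame.nn; rw [hca, hcb]; ring
  have hσ : ∀ ς, K.σ ς (K.F.pt 1 0 0) = 0 := fun ς => by unfold σ; rw [hca, hcb]; ring
  -- an open neighbourhood of the vertex on which the cut-offs are bounded below
  obtain ⟨O, hO⟩ : ∃ O : ℝ → Set (ℝ × ℝ), O = fun ς => {x | K.F.nn x < K.ρ0 ^ 2 ∧
      K.σ ς x < K.ε * K.k ς ^ 2 ∧ K.ε ^ 2 * K.k ς ^ 2 / 2 < sqd (K.A ς) x - K.e ς} := ⟨_, rfl⟩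
  have hOopen : ∀ ς, IsOpen (O ς) := fun ς => by
    rw [hO]
    exact (isOpen_lt K.F.continuous_nn continuous_const).inter
      ((isOpen_lt (K.continuous_σ ς) continuous_const).inter
        (isOpen_lt continuous_const ((contDiff_sqd (K.A ς)).continuous.sub continuous_const)))
  have hO0 : ∀ ς, ς ^ 2 = 1 → K.F.pt 1 0 0 ∈ O ς := fun ς hς => by
    have hk := (K.k_bounds hς).1
    have h1 : 0 < K.ε ^ 2 * K.k ς ^ 2 := by positivity
    rw [hO]
    refine ⟨?_, ?_, ?_⟩
    · rw [hnn]; have := K.hρ0; positivity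
    · rw [hσ]; positivity
    · rw [K.tau_eq hς, hσ, hnn]; linarith
  have hW : IsOpen (O 1 ∩ O (-1)) := (hOopen 1).inter (hOopen (-1))
  have hW0 : K.F.pt 1 0 0 ∈ O 1 ∩ O (-1) := ⟨hO0 1 (by norm_num), hO0 (-1) (by norm_num)⟩
  have h1 : ∀ᶠ θ in nhdsWithin (0 : ℝ) (Ioi 0), K.F.pt 1 0 θ ∈ O 1 ∩ O (-1) :=
    (hpt0.continuousAt.eventually (hW.mem_nhds hW0)).filter_mono nhdsWithin_le_nhds
  have h2 : ∀ᶠ θ in nhdsWithin (0 : ℝ) (Ioi 0), θ ∈ Ioo 0 (min θ1 1) :=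
    Ioo_mem_nhdsGT (by positivity)
  obtain ⟨θ0, hθO, hθ0⟩ := (h1.and h2).exists
  have hθ1' : θ0 < θ1 := hθ0.2.trans_le (min_le_left _ _)
  have hθ1'' : θ0 < 1 := hθ0.2.trans_le (min_le_right _ _)
  have hnh : ∀ᶠ x : ℝ × ℝ in nhds (0, θ0), K.F.pt 1 x.1 x.2 ∈ Ω ∩ (O 1 ∩ O (-1)) :=
    (K.F.continuous_pt 1).continuousAt.eventually
      ((K.hΩ.inter hW).mem_nhds ⟨hL θ0 ⟨hθ0.1, hθ1'⟩, hθO⟩)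
  obtain ⟨δ, hδ, hball⟩ := Metric.eventually_nhds_iff.1 hnh
  have hR := K.F.hR
  obtain ⟨w, hw⟩ : ∃ w, w = min (min (δ / 2) (min 1 (K.F.R / 2)))
      (min (θ0 / 2) (min ((θ1 - θ0) / 2) ((1 - θ0) / 2))) := ⟨_, rfl⟩
  have hw0 : 0 < w := by
    rw [hw]
    have := hθ0.1
    simp only [lt_min_iff]
    refine ⟨⟨?_, ?_, ?_⟩, ?_, ?_, ?_⟩ <;> linarith
  have hwle : w ≤ min (min (δ / 2) (min 1 (K.F.R / 2)))
      (min (θ0 / 2) (min ((θ1 - θ0) / 2) ((1 - θ0) / 2))) := hw.le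
  simp only [le_min_iff] at hwle
  obtain ⟨⟨w1, w2, w3⟩, w4, w5, w6⟩ := hwle
  have hkp : 0 < K.k 1 := (K.k_bounds (ς := 1) (by norm_num)).1
  have hkm : 0 < K.k (-1) := (K.k_bounds (ς := -1) (by norm_num)).1
  refine ⟨θ0, w, min ((K.ε ^ 2 * K.k 1 ^ 2 / 2) ^ 2) ((K.ε ^ 2 * K.k (-1) ^ 2 / 2) ^ 2), hw0, w2,
    w3, by positivity, by linarith [hθ0.1], by linarith, by linarith, ?_⟩
  intro t ht θ hθ
  have hx : K.F.pt 1 t θ ∈ Ω ∩ (O 1 ∩ O (-1)) := by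
    apply @hball (t, θ)
    rw [Prod.dist_eq, max_lt_iff, Real.dist_eq, Real.dist_eq, abs_lt, abs_lt]
    simp only
    refine ⟨⟨?_, ?_⟩, ?_, ?_⟩ <;> linarith [ht.1, ht.2, hθ.1, hθ.2]
  refine ⟨hx.1, ?_⟩
  have main : ∀ ς, K.F.pt 1 t θ ∈ O ς → K.F.pt 1 t θ ∈ K.G ς ∧
      (K.ε ^ 2 * K.k ς ^ 2 / 2) ^ 2 ≤ chi (K.A ς) (K.e ς) (K.F.pt 1 t θ) := by
    intro ς h
    rw [hO] at h
    refine ⟨⟨hx.1, h.1, h.2.1⟩, ?_⟩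
    exact pow_le_pow_left₀ (by positivity) (h.2.2.le.trans (le_max_left _ _)) 2
  intro ς hς
  rcases sgn_cases hς with rfl | rfl
  · exact ⟨(main 1 hx.2.1).1, (min_le_left _ _).trans (main 1 hx.2.1).2⟩
  · exact ⟨(main (-1) hx.2.2).1, (min_le_right _ _).trans (main (-1) hx.2.2).2⟩

end Corner

/-- The strip with the quartic bump cut-off centred at `θ0`. -/
lemma exists_strip {H : ℝ} {Ω : Set (ℝ × ℝ)} (hΩ : IsOpen Ω) (F : Frame) (hRH : 2 * H * F.R = 1)
    {θ0 w : ℝ} (hw : 0 < w) (hw1 : w ≤ 1) (hwR : w ≤ F.R / 2)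
    (hmem : ∀ t ∈ Icc (-w) w, ∀ θ ∈ Icc (θ0 - w) (θ0 + w), F.pt 1 t θ ∈ Ω) :
    ∃ S : Strip H Ω, S.F = F ∧ S.s0 = w ∧ S.c = θ0 - w ∧ S.d = θ0 + w := by
  have hζ : ContDiff ℝ 1 (fun θ : ℝ => (w ^ 2 - (θ - θ0) ^ 2) ^ 2) := by fun_prop
  have hle : ∀ θ ∈ Icc (θ0 - w) (θ0 + w), (θ - θ0) ^ 2 ≤ w ^ 2 := fun θ hθ =>
    sq_le_sq' (by linarith [hθ.1]) (by linarith [hθ.2])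
  have hder : ∀ θ, deriv (fun θ : ℝ => (w ^ 2 - (θ - θ0) ^ 2) ^ 2) θ
      = -4 * (θ - θ0) * (w ^ 2 - (θ - θ0) ^ 2) := fun θ => by
    have h1 : HasDerivAt (fun θ : ℝ => θ - θ0) 1 θ := (hasDerivAt_id θ).sub_const θ0
    have h2 := ((h1.pow 2).const_sub (w ^ 2)).pow 2
    refine (h2.congr_deriv ?_).deriv
    simp
    ring
  refine ⟨{ F := F, s0 := w, c := θ0 - w, d := θ0 + w, K := 16 * w ^ 2,
            ζ := fun θ => (w ^ 2 - (θ - θ0) ^ 2) ^ 2, hΩ := hΩ, hRH := hRH, hs0 := hw,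
            hs0R := hwR, hcd := by linarith, hζ := hζ, hζ0 := fun θ _ => sq_nonneg _,
            hζ1 := ?_, hζc := by ring, hζd := by ring, hK0 := by positivity, hK := ?_, hZ := ?_,
            hmem := hmem }, rfl, rfl, rfl, rfl⟩
  · intro θ hθ
    have h1 := hle θ hθ
    have h2 : w ^ 2 ≤ 1 := pow_le_one₀ hw.le hw1
    have h3 : 0 ≤ w ^ 2 - (θ - θ0) ^ 2 := by linarith
    exact pow_le_one₀ h3 (by linarith [sq_nonneg (θ - θ0)])
  · intro θ hθ
    rw [hder]
    have h1 := hle θ hθ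
    have h2 := mul_le_mul_of_nonneg_right h1 (sq_nonneg (w ^ 2 - (θ - θ0) ^ 2))
    nlinarith
  · refine intervalIntegral.intervalIntegral_pos_of_pos_on
      (hζ.continuous.intervalIntegrable _ _) (fun θ hθ => ?_) (by linarith)
    have h1 : (θ - θ0) ^ 2 < w ^ 2 := sq_lt_sq' (by linarith [hθ.1]) (by linarith [hθ.2])
    have h2 : 0 < w ^ 2 - (θ - θ0) ^ 2 := by linarith
    positivity

namespace Strip

variable {H : ℝ} {Ω : Set (ℝ × ℝ)} (S : Strip H Ω)

/-- If the radial component of `X` tends to `1` along the arc, the deficit of the strip tends to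
`0`. -/
lemma y_tendsto {v : ℕ → ℝ × ℝ → ℝ} (hv : ∀ n, IsCMCSolution H Ω (v n))
    (hlim : ∀ θ ∈ Icc S.c S.d, Tendsto (fun n => S.F.Xr (v n) 1 0 θ) atTop (nhds 1)) :
    Tendsto (fun n => S.y (v n) 0) atTop (nhds 0) := by
  have hcd := S.hcd
  have key := intervalIntegral.tendsto_integral_filter_of_dominated_convergence
    (μ := volume) (a := S.c) (b := S.d) (l := atTop)
    (F := fun n θ => S.ζ θ * (1 - S.F.Xr (v n) 1 0 θ))
    (f := fun _ => (0 : ℝ)) (fun _ => 2)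
    (Eventually.of_forall fun n => by
      have h1 := S.cont_Xr (hv n) (ς := 1) (by norm_num) (a := 0) (b := 0)
        (Icc_subset_Icc (by linarith [S.hs0]) S.hs0.le)
      have h2 : ContinuousOn (fun θ => S.F.Xr (v n) 1 0 θ) (Icc S.c S.d) :=
        h1.comp (f := fun θ => ((0 : ℝ), θ)) (by fun_prop) (fun θ hθ => ⟨⟨le_rfl, le_rfl⟩, hθ⟩)
      have h3 : ContinuousOn (fun θ => S.ζ θ * (1 - S.F.Xr (v n) 1 0 θ)) (Icc S.c S.d) :=
        S.hζ.continuous.continuousOn.mul (continuousOn_const.sub h2)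
      rw [uIoc_of_le hcd]
      exact (h3.mono Ioc_subset_Icc_self).aestronglyMeasurable measurableSet_Ioc)
    (Eventually.of_forall fun n => Eventually.of_forall fun θ hθ => by
      rw [uIoc_of_le hcd] at hθ
      have hθ' := Ioc_subset_Icc_self hθ
      have h1 := abs_le.1 (S.F.abs_Xr_le (v n) 1 0 θ)
      rw [Real.norm_eq_abs, abs_of_nonneg (mul_nonneg (S.hζ0 θ hθ') (by linarith [h1.2]))]
      calc S.ζ θ * (1 - S.F.Xr (v n) 1 0 θ) ≤ 1 * 2 :=
            mul_le_mul (S.hζ1 θ hθ') (by linarith [h1.1]) (by linarith [h1.2]) zero_le_one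
        _ = 2 := one_mul _)
    intervalIntegrable_const
    (Eventually.of_forall fun θ hθ => by
      rw [uIoc_of_le hcd] at hθ
      have := ((hlim θ (Ioc_subset_Icc_self hθ)).const_sub 1).const_mul (S.ζ θ)
      simpa using this)
  rw [intervalIntegral.integral_zero] at key
  exact key

end Strip

namespace Corner

variable {H : ℝ} {Ω C : Set (ℝ × ℝ)} (K : Corner H Ω C)

/-- The mass of `{ς u ≫ m}` in the strip is controlled by that of `Ψ` in the polar box. -/
lemma mass_le (S : Strip H Ω) (hF : S.F = K.F) {c0 : ℝ} (hc : -1 ≤ S.c) (hd : S.d ≤ 1)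
    {ς m T : ℝ} (hς : ς ^ 2 = 1) (hT : 0 < T)
    (hrect : ∀ t ∈ Icc (-S.s0) S.s0, ∀ θ ∈ Icc S.c S.d,
      K.F.pt 1 t θ ∈ K.G ς ∧ c0 ≤ chi (K.A ς) (K.e ς) (K.F.pt 1 t θ))
    {u : ℝ × ℝ → ℝ} (hu : IsCMCSolution H Ω u) (hcont : ContinuousOn u (Ω ∪ C))
    (hm : ∀ x ∈ C, |u x| < m) :
    c0 * (∫ t in (0 : ℝ)..S.s0, ∫ θ in S.c..S.d, betaF ς m T (u (S.F.pt ς t θ)))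
      ≤ ∫ t in (0 : ℝ)..(K.F.R / 2), ∫ θ in (-1 : ℝ)..1, K.Psi ς m T u (K.F.pt ς t θ) := by
  have hs0 := S.hs0
  have hcd := S.hcd
  have hR := K.F.hR
  have hsR : S.s0 ≤ K.F.R / 2 := hF ▸ S.hs0R
  have hsub : Icc 0 S.s0 ⊆ Icc (-S.s0) S.s0 := Icc_subset_Icc (by linarith) le_rfl
  have cB := S.cont_comp hς (f := fun x => betaF ς m T (u x)) (fun q hq =>
    ((contDiff_betaF ς m T).continuous.continuousAt).comp
      (cmc_contDiffAt S.hΩ hu hq).continuousAt) hsub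
  have cP := K.cont_Psi hς hT hu hcont hm
  have cP1 : ContinuousOn (fun x : ℝ × ℝ => K.Psi ς m T u (K.F.pt ς x.1 x.2))
      (Icc 0 S.s0 ×ˢ Icc (-1) 1) := cP.mono (prod_mono (Icc_subset_Icc le_rfl hsR) le_rfl)
  have cP2 : ContinuousOn (fun x : ℝ × ℝ => K.Psi ς m T u (K.F.pt ς x.1 x.2))
      (Icc 0 S.s0 ×ˢ Icc S.c S.d) := cP1.mono (prod_mono le_rfl (Icc_subset_Icc hc hd))
  have h1 : c0 * (∫ t in (0 : ℝ)..S.s0, ∫ θ in S.c..S.d, betaF ς m T (u (S.F.pt ς t θ)))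
      ≤ ∫ t in (0 : ℝ)..S.s0, ∫ θ in S.c..S.d, K.Psi ς m T u (K.F.pt ς t θ) := by
    simp only [← intervalIntegral.integral_const_mul]
    refine dbl_mono (f := fun t θ => c0 * betaF ς m T (u (S.F.pt ς t θ)))
      (g := fun t θ => K.Psi ς m T u (K.F.pt ς t θ)) hs0.le hcd (continuousOn_const.mul cB) cP2 ?_
    intro t ht θ hθ
    have ht' : ς * t ∈ Icc (-S.s0) S.s0 := by
      rcases sgn_cases hς with rfl | rfl <;> constructor <;> linarith [ht.1, ht.2]
    have h := hrect _ ht' θ hθ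
    rw [← K.F.pt_sign] at h
    have e : K.Psi ς m T u (K.F.pt ς t θ) = chi (K.A ς) (K.e ς) (K.F.pt ς t θ)
        * betaF ς m T (u (K.F.pt ς t θ)) := indicator_of_mem h.1 _
    rw [e, hF]
    exact mul_le_mul_of_nonneg_right h.2 (psi_nonneg _)
  have h2 : (∫ t in (0 : ℝ)..S.s0, ∫ θ in S.c..S.d, K.Psi ς m T u (K.F.pt ς t θ))
      ≤ ∫ t in (0 : ℝ)..S.s0, ∫ θ in (-1 : ℝ)..1, K.Psi ς m T u (K.F.pt ς t θ) := by
    refine intervalIntegral.integral_mono_on hs0.le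
      (dbl_outer (g := fun t θ => K.Psi ς m T u (K.F.pt ς t θ)) hs0.le hcd cP2)
      (dbl_outer (g := fun t θ => K.Psi ς m T u (K.F.pt ς t θ)) hs0.le (by norm_num) cP1)
      fun t ht => ?_
    exact intervalIntegral.integral_mono_interval hc hcd hd
      (Eventually.of_forall fun θ => K.Psi_nonneg ς m T u _)
      (dbl_inner (g := fun t θ => K.Psi ς m T u (K.F.pt ς t θ)) (by norm_num) cP1 ht)
  have h3 : (∫ t in (0 : ℝ)..S.s0, ∫ θ in (-1 : ℝ)..1, K.Psi ς m T u (K.F.pt ς t θ))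
      ≤ ∫ t in (0 : ℝ)..(K.F.R / 2), ∫ θ in (-1 : ℝ)..1, K.Psi ς m T u (K.F.pt ς t θ) :=
    intervalIntegral.integral_mono_interval le_rfl hs0.le hsR
      (Eventually.of_forall fun t => intervalIntegral.integral_nonneg (by norm_num)
        fun θ _ => K.Psi_nonneg ς m T u _)
      (dbl_outer (g := fun t θ => K.Psi ς m T u (K.F.pt ς t θ)) (by linarith) (by norm_num) cP)
  exact h1.trans (h2.trans h3)

/-- A sequence of solutions bounded on `C` cannot have the arc `0 < θ < θ₁` issued from the corner
as a divergence line: the flux inequality bounds the mass of `{|u| ≫ M}` next to the arc, while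
`Strip.strip_final` bounds it below. -/
lemma false_of_seq (hH : 0 < H) {v : ℕ → ℝ × ℝ → ℝ} {θ1 M : ℝ} (hθ1 : 0 < θ1) (hM0 : 0 ≤ M)
    (hP : K.F.pt 1 0 0 ∉ Ω) (hρθ : K.ρ0 ≤ K.F.R * θ1 / 4)
    (hL : ∀ θ ∈ Ioo 0 θ1, K.F.pt 1 0 θ ∈ Ω)
    (hv : ∀ n, IsCMCSolution H Ω (v n)) (hcont : ∀ n, ContinuousOn (v n) (Ω ∪ C))
    (hM : ∀ n, ∀ x ∈ C, |v n x| ≤ M)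
    (hlim : ∀ θ ∈ Ioo 0 θ1, Tendsto (fun n => K.F.Xr (v n) 1 0 θ) atTop (nhds 1)) : False := by
  obtain ⟨θ0, w, c0, hw, hw1, hwR, hc0, ha, hb, hb1, hrect⟩ := K.exists_rect hθ1 hL
  obtain ⟨S, hF, hs, hc, hd⟩ := exists_strip K.hΩ K.F K.hRH (θ0 := θ0) hw hw1 hwR
    (fun t ht θ hθ => (hrect t ht θ hθ).1)
  obtain ⟨ε0, hε0, T0, hT0, hfin⟩ := S.strip_final (m := M + 1) (by linarith)
  have hR := K.F.hR
  have hε := K.hε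
  obtain ⟨E, hE⟩ : ∃ E, E = 96 * K.F.R ^ 2 * K.ε ^ 4 := ⟨_, rfl⟩
  have hE0 : 0 < E := by rw [hE]; positivity
  -- `T` makes the error term of the flux inequality at most `c0 * ε0 / 4`
  obtain ⟨T, hTe⟩ : ∃ T, T = max T0 (4 * E / (c0 * ε0)) := ⟨_, rfl⟩
  have hTT0 : T0 ≤ T := hTe ▸ le_max_left _ _
  have hT : 0 < T := hT0.trans_le hTT0
  have hET : E / T ≤ c0 * ε0 / 4 := by
    rw [div_le_iff₀ hT]
    have h1 : 4 * E / (c0 * ε0) ≤ T := hTe ▸ le_max_right _ _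
    rw [div_le_iff₀ (by positivity)] at h1
    linarith
  obtain ⟨η, hη, hbound⟩ := hfin T hTT0
  have hfl : ∀ ς : ℝ, ς ^ 2 = 1 → ∀ᶠ n in atTop, K.F.R * (∫ θ in (-1)..1,
      K.Psi ς (M + 1) T (v n) (K.F.pt ς 0 θ) * (1 - K.F.Xr (v n) ς 0 θ)) < c0 * ε0 / 4 :=
    fun ς hς => by
      have h1 := (K.flux_tendsto hP hρθ hv hcont hM hlim hς hT).const_mul K.F.R
      rw [mul_zero] at h1
      exact h1.eventually (gt_mem_nhds (by positivity))
  have hy : ∀ᶠ n in atTop, S.y (v n) 0 < η := by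
    refine (S.y_tendsto hv fun θ hθ => ?_).eventually (gt_mem_nhds hη)
    rw [hc, hd] at hθ
    rw [hF]
    exact hlim θ ⟨by linarith [hθ.1], by linarith [hθ.2]⟩
  obtain ⟨n, ⟨hn1, hn2⟩, hny⟩ :=
    (((hfl 1 (by norm_num)).and (hfl (-1) (by norm_num))).and hy).exists
  refine lt_irrefl η ((hbound (v n) (hv n) fun ς hς => ?_).trans hny)
  have hm : ∀ x ∈ C, |v n x| < M + 1 := fun x hx => by linarith [hM n x hx]
  have h1 := K.mass_le S hF (c0 := c0) (by rw [hc]; linarith) (by rw [hd]; linarith) hς hT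
    (fun t ht θ hθ => (hrect t (hs ▸ ht) θ (hc ▸ hd ▸ hθ)).2 ς hς) (hv n) (hcont n) hm
  have h2 := K.flux hH hς hT (hv n) (hcont n) hm
  have h3 : K.F.R * (∫ θ in (-1)..1,
      K.Psi ς (M + 1) T (v n) (K.F.pt ς 0 θ) * (1 - K.F.Xr (v n) ς 0 θ)) < c0 * ε0 / 4 := by
    rcases sgn_cases hς with rfl | rfl
    · exact hn1
    · exact hn2
  rw [← hE] at h2
  refine le_of_mul_le_mul_left ?_ hc0
  linarith

end Corner

/-! ### The end of a connected subset of a circle -/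

lemma exists_angle {X Y : ℝ} (h : X ^ 2 + Y ^ 2 = 1) :
    ∃ θ ∈ Ioc 0 (2 * Real.pi), cos θ = X ∧ sin θ = Y := by
  have hn : ‖(⟨-X, -Y⟩ : ℂ)‖ = 1 := by
    rw [Complex.norm_def, Complex.normSq_mk]
    rw [show -X * -X + -Y * -Y = 1 by linarith, Real.sqrt_one]
  have h0 : (⟨-X, -Y⟩ : ℂ) ≠ 0 := fun h => by rw [h] at hn; simp at hn
  refine ⟨Complex.arg ⟨-X, -Y⟩ + Real.pi, ⟨?_, ?_⟩, ?_, ?_⟩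
  · linarith [Complex.neg_pi_lt_arg (⟨-X, -Y⟩ : ℂ)]
  · linarith [Complex.arg_le_pi (⟨-X, -Y⟩ : ℂ)]
  · rw [Real.cos_add_pi, Complex.cos_arg h0, hn]; simp
  · rw [Real.sin_add_pi, Complex.sin_arg, hn]; simp

namespace Frame

variable (F : Frame)

lemma eq_of_coords {x y : ℝ × ℝ} (ha : F.ca x = F.ca y) (hb : F.cb x = F.cb y) : x = y := by
  unfold ca at ha
  unfold cb at hb
  have hb' : -(x.1 - y.1) * F.q + (x.2 - y.2) * F.p = 0 := by
    linear_combination F.ω * hb - (-(x.1 - y.1) * F.q + (x.2 - y.2) * F.p) * F.hω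
  have ha' : (x.1 - y.1) * F.p + (x.2 - y.2) * F.q = 0 := by linear_combination ha
  have h1 : x.1 - y.1 = 0 := by
    linear_combination F.p * ha' - F.q * hb' - (x.1 - y.1) * F.hpq
  have h2 : x.2 - y.2 = 0 := by
    linear_combination F.q * ha' + F.p * hb' - (x.2 - y.2) * F.hpq
  exact Prod.ext (by linarith) (by linarith)

lemma exists_pt {x : ℝ × ℝ} (hx : (x.1 - F.z.1) ^ 2 + (x.2 - F.z.2) ^ 2 = F.R ^ 2) :
    ∃ θ ∈ Ioc 0 (2 * Real.pi), x = F.pt 1 0 θ := by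
  have hR := F.hR
  have hR' := hR.ne'
  have hc : (F.ca x + F.R) ^ 2 + F.cb x ^ 2 = F.R ^ 2 := by
    have h1 := F.nn_eq x
    have h2 : F.ca x = (x.1 - (F.z.1 + F.R * F.p)) * F.p + (x.2 - (F.z.2 + F.R * F.q)) * F.q := rfl
    unfold nn at h1
    linear_combination h1 + 2 * F.R * h2 + hx - F.R ^ 2 * F.hpq
  obtain ⟨θ, hθ, h1, h2⟩ := exists_angle (X := (F.ca x + F.R) / F.R) (Y := F.cb x / F.R) (by
    rw [div_pow, div_pow, ← add_div, hc, div_self (by positivity)])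
  refine ⟨θ, hθ, F.eq_of_coords ?_ ?_⟩
  · rw [ca_pt, h1]; field_simp; ring
  · rw [cb_pt, h2]; field_simp; ring

lemma pt_two_pi : F.pt 1 0 (2 * Real.pi) = F.pt 1 0 0 := by
  unfold pt r1 r2; simp

/-- A connected subset of the circle missing the point at angle `0` is an interval of angles: the
chord through that point and the point at angle `c` separates the angles below `c` from those
above `c`. -/
lemma mem_of_between {L : Set (ℝ × ℝ)} (hL : IsPreconnected L)
    (hcirc : ∀ x ∈ L, (x.1 - F.z.1) ^ 2 + (x.2 - F.z.2) ^ 2 = F.R ^ 2) (hP : F.pt 1 0 0 ∉ L)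
    {a b c : ℝ} (ha : 0 < a) (hac : a < c) (hcb : c < b) (hb : b < 2 * Real.pi)
    (haL : F.pt 1 0 a ∈ L) (hbL : F.pt 1 0 b ∈ L) : F.pt 1 0 c ∈ L := by
  have hR := F.hR
  have hf : ∀ θ, F.ca (F.pt 1 0 θ) * sin c - F.cb (F.pt 1 0 θ) * (cos c - 1)
      = 4 * F.R * sin (c / 2) * (sin (θ / 2) * sin ((c - θ) / 2)) := fun θ => by
    obtain ⟨s, hs⟩ : ∃ s, s = θ / 2 := ⟨_, rfl⟩
    obtain ⟨r, hr⟩ : ∃ r, r = c / 2 := ⟨_, rfl⟩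
    rw [ca_pt, cb_pt, show (c - θ) / 2 = r - s by rw [hs, hr]; ring, ← hr, ← hs,
      show c = 2 * r by rw [hr]; ring, show θ = 2 * s by rw [hs]; ring, sin_sub,
      sin_two_mul, sin_two_mul, cos_two_mul, cos_two_mul]
    linear_combination (4 * F.R * sin r * cos r) * sin_sq_add_cos_sq s
      - 4 * F.R * sin s * cos s * sin_sq_add_cos_sq r
  have hs : ∀ {x : ℝ}, 0 < x → x < 2 * Real.pi → 0 < sin (x / 2) := fun h1 h2 =>
    sin_pos_of_pos_of_lt_pi (by linarith) (by linarith)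
  have hc' := hs (ha.trans hac) (hcb.trans hb)
  by_contra hcL
  obtain ⟨g, hg⟩ : ∃ g : ℝ × ℝ → ℝ, g = fun x => F.ca x * sin c - F.cb x * (cos c - 1) := ⟨_, rfl⟩
  have hgc : Continuous g := by
    rw [hg]
    exact (F.continuous_ca.mul continuous_const).sub (F.continuous_cb.mul continuous_const)
  have hga : 0 < g (F.pt 1 0 a) := by
    rw [hg]; simp only; rw [hf]
    have h1 := hs ha (by linarith)
    have h2 := hs (x := c - a) (by linarith) (by linarith)
    positivity
  have hgb : g (F.pt 1 0 b) < 0 := by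
    rw [hg]; simp only; rw [hf, show (c - b) / 2 = -((b - c) / 2) by ring, sin_neg]
    have h1 := hs (x := b) (by linarith) hb
    have h2 := hs (x := b - c) (by linarith) (by linarith)
    have : 0 < 4 * F.R * sin (c / 2) * (sin (b / 2) * sin ((b - c) / 2)) := by positivity
    linarith
  obtain ⟨x, hxL, hx⟩ := hL.intermediate_value hbL haL hgc.continuousOn ⟨hgb.le, hga.le⟩
  obtain ⟨θ, hθ, rfl⟩ := F.exists_pt (hcirc x hxL)
  have hθ2 : θ < 2 * Real.pi := lt_of_le_of_ne hθ.2 fun h => by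
    rw [h, F.pt_two_pi] at hxL; exact hP hxL
  rw [hg] at hx
  simp only at hx
  rw [hf] at hx
  have h1 := hs hθ.1 hθ2
  rcases lt_trichotomy θ c with h | h | h
  · have h2 := hs (x := c - θ) (by linarith) (by linarith [hθ.1])
    have : 0 < 4 * F.R * sin (c / 2) * (sin (θ / 2) * sin ((c - θ) / 2)) := by positivity
    linarith
  · exact hcL (h ▸ hxL)
  · have h2 := hs (x := θ - c) (by linarith) (by linarith)
    rw [show (c - θ) / 2 = -((θ - c) / 2) by ring, sin_neg] at hx
    have : 0 < 4 * F.R * sin (c / 2) * (sin (θ / 2) * sin ((θ - c) / 2)) := by positivity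
    linarith

end Frame

/-- A connected subset of a circle which accumulates at a point `P` outside it contains an arc
issued from `P`, in one of the two directions. -/
lemma exists_arc {L : Set (ℝ × ℝ)} (hL : IsPreconnected L) {z : ℝ × ℝ} {p q R : ℝ}
    (hpq : p ^ 2 + q ^ 2 = 1) (hR : 0 < R)
    (hcirc : ∀ x ∈ L, (x.1 - z.1) ^ 2 + (x.2 - z.2) ^ 2 = R ^ 2)
    (hPL : ((z.1 + R * p, z.2 + R * q) : ℝ × ℝ) ∉ L)
    (hPcl : ((z.1 + R * p, z.2 + R * q) : ℝ × ℝ) ∈ closure L) :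
    ∃ F : Frame, F.z = z ∧ F.p = p ∧ F.q = q ∧ F.R = R ∧
      ∃ θ1 : ℝ, 0 < θ1 ∧ ∀ θ ∈ Ioo 0 θ1, F.pt 1 0 θ ∈ L := by
  obtain ⟨F, hF⟩ : ∃ F : Frame, F = ⟨z, p, q, 1, R, hpq, by norm_num, hR⟩ := ⟨_, rfl⟩
  have hz : F.z = z := by rw [hF]
  have hRF : F.R = R := by rw [hF]
  have hP0 : F.pt 1 0 0 = (z.1 + R * p, z.2 + R * q) := by
    rw [hF]; simp [Frame.pt, Frame.r1, Frame.r2]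
  rw [← hP0] at hPL hPcl
  have hcirc' : ∀ x ∈ L, (x.1 - F.z.1) ^ 2 + (x.2 - F.z.2) ^ 2 = F.R ^ 2 := by
    rw [hz, hRF]; exact hcirc
  have hex : ∀ x ∈ L, ∃ θ, 0 < θ ∧ θ < 2 * Real.pi ∧ x = F.pt 1 0 θ := fun x hx => by
    obtain ⟨θ, hθ, rfl⟩ := F.exists_pt (hcirc' x hx)
    exact ⟨θ, hθ.1, lt_of_le_of_ne hθ.2 fun h => by rw [h, F.pt_two_pi] at hx; exact hPL hx, rfl⟩
  have hne : L.Nonempty := closure_nonempty_iff.1 ⟨_, hPcl⟩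
  obtain ⟨x0, hx0⟩ := hne
  obtain ⟨θ0, hθ0, hθ0', rfl⟩ := hex x0 hx0
  -- the angles of `L` accumulate at `0` or at `2 * π`
  have hacc : ∀ δ, 0 < δ → δ < Real.pi →
      ∃ θ, F.pt 1 0 θ ∈ L ∧ 0 < θ ∧ θ < 2 * Real.pi ∧ (θ < δ ∨ 2 * Real.pi - δ < θ) := by
    intro δ h0 hpi
    by_contra hcon
    push Not at hcon
    have hsub : L ⊆ {x | F.ca x ≤ F.R * cos δ - F.R} := by
      intro x hx
      obtain ⟨θ, h1, h2, rfl⟩ := hex x hx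
      obtain ⟨h3, h4⟩ := hcon θ hx h1 h2
      show F.ca _ ≤ _
      rw [F.ca_pt, mul_zero, add_zero]
      have : cos θ ≤ cos δ := by
        rcases le_total θ Real.pi with h | h
        · exact cos_le_cos_of_nonneg_of_le_pi h0.le h h3
        · rw [← cos_two_pi_sub θ]
          exact cos_le_cos_of_nonneg_of_le_pi h0.le (by linarith) (by linarith)
      nlinarith [F.hR]
    have h1 := closure_minimal hsub (isClosed_le F.continuous_ca continuous_const) hPcl
    have h2 : F.ca (F.pt 1 0 0) = 0 := by rw [F.ca_pt]; simp
    have h3 : F.ca (F.pt 1 0 0) ≤ F.R * cos δ - F.R := h1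
    have h4 : cos δ < 1 := by
      rw [← cos_zero]; exact cos_lt_cos_of_nonneg_of_le_pi le_rfl hpi.le h0
    nlinarith [F.hR]
  have hpi := Real.pi_pos
  by_cases hcase : ∀ δ, 0 < δ → ∃ θ, F.pt 1 0 θ ∈ L ∧ 0 < θ ∧ θ < δ
  · refine ⟨F, hz, by rw [hF], by rw [hF], hRF, θ0, hθ0, fun θ hθ => ?_⟩
    obtain ⟨a, haL, ha0, ha⟩ := hcase θ hθ.1
    exact F.mem_of_between hL hcirc' hPL ha0 ha hθ.2 hθ0' haL hx0
  · push Not at hcase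
    obtain ⟨δ0, hδ0, hδ⟩ := hcase
    obtain ⟨F', hF'⟩ : ∃ F' : Frame, F' = ⟨z, p, q, -1, R, hpq, by norm_num, hR⟩ := ⟨_, rfl⟩
    have hrev : ∀ θ, F'.pt 1 0 θ = F.pt 1 0 (2 * Real.pi - θ) := fun θ => by
      rw [hF, hF']
      simp only [Frame.pt, Frame.r1, Frame.r2, cos_two_pi_sub, sin_two_pi_sub]
      ext <;> simp
    refine ⟨F', by rw [hF'], by rw [hF'], by rw [hF'], by rw [hF'], 2 * Real.pi - θ0, by linarith,
      fun θ hθ => ?_⟩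
    rw [hrev]
    obtain ⟨b, hbL, hb0, hb2, hb⟩ := hacc (min (min θ δ0) (Real.pi / 2))
      (by have := hθ.1; positivity) ((min_le_right _ _).trans_lt (by linarith))
    have h1 : min (min θ δ0) (Real.pi / 2) ≤ θ := (min_le_left _ _).trans (min_le_left _ _)
    have h2 : min (min θ δ0) (Real.pi / 2) ≤ δ0 := (min_le_left _ _).trans (min_le_right _ _)
    rcases hb with hb | hb
    · linarith [hδ b hbL hb0]
    · exact F.mem_of_between hL hcirc' hPL hθ0 (by linarith [hθ.2]) (by linarith) hb2 hx0 hbL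

/-! ### Conclusion -/

lemma enorm2_sq (x : ℝ × ℝ) : enorm2 x ^ 2 = x.1 ^ 2 + x.2 ^ 2 := by
  unfold enorm2; exact Real.sq_sqrt (by positivity)

lemma Frame.sq_dist (F : Frame) (x y : ℝ × ℝ) :
    (x.1 - y.1) ^ 2 + (x.2 - y.2) ^ 2 = (F.ca x - F.ca y) ^ 2 + (F.cb x - F.cb y) ^ 2 := by
  have h1 : F.ca x - F.ca y = (x.1 - y.1) * F.p + (x.2 - y.2) * F.q := by unfold Frame.ca; ring
  have h2 : F.cb x - F.cb y = F.ω * (-(x.1 - y.1) * F.q + (x.2 - y.2) * F.p) := by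
    unfold Frame.cb; ring
  rw [h1, h2]
  generalize x.1 - y.1 = v
  generalize x.2 - y.2 = w
  linear_combination -(-v * F.q + w * F.p) ^ 2 * F.hω - (v ^ 2 + w ^ 2) * F.hpq

/-- The second component of the direction of the centre of the supporting disc is positive, because
the arc enters that disc. -/
lemma Frame.cb_pos (F : Frame) {Ω V : Set (ℝ × ℝ)} {y : ℝ × ℝ} {θ1 : ℝ} (hθ1 : 0 < θ1)
    (hV : IsOpen V) (hPV : F.pt 1 0 0 ∈ V) (hy : F.nn y = F.R ^ 2)
    (harc : ∀ θ ∈ Ioo 0 θ1, F.pt 1 0 θ ∈ Ω)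
    (hsub : ∀ x ∈ Ω ∩ V, (x.1 - y.1) ^ 2 + (x.2 - y.2) ^ 2 < F.R ^ 2) : 0 < F.cb y := by
  have hR := F.hR
  have hpt0 : Continuous (fun θ => F.pt 1 0 θ) :=
    (F.continuous_pt 1).comp (f := fun θ => ((0 : ℝ), θ)) (by fun_prop)
  have h1 : ∀ᶠ θ in nhdsWithin (0 : ℝ) (Ioi 0), F.pt 1 0 θ ∈ V :=
    (hpt0.continuousAt.eventually (hV.mem_nhds hPV)).filter_mono nhdsWithin_le_nhds
  have h2 : ∀ᶠ θ in nhdsWithin (0 : ℝ) (Ioi 0), θ ∈ Ioo 0 (min θ1 Real.pi) :=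
    Ioo_mem_nhdsGT (lt_min hθ1 Real.pi_pos)
  obtain ⟨θ, hθV, hθ⟩ := (h1.and h2).exists
  have h3 := hsub _ ⟨harc θ ⟨hθ.1, hθ.2.trans_le (min_le_left _ _)⟩, hθV⟩
  rw [F.sq_dist, F.ca_pt, F.cb_pt, mul_zero, add_zero] at h3
  unfold Frame.nn at hy
  have hsin : 0 < sin θ := sin_pos_of_pos_of_lt_pi hθ.1 (hθ.2.trans_le (min_le_right _ _))
  have hca : -F.R ≤ F.ca y := by
    refine (abs_le_of_sq_le_sq' ?_ hR.le).1
    linarith [sq_nonneg (F.cb y)]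
  have h4 : (1 - cos θ) * (F.ca y + F.R) < F.cb y * sin θ := by
    refine lt_of_mul_lt_mul_left ?_ (by positivity : (0 : ℝ) ≤ 2 * F.R)
    have h5 := sin_sq_add_cos_sq θ
    nlinarith
  have h6 : 0 ≤ (1 - cos θ) * (F.ca y + F.R) :=
    mul_nonneg (by linarith [cos_le_one θ]) (by linarith)
  exact pos_of_mul_pos_left (h6.trans_lt h4) hsin.le

/-- if the `u_n` are uniformly bounded on a boundary arc `C` of exterior
curvature at least `2H`, then no divergence line has an endpoint on `C`. -/
theorem stmt_13 (H : ℝ) (hH : 0 < H) (Ω : Set (ℝ × ℝ)) (hΩ : IsOpen Ω)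
    (hΩconn : IsConnected Ω) (C : Set (ℝ × ℝ)) (hCne : C.Nonempty)
    (hCconn : IsPreconnected C)
    (hCopen : ∃ U : Set (ℝ × ℝ), IsOpen U ∧ C = frontier Ω ∩ U)
    (hcurv : ∀ P ∈ C, ∃ z : ℝ × ℝ, enorm2 (P - z) = 1 / (2 * H) ∧
      ∃ V : Set (ℝ × ℝ), IsOpen V ∧ P ∈ V ∧
        Ω ∩ V ⊆ {q : ℝ × ℝ | enorm2 (q - z) < 1 / (2 * H)})
    (u : ℕ → ℝ × ℝ → ℝ) (hu : ∀ n, IsCMCSolution H Ω (u n))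
    (hcont : ∀ n, ContinuousOn (u n) (Ω ∪ C))
    (M : ℝ) (hM : ∀ n, ∀ P ∈ C, |u n P| ≤ M) :
    ∀ L : Set (ℝ × ℝ), IsDivergenceLine H Ω u L → closure L ∩ C = ∅ := by
  intro L hL
  rw [eq_empty_iff_forall_notMem]
  rintro P ⟨hPL, hPC⟩
  obtain ⟨z₁, hLΩ, hLz, hLconn, -, φ, -, hφ⟩ := hL
  obtain ⟨U, hU, hCU⟩ := hCopen
  obtain ⟨y, hPy, V, hV, hPV, hΩV⟩ := hcurv P hPC
  have hPfr : P ∈ frontier Ω := by rw [hCU] at hPC; exact hPC.1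
  have hPU : P ∈ U := by rw [hCU] at hPC; exact hPC.2
  have hPΩ : P ∉ Ω := by
    rw [hΩ.frontier_eq] at hPfr; exact hPfr.2
  obtain ⟨R, hRdef⟩ : ∃ R, R = 1 / (2 * H) := ⟨_, rfl⟩
  have hR : 0 < R := by rw [hRdef]; positivity
  have hRH : 2 * H * R = 1 := by rw [hRdef]; field_simp
  rw [← hRdef] at hPy hLz hΩV
  have hcirc : ∀ x ∈ L, (x.1 - z₁.1) ^ 2 + (x.2 - z₁.2) ^ 2 = R ^ 2 := fun x hx => by
    rw [← hLz x hx, enorm2_sq]; rfl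
  have hPcirc : (P.1 - z₁.1) ^ 2 + (P.2 - z₁.2) ^ 2 = R ^ 2 :=
    closure_minimal (s := L) (t := {x | (x.1 - z₁.1) ^ 2 + (x.2 - z₁.2) ^ 2 = R ^ 2}) hcirc
      (isClosed_eq (by fun_prop) continuous_const) hPL
  have hPe : ((z₁.1 + R * ((P.1 - z₁.1) / R), z₁.2 + R * ((P.2 - z₁.2) / R)) : ℝ × ℝ) = P := by
    ext
    · simp only; field_simp; ring
    · simp only; field_simp; ring
  obtain ⟨F, hFz, hFp, hFq, hFR, θ1, hθ1, harc⟩ := exists_arc hLconn.isPreconnected (z := z₁)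
    (p := (P.1 - z₁.1) / R) (q := (P.2 - z₁.2) / R)
    (by rw [div_pow, div_pow, ← add_div, hPcirc, div_self (by positivity)]) hR hcirc
    (by rw [hPe]; exact fun h => hPΩ (hLΩ h)) (by rw [hPe]; exact hPL)
  have hP0 : F.pt 1 0 0 = P := by
    rw [← hPe, ← hFp, ← hFq, ← hFz, ← hFR]; simp [Frame.pt, Frame.r1, Frame.r2]
  have hnn : ∀ x, F.nn x = (x.1 - P.1) ^ 2 + (x.2 - P.2) ^ 2 := fun x => by
    rw [F.nn_eq, ← hP0]; simp [Frame.pt, Frame.r1, Frame.r2]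
  have hy : F.nn y = F.R ^ 2 := by
    rw [hnn, hFR, ← hPy, enorm2_sq, Prod.fst_sub, Prod.snd_sub]; ring
  have hsub : ∀ x ∈ Ω ∩ V, (x.1 - y.1) ^ 2 + (x.2 - y.2) ^ 2 < F.R ^ 2 := fun x hx => by
    have h1 : enorm2 (x - y) < R := hΩV hx
    have h2 : enorm2 (x - y) ^ 2 < R ^ 2 := pow_lt_pow_left₀ h1 (Real.sqrt_nonneg _) two_ne_zero
    rw [enorm2_sq] at h2
    rw [hFR]; exact h2
  have hcb : 0 < F.cb y := F.cb_pos hθ1 hV (hP0 ▸ hPV) hy (fun θ hθ => hLΩ (harc θ hθ)) hsub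
  obtain ⟨δ, hδ, hball⟩ := Metric.isOpen_iff.1 (hU.inter hV) P ⟨hPU, hPV⟩
  have hFR0 := F.hR
  obtain ⟨n2, hn2e⟩ : ∃ n2, n2 = F.cb y / F.R := ⟨_, rfl⟩
  obtain ⟨n1, hn1e⟩ : ∃ n1, n1 = F.ca y / F.R := ⟨_, rfl⟩
  have hn2 : 0 < n2 := by rw [hn2e]; positivity
  have hcay : F.ca y = F.R * n1 := by rw [hn1e]; field_simp
  have hcby : F.cb y = F.R * n2 := by rw [hn2e]; field_simp
  obtain ⟨ρ0, hρe⟩ : ∃ ρ0, ρ0 = min (δ / 2) (min (F.R * n2 / 50) (F.R * θ1 / 4)) := ⟨_, rfl⟩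
  have hρ0 : 0 < ρ0 := by rw [hρe]; positivity
  have hρδ : ρ0 ≤ δ / 2 := hρe ▸ min_le_left _ _
  have hnear : ∀ x, F.nn x ≤ ρ0 ^ 2 → x ∈ U ∩ V := fun x hx => by
    rw [hnn] at hx
    have h1 := abs_le_of_sq_le_sq' (a := x.1 - P.1) (by linarith [sq_nonneg (x.2 - P.2)]) hρ0.le
    have h2 := abs_le_of_sq_le_sq' (a := x.2 - P.2) (by linarith [sq_nonneg (x.1 - P.1)]) hρ0.le
    apply hball
    rw [Metric.mem_ball, Prod.dist_eq, max_lt_iff, Real.dist_eq, Real.dist_eq, abs_lt, abs_lt]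
    refine ⟨⟨?_, ?_⟩, ?_, ?_⟩ <;> linarith [h1.1, h1.2, h2.1, h2.2]
  have hB : ∀ x ∈ closure Ω, F.nn x ≤ ρ0 ^ 2 →
      F.nn x ≤ 2 * F.R * (n1 * F.ca x + n2 * F.cb x) := fun x hx hxn => by
    have h1 : x ∈ closure (Ω ∩ V) := by
      rw [inter_comm]; exact hV.inter_closure ⟨(hnear x hxn).2, hx⟩
    have h2 : (x.1 - y.1) ^ 2 + (x.2 - y.2) ^ 2 ≤ F.R ^ 2 :=
      closure_minimal (t := {x : ℝ × ℝ | (x.1 - y.1) ^ 2 + (x.2 - y.2) ^ 2 ≤ F.R ^ 2})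
        (fun x hx => mem_ofPred.2 (hsub x hx).le) (isClosed_le (by fun_prop) continuous_const) h1
    rw [F.sq_dist] at h2
    unfold Frame.nn at hy ⊢
    rw [hcay, hcby] at h2 hy
    linarith
  obtain ⟨K, hKF, hKρ⟩ : ∃ K : Corner H Ω C, K.F = F ∧ K.ρ0 = ρ0 :=
    ⟨{ F := F, n1 := n1, n2 := n2, ρ0 := ρ0, ε := ρ0 / 3, hΩ := hΩ, hRH := hFR ▸ hRH,
       hn := by
        unfold Frame.nn at hy
        rw [hn1e, hn2e, div_pow, div_pow, ← add_div, hy, div_self (by positivity)]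
       hn2 := hn2, hρ := hρe ▸ (min_le_right _ _).trans (min_le_left _ _),
       hε := by positivity, hερ := by linarith, hB := hB,
       hC := fun x hx hxn => by rw [hCU]; exact ⟨hx, (hnear x hxn).1⟩ }, rfl, rfl⟩
  have hM0 : 0 ≤ M := (abs_nonneg _).trans (hM 0 P hPC)
  refine K.false_of_seq hH (v := fun n => u (φ n)) hθ1 hM0 (by rw [hKF, hP0]; exact hPΩ)
    (by rw [hKF, hKρ, hρe]; exact (min_le_right _ _).trans (min_le_right _ _))
    (fun θ hθ => by rw [hKF]; exact hLΩ (harc θ hθ)) (fun n => hu _) (fun n => hcont _)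
    (fun n => hM _) fun θ hθ => ?_
  rw [hKF]
  have h0 := hφ _ (harc θ hθ)
  have h1 := h0.fst_nhds
  have h2 := h0.snd_nhds.fst_nhds
  have e1 : z₁.1 - (F.pt 1 0 θ).1 = -(R * F.r1 θ) := by
    simp only [Frame.pt, hFz, hFR]; ring
  have e2 : z₁.2 - (F.pt 1 0 θ).2 = -(R * F.r2 θ) := by
    simp only [Frame.pt, hFz, hFR]; ring
  have h3 := (h1.mul_const (-F.r1 θ)).add (h2.mul_const (-F.r2 θ))
  convert h3 using 2
  · simp only [normalVec, Frame.Xr, Frame.rad, Xa, Xb]; ring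
  · rw [e1, e2]
    linear_combination (-(F.r1 θ ^ 2 + F.r2 θ ^ 2)) * hRH - F.r_sq θ
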